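/- arXiv:1006.0673 — 2 statements merged into one kernel-verified Lean document; each statement's English description precedes it below -/
import Mathlib

section
/- Let G be a one-sided complete-observation turn-based stochastic game in which every transition probability is a rational number, and let φ ⊆ S^ω be a measurable objective. Then there exist a one-sided complete-observation turn-based deterministic game G' whose state space S' contains S and a measurable objective φ' ⊆ S'^ω such that for every s ∈ S: (i) player 1 has an observation-based almost-sure winning strategy for φ from s in G if and only if player 1 has an observation-based almost-sure winning strategy for φ' from s in G', and likewise for positive winning strategies; (ii) val^G(φ)(s) = val^{G'}(φ')(s); and (iii) player 1 has an observation-based optimal strategy for φ from s in G if and only if player 1 has an observation-based optimal strategy for φ' from s in G'. -/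
/-!
STATEMENT 17: every one-sided complete-observation turn-based stochastic game with
rational transition probabilities reduces to a one-sided complete-observation turn-based
*deterministic* game preserving observation-based almost-sure/positive winning, values
and existence of observation-based optimal strategies.
-/

open scoped ENNReal

namespace Stmt17

/-- A one-sided complete-observation turn-based stochastic game: states with
`turn = true` belong to player 1, the others to player 2; player 2 observes states
completely while player 1 only observes `obs₁`. -/
structure OsTGame where
  S : Type
  [finS : Fintype S]
  [neS : Nonempty S]
  turn : S → Bool
  A₁ : Type
  [finA₁ : Fintype A₁]
  [neA₁ : Nonempty A₁]
  A₂ : Type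
  [finA₂ : Fintype A₂]
  [neA₂ : Nonempty A₂]
  O : Type
  [finO : Fintype O]
  δ₁ : S → A₁ → PMF S
  δ₂ : S → A₂ → PMF S
  obs₁ : S → O

attribute [instance] OsTGame.finS OsTGame.neS OsTGame.finA₁ OsTGame.neA₁
  OsTGame.finA₂ OsTGame.neA₂ OsTGame.finO

open MeasureTheory

/-- States carry the discrete σ-algebra. -/
instance (G : OsTGame) : MeasurableSpace G.S := ⊤

/-- The cylinder set of infinite plays extending the finite prefix `l`. -/
def Cyl {α : Type} (l : List α) : Set (ℕ → α) := {ρ | ∀ i : Fin l.length, ρ i.1 = l.get i}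

/-- One-step transition probability of the turn-based game. -/
noncomputable def step (G : OsTGame) (σ : List G.S → PMF G.A₁) (π : List G.S → PMF G.A₂)
    (hist : List G.S) (cur next : G.S) : ℝ≥0∞ :=
  if G.turn cur then ∑' a, σ (hist ++ [cur]) a * G.δ₁ cur a next
  else ∑' b, π (hist ++ [cur]) b * G.δ₂ cur b next

/-- Probability of observing the successive states `rest` after the history `hist ++ [cur]`. -/
noncomputable def listProb (G : OsTGame)
    (σ : List G.S → PMF G.A₁) (π : List G.S → PMF G.A₂) :
    List G.S → G.S → List G.S → ℝ≥0∞
  | _, _, [] => 1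
  | hist, cur, s' :: rest =>
      step G σ π hist cur s' * listProb G σ π (hist ++ [cur]) s' rest

/-- `Pr` is the family of Ionescu–Tulcea play measures of the game `G`. -/
def IsPlayMeasure (G : OsTGame)
    (Pr : G.S → (List G.S → PMF G.A₁) → (List G.S → PMF G.A₂) → Measure (ℕ → G.S)) :
    Prop :=
  (∀ s σ π, IsProbabilityMeasure (Pr s σ π)) ∧
    ∀ s σ π (l : List G.S), Pr s σ π (Cyl (s :: l)) = listProb G σ π [] s l

/-- An observation-based strategy of player 1 only depends on the observation sequence. -/
def ObsBased (G : OsTGame) (σ : List G.S → PMF G.A₁) : Prop :=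
  ∀ h h' : List G.S, h.map G.obs₁ = h'.map G.obs₁ → σ h = σ h'

/-- A game is deterministic if all its transitions are Dirac distributions. -/
def Deterministic (G : OsTGame) : Prop :=
  (∀ s a, ∃ t, G.δ₁ s a = PMF.pure t) ∧ (∀ s b, ∃ t, G.δ₂ s b = PMF.pure t)

/-- A game has rational transition probabilities. -/
def RationalProbs (G : OsTGame) : Prop :=
  (∀ s a t, ∃ q : ℚ, G.δ₁ s a t = ENNReal.ofReal (q : ℝ)) ∧
    (∀ s b t, ∃ q : ℚ, G.δ₂ s b t = ENNReal.ofReal (q : ℝ))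

/-- The value for player 1: sup over observation-based strategies of player 1 of the inf
over all strategies of player 2. -/
noncomputable def val (G : OsTGame)
    (Pr : G.S → (List G.S → PMF G.A₁) → (List G.S → PMF G.A₂) → Measure (ℕ → G.S))
    (φ : Set (ℕ → G.S)) (s : G.S) : ℝ≥0∞ :=
  ⨆ σ : {σ : List G.S → PMF G.A₁ // ObsBased G σ},
    ⨅ π : List G.S → PMF G.A₂, Pr s σ.1 π φ


/-! ### Prefixes and cylinders -/

/-- The prefix of length `k` of an infinite sequence. -/
def pre {α : Type} (ρ : ℕ → α) (k : ℕ) : List α := List.ofFn (fun i : Fin k => ρ i.1)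

theorem pre_length {α : Type} (ρ : ℕ → α) (k : ℕ) : (pre ρ k).length = k := by simp [pre]

theorem pre_succ {α : Type} (ρ : ℕ → α) (k : ℕ) : pre ρ (k+1) = pre ρ k ++ [ρ k] := by
  unfold pre
  rw [List.ofFn_succ_last]
  simp

theorem mem_Cyl {α : Type} (ρ : ℕ → α) (l : List α) : ρ ∈ Cyl l ↔ pre ρ l.length = l := by
  unfold Cyl pre
  simp only [Set.mem_ofPred_eq]
  constructor
  · intro h
    apply List.ext_get
    · simp
    · intro n h1 h2
      simpa using h ⟨n, h2⟩
  · intro h i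
    have := congrArg (fun x => x[i.1]?) h
    simpa using this

theorem measurable_restr {α : Type} [MeasurableSpace α] (k : ℕ) :
    Measurable (fun (ρ : ℕ → α) (i : Fin k) => ρ i.1) :=
  measurable_pi_lambda _ (fun i => measurable_pi_apply _)

theorem measurableSet_pre {α : Type} [Finite α] [MeasurableSpace α]
    [MeasurableSingletonClass α] (k : ℕ) (L : Set (List α)) :
    MeasurableSet {ρ : ℕ → α | pre ρ k ∈ L} := by
  have : {ρ : ℕ → α | pre ρ k ∈ L} =
      (fun (ρ : ℕ → α) (i : Fin k) => ρ i.1) ⁻¹' {v | List.ofFn v ∈ L} := by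
    ext ρ; simp [pre]
  rw [this]
  exact measurable_restr k (Set.toFinite _).measurableSet

theorem measure_pre_sum {α : Type} [Fintype α] [MeasurableSpace α]
    [MeasurableSingletonClass α] (μ : Measure (ℕ → α)) (k : ℕ) (X : Set (ℕ → α))
    (hX : MeasurableSet X) :
    μ X = ∑ v : Fin k → α, μ (X ∩ {ρ | pre ρ k = List.ofFn v}) := by
  classical
  have h := sum_measure_preimage_singleton (μ := μ.restrict X) (Finset.univ : Finset (Fin k → α))
    (f := fun (ρ : ℕ → α) (i : Fin k) => ρ i.1)
    (fun y _ => measurable_restr k (measurableSet_singleton y))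
  simp only [Finset.coe_univ, Set.preimage_univ, Measure.restrict_apply_univ] at h
  rw [← h]
  refine Finset.sum_congr rfl fun v _ => ?_
  rw [Measure.restrict_apply (measurable_restr k (measurableSet_singleton v)), Set.inter_comm]
  congr 2
  ext ρ
  simp [pre, List.ofFn_injective.eq_iff]

/-- A one-step Markov-type identity. -/
theorem markov {α : Type} [Fintype α] [MeasurableSpace α]
    [MeasurableSingletonClass α] (μ : Measure (ℕ → α)) (stp : List α → α → α → ℝ≥0∞)
    (hμ : ∀ h x y, μ (Cyl (h ++ [x] ++ [y])) = μ (Cyl (h ++ [x])) * stp h x y)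
    (m : ℕ) (L : Set (List α)) (y : α) (κ : ℝ≥0∞)
    (hκ : ∀ h x, h.length = m → h ++ [x] ∈ L → stp h x y = κ) :
    μ ({ρ | pre ρ (m+1) ∈ L} ∩ {ρ | ρ (m+1) = y}) = μ {ρ | pre ρ (m+1) ∈ L} * κ := by
  have hy : MeasurableSet {ρ : ℕ → α | ρ (m+1) = y} :=
    measurableSet_eq_fun (measurable_pi_apply (m+1)) measurable_const
  rw [measure_pre_sum μ (m+1) _ ((measurableSet_pre _ _).inter hy),
    measure_pre_sum μ (m+1) _ (measurableSet_pre (m+1) L), Finset.sum_mul]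
  refine Finset.sum_congr rfl fun v _ => ?_
  by_cases hv : List.ofFn v ∈ L
  · have e1 : ({ρ : ℕ → α | pre ρ (m+1) ∈ L} ∩ {ρ | ρ (m+1) = y}) ∩
        {ρ | pre ρ (m+1) = List.ofFn v} = Cyl (List.ofFn v ++ [y]) := by
      ext ρ
      simp only [Set.mem_inter_iff, Set.mem_ofPred_eq, mem_Cyl, List.length_append,
        List.length_ofFn, List.length_singleton, pre_succ ρ (m+1)]
      constructor
      · rintro ⟨⟨_, h2⟩, h3⟩
        rw [h3, h2]
      · intro h
        have := List.append_inj' h rfl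
        simp only [List.cons.injEq, and_true] at this
        rw [this.1]
        exact ⟨⟨hv, this.2⟩, rfl⟩
    have e2 : {ρ : ℕ → α | pre ρ (m+1) ∈ L} ∩
        {ρ | pre ρ (m+1) = List.ofFn v} = Cyl (List.ofFn v) := by
      ext ρ
      simp only [Set.mem_inter_iff, Set.mem_ofPred_eq, mem_Cyl, List.length_ofFn]
      constructor
      · exact fun h => h.2
      · intro h; rw [h]; exact ⟨hv, rfl⟩
    rw [e1, e2]
    rw [List.ofFn_succ_last] at hv ⊢
    rw [hμ, hκ _ _ (by simp) hv]
  · have e : ∀ Z : Set (ℕ → α), ({ρ : ℕ → α | pre ρ (m+1) ∈ L} ∩ Z) ∩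
        {ρ | pre ρ (m+1) = List.ofFn v} = ∅ := by
      intro Z
      ext ρ
      simp only [Set.mem_inter_iff, Set.mem_ofPred_eq, Set.mem_empty_iff_false, iff_false]
      rintro ⟨⟨h1, -⟩, h3⟩
      rw [h3] at h1; exact hv h1
    have hempty := e Set.univ
    rw [Set.inter_univ] at hempty
    rw [e, hempty]
    simp

/-- Two probability measures on plays are equal as soon as one dominates the other
on cylinders. -/
theorem measure_eq_of_Cyl_le {α : Type} [Fintype α] [MeasurableSpace α]
    [MeasurableSingletonClass α] (μ ν : Measure (ℕ → α)) [IsProbabilityMeasure μ]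
    [IsProbabilityMeasure ν] (h : ∀ l, μ (Cyl l) ≤ ν (Cyl l)) : μ = ν := by
  classical
  have key : ∀ k : ℕ, μ.map (fun (ρ : ℕ → α) (i : Fin k) => ρ i.1) =
      ν.map (fun (ρ : ℕ → α) (i : Fin k) => ρ i.1) := by
    intro k
    have := Measure.isProbabilityMeasure_map (μ := μ) (measurable_restr (α := α) k).aemeasurable
    have := Measure.isProbabilityMeasure_map (μ := ν) (measurable_restr (α := α) k).aemeasurable
    apply Measure.eq_of_le_of_isProbabilityMeasure
    rw [Measure.le_iff]
    intro B _
    have hs : ∀ m : Measure (Fin k → α), m B = ∑ v ∈ B.toFinset, m {v} := by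
      intro m
      rw [sum_measure_singleton]; simp
    rw [hs, hs]
    refine Finset.sum_le_sum fun v _ => ?_
    rw [Measure.map_apply (measurable_restr k) (measurableSet_singleton v),
      Measure.map_apply (measurable_restr k) (measurableSet_singleton v)]
    have e : (fun (ρ : ℕ → α) (i : Fin k) => ρ i.1) ⁻¹' {v} = Cyl (List.ofFn v) := by
      ext ρ
      simp [mem_Cyl, pre, List.ofFn_injective.eq_iff]
    rw [e]
    exact h _
  refine IsProjectiveLimit.unique (P := fun I : Finset ℕ => ν.map I.restrict) (ι := ℕ)
    (α := fun _ => α) ?_ (fun I => rfl)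
  intro I
  obtain ⟨k, hk⟩ : ∃ k, ∀ i ∈ I, i < k := ⟨I.sup id + 1, fun i hi =>
    Nat.lt_succ_of_le (Finset.le_sup (f := id) hi)⟩
  have e : (I.restrict : (ℕ → α) → _) = (fun (v : Fin k → α) (i : I) => v ⟨i.1, hk i.1 i.2⟩) ∘
      (fun (ρ : ℕ → α) (i : Fin k) => ρ i.1) := rfl
  have hm : Measurable (fun (v : Fin k → α) (i : I) => v ⟨i.1, hk i.1 i.2⟩) :=
    measurable_pi_lambda _ (fun i => measurable_pi_apply _)
  rw [e, ← Measure.map_map hm (measurable_restr k), key, Measure.map_map hm (measurable_restr k)]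
  rfl

/-! ### Rational distributions as images of a uniform distribution -/

theorem exists_uniform {K S : Type} [Fintype K] [Fintype S] (p : K → PMF S)
    (hp : ∀ k t, ∃ q : ℚ, p k t = ENNReal.ofReal (q : ℝ)) :
    ∃ (M : ℕ) (f : K → Fin (M+1) → S), ∀ k t,
      open Classical in p k t = ∑ i, ((M+1 : ℕ) : ℝ≥0∞)⁻¹ * (if f k i = t then 1 else 0) := by
  classical
  choose q0 hq0 using hp
  let q : K → S → ℚ := fun k t => max (q0 k t) 0
  have hq : ∀ k t, p k t = ENNReal.ofReal (q k t : ℝ) := by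
    intro k t
    rw [hq0]
    simp [q]
  have hqn : ∀ k t, 0 ≤ q k t := fun k t => le_max_right _ _
  let N : ℕ := ∏ k, ∏ t, (q k t).den
  have hN : 0 < N := Finset.prod_pos fun k _ => Finset.prod_pos fun t _ => (q k t).den_pos
  have hm : ∀ k t, ∃ m : ℕ, (m : ℚ) = q k t * N := by
    intro k t
    have hd : (q k t).den ∣ N := (Finset.dvd_prod_of_mem (fun t => (q k t).den)
      (Finset.mem_univ t)).trans (Finset.dvd_prod_of_mem (fun k => ∏ t, (q k t).den)
      (Finset.mem_univ k))
    obtain ⟨c, hc⟩ := hd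
    refine ⟨(q k t).num.toNat * c, ?_⟩
    have h1 : (((q k t).num.toNat : ℕ) : ℚ) = (q k t).num := by
      exact_mod_cast congrArg (Int.cast (R := ℚ)) (Int.toNat_of_nonneg (Rat.num_nonneg.2 (hqn k t)))
    have h2 := Rat.mul_den_eq_num (q k t)
    rw [hc]
    push_cast
    rw [h1, ← h2]
    ring
  choose m hm using hm
  obtain ⟨M, hM⟩ : ∃ M, N = M + 1 := ⟨N - 1, by omega⟩
  have hpm : ∀ k t, p k t = ((M+1 : ℕ) : ℝ≥0∞)⁻¹ * (m k t : ℝ≥0∞) := by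
    intro k t
    have hN' : (0:ℝ) < N := by exact_mod_cast hN
    have h3 : (q k t : ℝ) = (N:ℝ)⁻¹ * (m k t : ℝ) := by
      have : ((m k t : ℚ) : ℝ) = ((q k t * N : ℚ) : ℝ) := by rw [hm]
      push_cast at this
      rw [this]; field_simp
    rw [hq, h3, ENNReal.ofReal_mul (by positivity), ENNReal.ofReal_inv_of_pos hN', ← hM]
    simp
  have hsum : ∀ k, ∑ t, m k t = M + 1 := by
    intro k
    have h1 : ∑ t, p k t = 1 := by rw [← (p k).tsum_coe, tsum_fintype]
    simp only [hpm, ← Finset.mul_sum] at h1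
    have h0 : ((M+1 : ℕ) : ℝ≥0∞) ≠ 0 := by simp
    have ht : ((M+1 : ℕ) : ℝ≥0∞) ≠ ∞ := ENNReal.natCast_ne_top _
    have h2 : (∑ t, (m k t : ℝ≥0∞)) = ((M+1 : ℕ) : ℝ≥0∞) := by
      calc (∑ t, (m k t : ℝ≥0∞)) = ((M+1 : ℕ) : ℝ≥0∞) * (((M+1 : ℕ) : ℝ≥0∞)⁻¹ *
            ∑ t, (m k t : ℝ≥0∞)) := by
              rw [← mul_assoc, ENNReal.mul_inv_cancel h0 ht, one_mul]
        _ = _ := by rw [h1, mul_one]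
    exact_mod_cast h2
  have he : ∀ k, Nonempty (Fin (M+1) ≃ Σ t, Fin (m k t)) := by
    intro k
    refine ⟨Fintype.equivOfCardEq ?_⟩
    simp [hsum k]
  let e := fun k => (he k).some
  refine ⟨M, fun k i => (e k i).1, fun k t => ?_⟩
  rw [hpm, ← Finset.mul_sum]
  congr 1
  rw [(e k).sum_comp (fun x : Σ t, Fin (m k t) => if x.1 = t then (1 : ℝ≥0∞) else 0),
    Fintype.sum_sigma]
  rw [Finset.sum_eq_single t]
  · simp
  · intro b _ hb; simp [hb]
  · simp

/-! ### Play measures -/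

theorem listProb_snoc (G : OsTGame) (σ : List G.S → PMF G.A₁) (π : List G.S → PMF G.A₂) (y : G.S) :
    ∀ (l hist : List G.S) (cur : G.S) (h : List G.S) (x : G.S), cur :: l = h ++ [x] →
      listProb G σ π hist cur (l ++ [y]) = listProb G σ π hist cur l * step G σ π (hist ++ h) x y := by
  intro l
  induction l with
  | nil =>
    intro hist cur h x hx
    cases h with
    | nil => simp at hx; subst hx; simp [listProb]
    | cons a h => simp at hx
  | cons z l ih =>
    intro hist cur h x hx
    cases h with
    | nil => simp at hx
    | cons a h =>
      simp only [List.cons_append, List.cons.injEq] at hx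
      obtain ⟨rfl, hx⟩ := hx
      simp only [List.cons_append, listProb]
      rw [ih (hist ++ [cur]) z h x hx]
      simp [mul_assoc]

theorem Cyl_start (G : OsTGame)
    (Pr : G.S → (List G.S → PMF G.A₁) → (List G.S → PMF G.A₂) → Measure (ℕ → G.S))
    (hPr : IsPlayMeasure G Pr) (s σ π) : Pr s σ π (Cyl [s]) = 1 := by
  rw [hPr.2]; rfl

theorem Cyl_ne (G : OsTGame)
    (Pr : G.S → (List G.S → PMF G.A₁) → (List G.S → PMF G.A₂) → Measure (ℕ → G.S))
    (hPr : IsPlayMeasure G Pr) (s σ π) (z : G.S) (hz : z ≠ s) (l : List G.S) :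
    Pr s σ π (Cyl (z :: l)) = 0 := by
  have := hPr.1 s σ π
  have hms : MeasurableSet (Cyl [s]) := by
    have h := measurableSet_pre (α := G.S) 1 {[s]}
    have e : (Cyl [s]) = {ρ : ℕ → G.S | pre ρ 1 ∈ ({[s]} : Set (List G.S))} := by
      ext ρ; simp [mem_Cyl]
    rw [e]; exact h
  have h0 : Pr s σ π (Cyl [s])ᶜ = 0 := by
    rw [prob_compl_eq_zero_iff hms]; exact Cyl_start G Pr hPr s σ π
  refine measure_mono_null ?_ h0
  intro ρ hρ hs
  have h1 := hρ ⟨0, by simp⟩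
  have h2 := hs ⟨0, by simp⟩
  simp at h1 h2
  exact hz (h1.symm.trans h2)

theorem play_snoc (G : OsTGame)
    (Pr : G.S → (List G.S → PMF G.A₁) → (List G.S → PMF G.A₂) → Measure (ℕ → G.S))
    (hPr : IsPlayMeasure G Pr) (s σ π) (h : List G.S) (x y : G.S) :
    Pr s σ π (Cyl (h ++ [x] ++ [y])) = Pr s σ π (Cyl (h ++ [x])) * step G σ π h x y := by
  obtain ⟨z, l, hzl⟩ : ∃ z l, h ++ [x] = z :: l := by
    cases h with
    | nil => exact ⟨x, [], rfl⟩
    | cons a h => exact ⟨a, h ++ [x], rfl⟩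
  rw [hzl, List.cons_append]
  by_cases hz : z = s
  · subst hz
    rw [hPr.2, hPr.2, listProb_snoc G σ π y l [] z h x hzl.symm]
    simp
  · rw [Cyl_ne G Pr hPr s σ π z hz, Cyl_ne G Pr hPr s σ π z hz, zero_mul]

/-! ### Expansions of histories -/

section Expansion

variable {S C α : Type} (il : S → α) (ir : S → C → α)

/-- The history of the deterministic game given by a list of complete rounds. -/
def ex : List (S × C) → List α
  | [] => []
  | p :: r => il p.1 :: ir p.1 p.2 :: ex r

theorem ex_append (r r' : List (S × C)) : ex il ir (r ++ r') = ex il ir r ++ ex il ir r' := by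
  induction r with
  | nil => rfl
  | cons p r ih => simp [ex, ih]

theorem ex_length (r : List (S × C)) : (ex il ir r).length = 2 * r.length := by
  induction r with
  | nil => rfl
  | cons p r ih => simp [ex, ih]; omega

/-- Prefixes consisting of complete rounds through the states `l`, then `s`. -/
def LA (l : List S) (s : S) : Set (List α) :=
  {h | ∃ r : List (S × C), r.map Prod.fst = l ∧ h = ex il ir r ++ [il s]}

/-- Prefixes consisting of complete rounds through the states `l`, then `s` and `c`. -/
def LB (l : List S) (s : S) (c : C) : Set (List α) :=
  {h | ∃ r : List (S × C), r.map Prod.fst = l ∧ h = ex il ir r ++ [il s] ++ [ir s c]}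

/-- The event corresponding to `LA`. -/
def evA (l : List S) (s : S) : Set (ℕ → α) := {ρ | pre ρ (2 * l.length + 1) ∈ LA il ir l s}

/-- The event corresponding to `LB`. -/
def evB (l : List S) (s : S) (c : C) : Set (ℕ → α) :=
  {ρ | pre ρ (2 * l.length + 1 + 1) ∈ LB il ir l s c}

theorem evA_inter (l : List S) (s : S) (c : C) :
    evA il ir l s ∩ {ρ | ρ (2 * l.length + 1) = ir s c} = evB il ir l s c := by
  ext ρ
  simp only [evA, evB, LA, LB, Set.mem_inter_iff, Set.mem_ofPred_eq,
    pre_succ ρ (2 * l.length + 1)]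
  constructor
  · rintro ⟨⟨r, hr, h⟩, h2⟩
    exact ⟨r, hr, by rw [h, h2]⟩
  · rintro ⟨r, hr, h⟩
    have := List.append_inj' h rfl
    simp only [List.cons.injEq, and_true] at this
    exact ⟨⟨r, hr, this.1⟩, this.2⟩

theorem evA_succ (l : List S) (s t : S) :
    evA il ir (l ++ [s]) t =
      ⋃ c, (evB il ir l s c ∩ {ρ | ρ (2 * l.length + 1 + 1) = il t}) := by
  ext ρ
  have e : 2 * (l ++ [s]).length + 1 = 2 * l.length + 1 + 1 + 1 := by simp; omega
  simp only [evA, evB, LA, LB, Set.mem_iUnion, Set.mem_inter_iff, Set.mem_ofPred_eq, e,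
    pre_succ ρ (2 * l.length + 1 + 1)]
  constructor
  · rintro ⟨r, hr, h⟩
    have := List.append_inj' h rfl
    simp only [List.cons.injEq, and_true] at this
    obtain ⟨r0, r1, rfl, h0, h1⟩ := List.map_eq_append_iff.1 hr
    obtain ⟨p, rfl, hp⟩ := List.map_eq_singleton_iff.1 h1
    subst hp
    refine ⟨p.2, ⟨r0, h0, ?_⟩, this.2⟩
    rw [this.1, ex_append]; simp [ex]
  · rintro ⟨c, ⟨r, hr, h⟩, h2⟩
    refine ⟨r ++ [(s, c)], by simp [hr], ?_⟩
    rw [h, h2, ex_append]; simp [ex]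

theorem evB_disjoint (hinj : ∀ s c c', ir s c = ir s c' → c = c') (l : List S) (s : S) {c c' : C}
    (hc : c ≠ c') : Disjoint (evB il ir l s c) (evB il ir l s c') := by
  rw [← evA_inter, ← evA_inter, Set.disjoint_left]
  rintro ρ ⟨_, h1⟩ ⟨_, h2⟩
  exact hc (hinj s _ _ (h1.symm.trans h2))

theorem evA_proj (pr : α → S) (hpr : ∀ s, pr (il s) = s) (l : List S) (s : S) :
    evA il ir l s ⊆ (fun (ρ : ℕ → α) n => pr (ρ (2 * n))) ⁻¹' Cyl (l ++ [s]) := by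
  have aux : ∀ (r : List (S × C)) (ρ : ℕ → α), pre ρ (2 * r.length) = ex il ir r →
      pre (fun n => pr (ρ (2 * n))) r.length = r.map Prod.fst := by
    intro r
    induction r using List.reverseRecOn with
    | nil => intro ρ _; simp [pre]
    | append_singleton r p ih =>
      intro ρ h
      have e : 2 * (r ++ [p]).length = 2 * r.length + 1 + 1 := by simp; omega
      rw [e, pre_succ, pre_succ, ex_append, List.append_assoc] at h
      have := List.append_inj' h (by simp [ex])
      have h2 := this.2
      simp only [ex, List.cons_append, List.nil_append, List.cons.injEq] at h2
      rw [List.length_append, List.length_singleton, pre_succ, ih ρ this.1]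
      simp [h2.1, hpr]
  intro ρ hρ
  obtain ⟨r, hr, h⟩ := hρ
  subst hr
  rw [pre_succ] at h
  have := List.append_inj' h rfl
  simp only [List.cons.injEq, and_true, List.length_map] at this
  rw [Set.mem_preimage, mem_Cyl, List.length_append, List.length_singleton, pre_succ,
    List.length_map, aux r ρ this.1]
  simp [this.2, hpr]

variable [Fintype C] [Fintype α] [MeasurableSpace α] [MeasurableSingletonClass α]

theorem measurableSet_coord (m : ℕ) (y : α) : MeasurableSet {ρ : ℕ → α | ρ m = y} :=
  measurableSet_eq_fun (measurable_pi_apply m) measurable_const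

theorem meas_evA_succ (hinj : ∀ s c c', ir s c = ir s c' → c = c')
    (μ : Measure (ℕ → α)) (l : List S) (s t : S) :
    μ (evA il ir (l ++ [s]) t) =
      ∑ c, μ (evB il ir l s c ∩ {ρ | ρ (2 * l.length + 1 + 1) = il t}) := by
  rw [evA_succ, measure_iUnion, tsum_fintype]
  · intro c c' hc
    exact (evB_disjoint il ir hinj l s hc).mono Set.inter_subset_left Set.inter_subset_left
  · intro c
    exact (measurableSet_pre _ _).inter (measurableSet_coord _ _)

theorem meas_evA_sum (hinj : ∀ s c c', ir s c = ir s c' → c = c')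
    (μ : Measure (ℕ → α)) (stp : List α → α → α → ℝ≥0∞)
    (hμ : ∀ h x y, μ (Cyl (h ++ [x] ++ [y])) = μ (Cyl (h ++ [x])) * stp h x y)
    (h0 : ∀ h s y, (∀ c, y ≠ ir s c) → stp h (il s) y = 0)
    (l : List S) (s : S) :
    μ (evA il ir l s) = ∑ c, μ (evB il ir l s c) := by
  classical
  have hnull : ∀ y, (∀ c, y ≠ ir s c) →
      μ (evA il ir l s ∩ {ρ | ρ (2 * l.length + 1) = y}) = 0 := by
    intro y hy
    unfold evA
    rw [markov μ stp hμ (2 * l.length) (LA il ir l s) y 0, mul_zero]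
    rintro h x hh ⟨r, hr, hx⟩
    have := List.append_inj' hx rfl
    simp only [List.cons.injEq, and_true] at this
    rw [this.2]
    exact h0 _ _ _ hy
  have hB : μ (⋃ c, evB il ir l s c) = ∑ c, μ (evB il ir l s c) := by
    rw [measure_iUnion, tsum_fintype]
    · intro c c' hc
      exact evB_disjoint il ir hinj l s hc
    · intro c
      exact measurableSet_pre _ _
  rw [← hB]
  refine le_antisymm ?_ (measure_mono (Set.iUnion_subset fun c => ?_))
  · have hsub : evA il ir l s ⊆ (⋃ c, evB il ir l s c) ∪
        ⋃ y ∈ {y | ∀ c, y ≠ ir s c}, (evA il ir l s ∩ {ρ | ρ (2 * l.length + 1) = y}) := by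
      intro ρ hρ
      by_cases h : ∃ c, ρ (2 * l.length + 1) = ir s c
      · obtain ⟨c, hc⟩ := h
        left
        refine Set.mem_iUnion.2 ⟨c, ?_⟩
        rw [← evA_inter]; exact ⟨hρ, hc⟩
      · right
        push Not at h
        simp only [Set.mem_iUnion]
        exact ⟨_, h, hρ, rfl⟩
    refine (measure_mono hsub).trans ((measure_union_le _ _).trans ?_)
    have hz : μ (⋃ y ∈ {y | ∀ c, y ≠ ir s c},
        (evA il ir l s ∩ {ρ | ρ (2 * l.length + 1) = y})) = 0 :=
      (measure_biUnion_null_iff (Set.to_countable _)).2 fun y hy => hnull y hy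
    rw [hz, add_zero]
  · rw [← evA_inter]; exact Set.inter_subset_left

end Expansion

/-! ### The deterministic game -/

/-- The deterministic game: in a state `s` player 2 picks an action and a residue, unobserved by
player 1, who then picks an action and a residue. -/
noncomputable def DG (G : OsTGame) (M : ℕ) (F : G.S → G.A₁ → G.A₂ → Fin (M+1) → G.S) : OsTGame where
  S := G.S ⊕ (G.S × (G.A₂ × Fin (M+1)))
  turn := Sum.isRight
  A₁ := G.A₁ × Fin (M+1)
  A₂ := G.A₂ × Fin (M+1)
  O := Option G.O
  δ₁ := fun x a => PMF.pure (Sum.elim (fun s => Sum.inl s)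
    (fun y => Sum.inl (F y.1 a.1 y.2.1 (a.2 + y.2.2))) x)
  δ₂ := fun x c => PMF.pure (Sum.elim (fun s => Sum.inr (s, c)) (fun y => Sum.inr y) x)
  obs₁ := Sum.elim (fun s => some (G.obs₁ s)) (fun _ => none)

section Main

variable (G : OsTGame) (M : ℕ) (F : G.S → G.A₁ → G.A₂ → Fin (M+1) → G.S)

/-- Original states in the deterministic game. -/
noncomputable def il (s : G.S) : (DG G M F).S := Sum.inl s

/-- Intermediate states in the deterministic game. -/
noncomputable def ir (s : G.S) (c : G.A₂ × Fin (M+1)) : (DG G M F).S := Sum.inr (s, c)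

/-- Projection to original states. -/
def pr (x : (DG G M F).S) : G.S := Sum.elim id Prod.fst x

/-- The original state, if any. -/
def lft (x : (DG G M F).S) : Option G.S := Sum.elim some (fun _ => none) x

/-- The original history contained in a history of the deterministic game. -/
def contract (h : List (DG G M F).S) : List G.S :=
  h.filterMap (lft G M F)

/-- The sequence of original states in a play of the deterministic game. -/
def T (ρ : ℕ → (DG G M F).S) : ℕ → G.S := fun n => pr G M F (ρ (2 * n))

theorem il_inj : Function.Injective (il G M F) := Sum.inl_injective

theorem ir_inj (s : G.S) (c c' : G.A₂ × Fin (M+1)) (h : ir G M F s c = ir G M F s c') : c = c' := by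
  have := Sum.inr_injective h
  simpa using this

theorem contract_ex (r : List (G.S × (G.A₂ × Fin (M+1)))) :
    contract G M F (ex (il G M F) (ir G M F) r) = r.map Prod.fst := by
  induction r with
  | nil => rfl
  | cons p r ih =>
    unfold contract at ih ⊢
    have h1 : ∀ s, lft G M F (il G M F s) = some s := fun _ => rfl
    have h2 : ∀ s c, lft G M F (ir G M F s c) = none := fun _ _ => rfl
    simp [ex, h1, h2, ih]

theorem contract_append (h h' : List (DG G M F).S) :
    contract G M F (h ++ h') = contract G M F h ++ contract G M F h' := by
  simp [contract]

theorem contract_il (s : G.S) : contract G M F [il G M F s] = [s] := rfl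

theorem contract_ir (s : G.S) (c) : contract G M F [ir G M F s c] = [] := rfl

theorem obs_contract (h : List (DG G M F).S) :
    (contract G M F h).map G.obs₁ = (h.map (DG G M F).obs₁).filterMap id := by
  induction h with
  | nil => rfl
  | cons x h ih =>
    have hx : (DG G M F).obs₁ x = (lft G M F x).map G.obs₁ := by
      rcases x with s | y <;> rfl
    unfold contract at ih ⊢
    rw [List.map_cons, hx]
    cases hl : lft G M F x with
    | none => rw [List.filterMap_cons_none hl, ih]; rfl
    | some s =>
      rw [List.filterMap_cons_some hl, List.map_cons, ih]; rfl

theorem obs_ex (r r' : List (G.S × (G.A₂ × Fin (M+1))))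
    (h : (r.map Prod.fst).map G.obs₁ = (r'.map Prod.fst).map G.obs₁) :
    (ex (il G M F) (ir G M F) r).map (DG G M F).obs₁ =
      (ex (il G M F) (ir G M F) r').map (DG G M F).obs₁ := by
  induction r generalizing r' with
  | nil => cases r' with
    | nil => rfl
    | cons p r' => simp at h
  | cons p r ih => cases r' with
    | nil => simp at h
    | cons p' r' =>
      simp only [List.map_cons, List.cons.injEq] at h
      have h1 := ih r' h.2
      simp only [ex, List.map_cons, h1]
      simp [DG, il, ir, h.1]

theorem T_measurable : Measurable (T G M F) :=
  measurable_pi_lambda _ fun n => (measurable_from_top (f := pr G M F)).comp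
    (measurable_pi_apply (2 * n))

instance (G : OsTGame) : MeasurableSingletonClass G.S := ⟨fun _ => trivial⟩

theorem step_il (σ' : List (DG G M F).S → PMF (DG G M F).A₁)
    (π' : List (DG G M F).S → PMF (DG G M F).A₂) (h) (s : G.S) (c : G.A₂ × Fin (M+1)) :
    step (DG G M F) σ' π' h (il G M F s) (ir G M F s c) = π' (h ++ [il G M F s]) c := by
  classical
  have ht : (DG G M F).turn (il G M F s) = false := rfl
  unfold step
  rw [ht]
  simp only [Bool.false_eq_true, if_false]
  rw [tsum_eq_single (β := (DG G M F).A₂) c]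
  · have : (DG G M F).δ₂ (il G M F s) c = PMF.pure (ir G M F s c) := rfl
    rw [this]; simp
  · intro c' hc
    have : (DG G M F).δ₂ (il G M F s) c' = PMF.pure (ir G M F s c') := rfl
    rw [this, PMF.pure_apply_of_ne, mul_zero]
    intro h; exact hc (ir_inj G M F s _ _ h).symm

theorem step_il_zero (σ' : List (DG G M F).S → PMF (DG G M F).A₁)
    (π' : List (DG G M F).S → PMF (DG G M F).A₂) (h) (s : G.S) (y)
    (hy : ∀ c, y ≠ ir G M F s c) :
    step (DG G M F) σ' π' h (il G M F s) y = 0 := by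
  have ht : (DG G M F).turn (il G M F s) = false := rfl
  unfold step
  rw [ht]
  simp only [Bool.false_eq_true, if_false, ENNReal.tsum_eq_zero]
  intro c
  have : (DG G M F).δ₂ (il G M F s) c = PMF.pure (ir G M F s c) := rfl
  rw [this, PMF.pure_apply_of_ne _ _ (hy c), mul_zero]

open Classical in
theorem step_ir (σ' : List (DG G M F).S → PMF (DG G M F).A₁)
    (π' : List (DG G M F).S → PMF (DG G M F).A₂) (h) (s t : G.S) (c : G.A₂ × Fin (M+1)) :
    step (DG G M F) σ' π' h (ir G M F s c) (il G M F t) =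
      ∑ a : G.A₁, ∑ i : Fin (M+1), σ' (h ++ [ir G M F s c]) (a, i) *
        (if F s a c.1 (i + c.2) = t then 1 else 0) := by
  have ht : (DG G M F).turn (ir G M F s c) = true := rfl
  unfold step
  rw [ht]
  simp only [if_true]
  rw [← Fintype.sum_prod_type' (f := fun a i => σ' (h ++ [ir G M F s c]) (a, i) *
        (if F s a c.1 (i + c.2) = t then 1 else 0)), tsum_fintype]
  refine Finset.sum_congr rfl fun a _ => ?_
  have : (DG G M F).δ₁ (ir G M F s c) a = PMF.pure (il G M F (F s a.1 c.1 (a.2 + c.2))) := rfl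
  rw [this, PMF.pure_apply]
  simp only [(il_inj G M F).eq_iff, eq_comm]
  rfl

/-- Combined transition probability. -/
noncomputable def Δ (s : G.S) (a : G.A₁) (b : G.A₂) (t : G.S) : ℝ≥0∞ :=
  if G.turn s then G.δ₁ s a t else G.δ₂ s b t

theorem sum_pmf {A : Type} [Fintype A] (p : PMF A) : ∑ a, p a = 1 := by
  rw [← p.tsum_coe, tsum_fintype]

theorem step_eq (σ : List G.S → PMF G.A₁) (π : List G.S → PMF G.A₂) (h) (s t : G.S) :
    step G σ π h s t = ∑ a, ∑ b, σ (h ++ [s]) a * π (h ++ [s]) b * Δ G s a b t := by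
  unfold step Δ
  by_cases ht : G.turn s
  · simp only [ht, if_true, tsum_fintype]
    refine Finset.sum_congr rfl fun a _ => ?_
    rw [← Finset.sum_mul, ← Finset.mul_sum, sum_pmf, mul_one]
  · simp only [ht, Bool.false_eq_true, if_false, tsum_fintype]
    rw [Finset.sum_comm]
    refine Finset.sum_congr rfl fun b _ => ?_
    rw [← Finset.sum_mul, ← Finset.sum_mul, sum_pmf, one_mul]

/-- Product of a distribution with the uniform one. -/
noncomputable def prodU {A : Type} [Fintype A] (p : PMF A) : PMF (A × Fin (M+1)) :=
  PMF.ofFintype (fun x => p x.1 * ((M+1 : ℕ) : ℝ≥0∞)⁻¹) (by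
    rw [Fintype.sum_prod_type]
    simp only [Finset.sum_const, Finset.card_univ, Fintype.card_fin, nsmul_eq_mul]
    have h0 : ((M+1 : ℕ) : ℝ≥0∞) ≠ 0 := by simp
    have ht : ((M+1 : ℕ) : ℝ≥0∞) ≠ ∞ := ENNReal.natCast_ne_top _
    have : ∀ x, ((M+1 : ℕ) : ℝ≥0∞) * (p x * ((M+1 : ℕ) : ℝ≥0∞)⁻¹) = p x := by
      intro x
      rw [mul_comm (p x), ← mul_assoc, ENNReal.mul_inv_cancel h0 ht, one_mul]
    simp only [this, sum_pmf])

theorem prodU_apply {A : Type} [Fintype A] (p : PMF A) (a : A) (i : Fin (M+1)) :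
    prodU M p (a, i) = p a * ((M+1 : ℕ) : ℝ≥0∞)⁻¹ := rfl

/-- The central comparison: if one-round probabilities agree then the measures agree. -/
theorem compare (φ : Set (ℕ → G.S)) (hφ : MeasurableSet φ)
    (Pr) (hPr : IsPlayMeasure G Pr) (Pr') (hPr' : IsPlayMeasure (DG G M F) Pr')
    (s₀ : G.S) (σ π σ' π')
    (hstep : ∀ l s t, Pr' (il G M F s₀) σ' π' (evA (il G M F) (ir G M F) l s) *
        step G σ π l s t = Pr' (il G M F s₀) σ' π' (evA (il G M F) (ir G M F) (l ++ [s]) t)) :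
    Pr s₀ σ π φ = Pr' (il G M F s₀) σ' π' (T G M F ⁻¹' φ) := by
  have := hPr.1 s₀ σ π
  have := hPr'.1 (il G M F s₀) σ' π'
  have := Measure.isProbabilityMeasure_map (μ := Pr' (il G M F s₀) σ' π')
    (T_measurable G M F).aemeasurable
  have hA : ∀ l s, Pr s₀ σ π (Cyl (l ++ [s])) ≤
      Pr' (il G M F s₀) σ' π' (evA (il G M F) (ir G M F) l s) := by
    intro l
    induction l using List.reverseRecOn with
    | nil =>
      intro s
      by_cases hs : s = s₀
      · subst hs
        refine le_trans prob_le_one ?_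
        rw [← Cyl_start _ Pr' hPr' (il G M F s) σ' π']
        refine measure_mono ?_
        intro ρ hρ
        rw [mem_Cyl] at hρ
        exact ⟨[], rfl, hρ⟩
      · rw [List.nil_append, Cyl_ne G Pr hPr s₀ σ π s hs]
        exact zero_le
    | append_singleton l x ih =>
      intro s
      rw [play_snoc G Pr hPr, ← hstep]
      gcongr
      exact ih x
  have key : Pr s₀ σ π = (Pr' (il G M F s₀) σ' π').map (T G M F) := by
    apply measure_eq_of_Cyl_le
    intro l
    have hm : MeasurableSet (Cyl l) := by
      have h := measurableSet_pre (α := G.S) l.length {l}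
      have e : (Cyl l) = {ρ : ℕ → G.S | pre ρ l.length ∈ ({l} : Set (List G.S))} := by
        ext ρ; simp [mem_Cyl]
      rw [e]; exact h
    rw [Measure.map_apply (T_measurable G M F) hm]
    rcases List.eq_nil_or_concat' l with rfl | ⟨l, s, rfl⟩
    · have : (Cyl ([] : List G.S)) = Set.univ := by ext ρ; simp [Cyl]
      rw [this]; simp
    · exact (hA l s).trans (measure_mono (evA_proj _ _ (pr G M F) (fun _ => rfl) l s))
  rw [key, Measure.map_apply (T_measurable G M F) hφ]

variable {G M F}

open Classical in
theorem F_shift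
    (hF : ∀ s a b t, Δ G s a b t = ∑ i, ((M+1 : ℕ) : ℝ≥0∞)⁻¹ * (if F s a b i = t then 1 else 0))
    (s a b t) (j : Fin (M+1)) :
    ∑ i, ((M+1 : ℕ) : ℝ≥0∞)⁻¹ * (if F s a b (i + j) = t then 1 else 0) = Δ G s a b t := by
  rw [hF]
  exact Equiv.sum_comp (Equiv.addRight j)
    (fun i => ((M+1 : ℕ) : ℝ≥0∞)⁻¹ * (if F s a b i = t then 1 else 0))

/-- Every strategy of player 1 in the game is matched in the deterministic game. -/
theorem dirA
    (hF : ∀ s a b t, open Classical in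
      Δ G s a b t = ∑ i, ((M+1 : ℕ) : ℝ≥0∞)⁻¹ * (if F s a b i = t then 1 else 0))
    (φ : Set (ℕ → G.S)) (hφ : MeasurableSet φ)
    (Pr) (hPr : IsPlayMeasure G Pr) (Pr') (hPr' : IsPlayMeasure (DG G M F) Pr')
    (s₀ : G.S) (σ) (hσ : ObsBased G σ) :
    ∃ σ', ObsBased (DG G M F) σ' ∧ ∀ π', ∃ π,
      Pr s₀ σ π φ = Pr' (il G M F s₀) σ' π' (T G M F ⁻¹' φ) := by
  classical
  let σ' : List (DG G M F).S → PMF (DG G M F).A₁ := fun h => prodU M (σ (contract G M F h))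
  refine ⟨σ', ?_, fun π' => ?_⟩
  · intro h h' hh
    have : σ (contract G M F h) = σ (contract G M F h') := by
      apply hσ
      rw [obs_contract, obs_contract, hh]
    simp only [σ', this]
    rfl
  have hprob := hPr'.1 (il G M F s₀) σ' π'
  set μ := Pr' (il G M F s₀) σ' π' with hμdef
  have hsnoc := play_snoc _ Pr' hPr' (il G M F s₀) σ' π'
  rw [← hμdef] at hsnoc
  have hsum := meas_evA_sum (il G M F) (ir G M F) (ir_inj G M F) μ _ hsnoc
    (step_il_zero G M F σ' π')
  have hπ : ∀ h : List G.S, ∃ p : PMF G.A₂, ∀ l s, h = l ++ [s] → ∀ b,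
      μ (evA (il G M F) (ir G M F) l s) * p b =
        ∑ j, μ (evB (il G M F) (ir G M F) l s (b, j)) := by
    intro h
    rcases List.eq_nil_or_concat' h with rfl | ⟨l, s, rfl⟩
    · exact ⟨PMF.pure (Classical.arbitrary _), fun l s hl => by simp at hl⟩
    have hs := hsum l s
    rw [Fintype.sum_prod_type] at hs
    suffices H : ∃ p : PMF G.A₂, ∀ b, μ (evA (il G M F) (ir G M F) l s) * p b =
        ∑ j, μ (evB (il G M F) (ir G M F) l s (b, j)) by
      obtain ⟨p, hp⟩ := H
      refine ⟨p, fun l' s' hl b => ?_⟩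
      have := List.append_inj' hl rfl
      simp only [List.cons.injEq, and_true] at this
      rw [← this.1, ← this.2]; exact hp b
    by_cases h0 : μ (evA (il G M F) (ir G M F) l s) = 0
    · refine ⟨PMF.pure (Classical.arbitrary _), fun b => ?_⟩
      rw [h0] at hs
      have := (Finset.sum_eq_zero_iff.1 hs.symm) b (Finset.mem_univ b)
      rw [h0, zero_mul, this]
    · have ht : μ (evA (il G M F) (ir G M F) l s) ≠ ∞ := measure_ne_top _ _
      refine ⟨PMF.ofFintype (fun b => (μ (evA (il G M F) (ir G M F) l s))⁻¹ *
        ∑ j, μ (evB (il G M F) (ir G M F) l s (b, j))) ?_, fun b => ?_⟩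
      · rw [← Finset.mul_sum, ← hs, ENNReal.inv_mul_cancel h0 ht]
      · rw [PMF.ofFintype_apply, ← mul_assoc, ENNReal.mul_inv_cancel h0 ht, one_mul]
  choose π hπ using hπ
  refine ⟨π, compare G M F φ hφ Pr hPr Pr' hPr' s₀ σ π σ' π' ?_⟩
  intro l s t
  rw [← hμdef, meas_evA_succ (il G M F) (ir G M F) (ir_inj G M F), step_eq]
  have hB : ∀ c : G.A₂ × Fin (M+1), μ (evB (il G M F) (ir G M F) l s c ∩
      {ρ | ρ (2 * l.length + 1 + 1) = il G M F t}) =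
      μ (evB (il G M F) (ir G M F) l s c) * ∑ a, σ (l ++ [s]) a * Δ G s a c.1 t := by
    intro c
    unfold evB
    refine markov μ _ hsnoc (2 * l.length + 1) _ _ _ ?_
    rintro h x hh ⟨r, hr, hx⟩
    have hx' := List.append_inj' hx rfl
    simp only [List.cons.injEq, and_true] at hx'
    have hc : contract G M F (h ++ [x]) = l ++ [s] := by
      rw [hx, contract_append, contract_append, contract_ex, contract_il, contract_ir, hr]
      simp
    rw [hx'.2] at hc ⊢
    rw [step_ir]
    refine Finset.sum_congr rfl fun a _ => ?_
    simp only [σ', hc]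
    rw [← F_shift hF s a c.1 t c.2, Finset.mul_sum]
    refine Finset.sum_congr rfl fun i _ => ?_
    rw [← mul_assoc]
    rfl
  simp only [hB]
  rw [Fintype.sum_prod_type, Finset.sum_comm, Finset.mul_sum]
  refine Finset.sum_congr rfl fun b _ => ?_
  dsimp only
  rw [← Finset.sum_mul, ← hπ _ l s rfl b, mul_assoc]
  congr 1
  rw [Finset.mul_sum]
  refine Finset.sum_congr rfl fun a _ => ?_
  ring

/-- Every strategy of player 1 in the deterministic game is matched in the original game. -/
theorem dirB
    (hF : ∀ s a b t, open Classical in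
      Δ G s a b t = ∑ i, ((M+1 : ℕ) : ℝ≥0∞)⁻¹ * (if F s a b i = t then 1 else 0))
    (φ : Set (ℕ → G.S)) (hφ : MeasurableSet φ)
    (Pr) (hPr : IsPlayMeasure G Pr) (Pr') (hPr' : IsPlayMeasure (DG G M F) Pr')
    (s₀ : G.S) (σ') (hσ' : ObsBased (DG G M F) σ') :
    ∃ σ, ObsBased G σ ∧ ∀ π, ∃ π',
      Pr s₀ σ π φ = Pr' (il G M F s₀) σ' π' (T G M F ⁻¹' φ) := by
  classical
  let c₀ : G.A₂ × Fin (M+1) := (Classical.arbitrary _, 0)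
  let τ : List G.S → PMF (G.A₁ × Fin (M+1)) := fun h =>
    σ' (ex (il G M F) (ir G M F) (h.map fun s => (s, c₀)))
  let σ : List G.S → PMF G.A₁ := fun h => PMF.ofFintype (fun a => ∑ i, τ h (a, i)) (by
    rw [← Fintype.sum_prod_type']; exact sum_pmf (τ h))
  refine ⟨σ, ?_, fun π => ?_⟩
  · intro h h' hh
    have : τ h = τ h' := by
      apply hσ'
      apply obs_ex
      simpa [Function.comp_def] using hh
    simp only [σ, this]
  let π' : List (DG G M F).S → PMF (DG G M F).A₂ := fun h => prodU M (π (contract G M F h))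
  refine ⟨π', compare G M F φ hφ Pr hPr Pr' hPr' s₀ σ π σ' π' ?_⟩
  set μ := Pr' (il G M F s₀) σ' π' with hμdef
  have hsnoc := play_snoc _ Pr' hPr' (il G M F s₀) σ' π'
  rw [← hμdef] at hsnoc
  intro l s t
  rw [meas_evA_succ (il G M F) (ir G M F) (ir_inj G M F), step_eq]
  have hA : ∀ c : G.A₂ × Fin (M+1), μ (evB (il G M F) (ir G M F) l s c) =
      μ (evA (il G M F) (ir G M F) l s) * (π (l ++ [s]) c.1 * ((M+1 : ℕ) : ℝ≥0∞)⁻¹) := by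
    intro c
    rw [← evA_inter]
    unfold evA
    refine markov μ _ hsnoc (2 * l.length) _ _ _ ?_
    rintro h x hh ⟨r, hr, hx⟩
    have hx' := List.append_inj' hx rfl
    simp only [List.cons.injEq, and_true] at hx'
    have hc : contract G M F (h ++ [x]) = l ++ [s] := by
      rw [hx, contract_append, contract_ex, contract_il, hr]
    rw [hx'.2] at hc ⊢
    rw [step_il]
    simp only [π', hc]
    rfl
  have hB : ∀ c : G.A₂ × Fin (M+1), μ (evB (il G M F) (ir G M F) l s c ∩
      {ρ | ρ (2 * l.length + 1 + 1) = il G M F t}) =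
      μ (evB (il G M F) (ir G M F) l s c) * ∑ a, ∑ i, τ (l ++ [s]) (a, i) *
        (if F s a c.1 (i + c.2) = t then 1 else 0) := by
    intro c
    unfold evB
    refine markov μ _ hsnoc (2 * l.length + 1) _ _ _ ?_
    rintro h x hh ⟨r, hr, hx⟩
    have hx' := List.append_inj' hx rfl
    simp only [List.cons.injEq, and_true] at hx'
    have hs : σ' (h ++ [x]) = τ (l ++ [s]) := by
      apply hσ'
      have : h ++ [x] = ex (il G M F) (ir G M F) (r ++ [(s, c)]) := by
        rw [hx, ex_append]; simp [ex]
      rw [this]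
      apply obs_ex
      rw [← hr]
      simp [Function.comp_def]
    rw [hx'.2] at hs ⊢
    rw [step_ir, hs]
    rfl
  simp only [hB, hA]
  rw [Fintype.sum_prod_type, Finset.sum_comm, Finset.mul_sum]
  refine Finset.sum_congr rfl fun b _ => ?_
  simp only [mul_assoc]
  rw [← Finset.mul_sum]
  congr 1
  rw [← Finset.mul_sum]
  have e1 : ∀ a, σ (l ++ [s]) a = ∑ i, τ (l ++ [s]) (a, i) := fun a => rfl
  simp only [e1, mul_left_comm _ (π (l ++ [s]) b) _]
  rw [← Finset.mul_sum]
  congr 1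
  simp only [Finset.mul_sum, Finset.sum_mul]
  rw [Finset.sum_comm (s := (Finset.univ : Finset (Fin (M+1)))) (t := (Finset.univ : Finset G.A₁))]
  refine Finset.sum_congr rfl fun a _ => ?_
  rw [Finset.sum_comm]
  refine Finset.sum_congr rfl fun i _ => ?_
  rw [← F_shift hF s a b t i, Finset.mul_sum]
  refine Finset.sum_congr rfl fun j _ => ?_
  rw [add_comm j i]
  ring

end Main

theorem stmt_17 (G : OsTGame) (hrat : RationalProbs G)
    (φ : Set (ℕ → G.S)) (hφ : MeasurableSet φ) :
    ∃ (G' : OsTGame) (ι : G.S → G'.S) (φ' : Set (ℕ → G'.S)),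
      Function.Injective ι ∧ Deterministic G' ∧ MeasurableSet φ' ∧
      ∀ Pr, IsPlayMeasure G Pr → ∀ Pr', IsPlayMeasure G' Pr' →
        ∀ s : G.S,
          ((∃ σ, ObsBased G σ ∧ ∀ π, Pr s σ π φ = 1) ↔
            (∃ σ', ObsBased G' σ' ∧ ∀ π', Pr' (ι s) σ' π' φ' = 1)) ∧
          ((∃ σ, ObsBased G σ ∧ ∀ π, 0 < Pr s σ π φ) ↔
            (∃ σ', ObsBased G' σ' ∧ ∀ π', 0 < Pr' (ι s) σ' π' φ')) ∧
          (val G Pr φ s = val G' Pr' φ' (ι s)) ∧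
          ((∃ σ, ObsBased G σ ∧ (⨅ π, Pr s σ π φ) = val G Pr φ s) ↔
            (∃ σ', ObsBased G' σ' ∧ (⨅ π', Pr' (ι s) σ' π' φ') = val G' Pr' φ' (ι s))) := by
  classical
  obtain ⟨M, f, hf⟩ := exists_uniform
    (fun k : G.S × G.A₁ × G.A₂ => if G.turn k.1 then G.δ₁ k.1 k.2.1 else G.δ₂ k.1 k.2.2) (by
      rintro ⟨s, a, b⟩ t
      by_cases h : G.turn s
      · simpa [h] using hrat.1 s a t
      · simpa [h] using hrat.2 s b t)
  let F : G.S → G.A₁ → G.A₂ → Fin (M+1) → G.S := fun s a b i => f (s, a, b) i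
  have hF : ∀ s a b t, Δ G s a b t =
      ∑ i, ((M+1 : ℕ) : ℝ≥0∞)⁻¹ * (if F s a b i = t then 1 else 0) := by
    intro s a b t
    rw [← hf (s, a, b) t]
    unfold Δ
    by_cases h : G.turn s <;> simp [h]
  refine ⟨DG G M F, il G M F, T G M F ⁻¹' φ, il_inj G M F, ⟨fun s a => ⟨_, rfl⟩,
    fun s b => ⟨_, rfl⟩⟩, T_measurable G M F hφ, ?_⟩
  intro Pr hPr Pr' hPr' s
  have hA := dirA hF φ hφ Pr hPr Pr' hPr' s
  have hB := dirB hF φ hφ Pr hPr Pr' hPr' s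
  have hA' : ∀ σ, ObsBased G σ → ∃ σ', ObsBased (DG G M F) σ' ∧
      (⨅ π, Pr s σ π φ) ≤ ⨅ π', Pr' (il G M F s) σ' π' (T G M F ⁻¹' φ) := by
    intro σ hσ
    obtain ⟨σ', h1, h2⟩ := hA σ hσ
    refine ⟨σ', h1, le_iInf fun π' => ?_⟩
    obtain ⟨π, h⟩ := h2 π'
    rw [← h]; exact iInf_le _ π
  have hB' : ∀ σ', ObsBased (DG G M F) σ' → ∃ σ, ObsBased G σ ∧
      (⨅ π', Pr' (il G M F s) σ' π' (T G M F ⁻¹' φ)) ≤ ⨅ π, Pr s σ π φ := by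
    intro σ' hσ
    obtain ⟨σ, h1, h2⟩ := hB σ' hσ
    refine ⟨σ, h1, le_iInf fun π => ?_⟩
    obtain ⟨π', h⟩ := h2 π
    rw [h]; exact iInf_le _ π'
  have hle : ∀ σ, ObsBased G σ → (⨅ π, Pr s σ π φ) ≤ val G Pr φ s := fun σ hσ =>
    le_iSup (fun σ : {σ : List G.S → PMF G.A₁ // ObsBased G σ} => ⨅ π, Pr s σ.1 π φ) ⟨σ, hσ⟩
  have hle' : ∀ σ', ObsBased (DG G M F) σ' →
      (⨅ π', Pr' (il G M F s) σ' π' (T G M F ⁻¹' φ)) ≤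
        val (DG G M F) Pr' (T G M F ⁻¹' φ) (il G M F s) := fun σ hσ =>
    le_iSup (fun σ : {σ : List (DG G M F).S → PMF (DG G M F).A₁ // ObsBased (DG G M F) σ} =>
      ⨅ π', Pr' (il G M F s) σ.1 π' (T G M F ⁻¹' φ)) ⟨σ, hσ⟩
  have hval : val G Pr φ s = val (DG G M F) Pr' (T G M F ⁻¹' φ) (il G M F s) := by
    apply le_antisymm
    · refine iSup_le fun σ => ?_
      obtain ⟨σ', h1, h2⟩ := hA' σ.1 σ.2
      exact h2.trans (hle' σ' h1)
    · refine iSup_le fun σ' => ?_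
      obtain ⟨σ, h1, h2⟩ := hB' σ'.1 σ'.2
      exact h2.trans (hle σ h1)
  refine ⟨⟨?_, ?_⟩, ⟨?_, ?_⟩, hval, ⟨?_, ?_⟩⟩
  · rintro ⟨σ, hσ, hw⟩
    obtain ⟨σ', h1, h2⟩ := hA σ hσ
    refine ⟨σ', h1, fun π' => ?_⟩
    obtain ⟨π, h⟩ := h2 π'
    rw [← h]; exact hw π
  · rintro ⟨σ', hσ, hw⟩
    obtain ⟨σ, h1, h2⟩ := hB σ' hσ
    refine ⟨σ, h1, fun π => ?_⟩
    obtain ⟨π', h⟩ := h2 π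
    rw [h]; exact hw π'
  · rintro ⟨σ, hσ, hw⟩
    obtain ⟨σ', h1, h2⟩ := hA σ hσ
    refine ⟨σ', h1, fun π' => ?_⟩
    obtain ⟨π, h⟩ := h2 π'
    rw [← h]; exact hw π
  · rintro ⟨σ', hσ, hw⟩
    obtain ⟨σ, h1, h2⟩ := hB σ' hσ
    refine ⟨σ, h1, fun π => ?_⟩
    obtain ⟨π', h⟩ := h2 π
    rw [h]; exact hw π'
  · rintro ⟨σ, hσ, hw⟩
    obtain ⟨σ', h1, h2⟩ := hA' σ hσ
    refine ⟨σ', h1, le_antisymm (hle' σ' h1) ?_⟩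
    rw [← hval, ← hw]; exact h2
  · rintro ⟨σ', hσ, hw⟩
    obtain ⟨σ, h1, h2⟩ := hB' σ' hσ
    refine ⟨σ, h1, le_antisymm (hle σ h1) ?_⟩
    rw [hval, ← hw]; exact h2

end Stmt17
end

section
/- The following decision problems about POMDPs are undecidable. Given as input a POMDP with state space Fin k, action set Fin m, rational transition probabilities, observation map obs : Fin k → Fin l, an initial state s, and a subset T of states: (a) decide whether there exists a randomized observation-based strategy σ with Pr_s^σ(coBuchi(T)) = 1; (b) decide whether there exists a randomized observation-based strategy σ with Pr_s^σ(Buchi(T)) > 0. Both problems are also undecidable when σ is restricted to pure observation-based strategies. Formally, for each of these four problems, the set of codes of yes-instances (under a standard encoding of the finite input data as natural numbers) is not a computable set. -/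
/-!
STATEMENT 18: undecidability, for POMDPs (given by finite rational data), of the
existence of a randomized (resp. pure) observation-based strategy that wins
almost-surely a coBüchi objective, resp. positively a Büchi objective.
-/

open scoped ENNReal

namespace Stmt18

/-- Finite input data of a POMDP instance: `k` states, `m` actions, `l` observations,
a table of rational transition probabilities (given as pairs numerator/denominator),
an observation table, an initial state and a target set of states. -/
structure PInst where
  k : ℕ
  m : ℕ
  l : ℕ
  dtable : List (List (List (ℕ × ℕ)))
  otable : List ℕ
  s0 : ℕ
  T : List ℕ

/-- Standard encoding of instances as natural numbers (via tuples and lists). -/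
def instEquiv : PInst ≃ ℕ × ℕ × ℕ × List (List (List (ℕ × ℕ))) × List ℕ × ℕ × List ℕ where
  toFun I := (I.k, I.m, I.l, I.dtable, I.otable, I.s0, I.T)
  invFun p := ⟨p.1, p.2.1, p.2.2.1, p.2.2.2.1, p.2.2.2.2.1, p.2.2.2.2.2.1, p.2.2.2.2.2.2⟩
  left_inv _ := rfl
  right_inv _ := rfl

instance : Primcodable PInst := Primcodable.ofEquiv _ instEquiv

open MeasureTheory

/-- The rational transition probability `δ(s, a)(t)` encoded in the instance. -/
noncomputable def dprob (I : PInst) (s a t : ℕ) : ℝ≥0∞ :=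
  (((((I.dtable.getD s []).getD a []).getD t (0, 1)).1 : ℝ≥0∞)) /
    (((((I.dtable.getD s []).getD a []).getD t (0, 1)).2 : ℝ≥0∞))

/-- The transition function of the instance, on states `Fin I.k` and actions `Fin I.m`. -/
noncomputable def δof (I : PInst) : Fin I.k → Fin I.m → Fin I.k → ℝ≥0∞ :=
  fun s a t => dprob I s a t

/-- The observation map of the instance. -/
def obsof (I : PInst) : Fin I.k → ℕ := fun s => I.otable.getD s 0

/-- Validity of the instance: positive numbers of states and actions, initial state and
observations in range, and each `δ(s, a)` a probability distribution. -/
def Valid (I : PInst) : Prop :=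
  0 < I.k ∧ 0 < I.m ∧ I.s0 < I.k ∧ (∀ o ∈ I.otable, o < I.l) ∧
    ∀ (s : Fin I.k) (a : Fin I.m), (∑' t : Fin I.k, δof I s a t) = 1

/-- The initial state of the instance. -/
def init (I : PInst) (hk : 0 < I.k) : Fin I.k := ⟨I.s0 % I.k, Nat.mod_lt _ hk⟩

/-- A (randomized) strategy, given by action weights. -/
def IsStrat {S A : Type} (σ : List S → A → ℝ≥0∞) : Prop := ∀ h, ∑' a, σ h a = 1

/-- A pure strategy plays a Dirac distribution after every history. -/
def IsPure {S A : Type} [DecidableEq A] (σ : List S → A → ℝ≥0∞) : Prop :=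
  ∀ h, ∃ a, ∀ b, σ h b = if b = a then 1 else 0

/-- An observation-based strategy only depends on the observation sequence. -/
def ObsBased {S A O : Type} (obs : S → O) (σ : List S → A → ℝ≥0∞) : Prop :=
  ∀ h h' : List S, h.map obs = h'.map obs → σ h = σ h'

/-- The cylinder set of infinite plays extending the finite prefix `l`. -/
def Cyl {α : Type} (l : List α) : Set (ℕ → α) := {ρ | ∀ i : Fin l.length, ρ i.1 = l.get i}

/-- Probability of observing the successive states `rest` after the history `hist ++ [cur]`. -/
noncomputable def listProb {S A : Type} (δ : S → A → S → ℝ≥0∞) (σ : List S → A → ℝ≥0∞) :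
    List S → S → List S → ℝ≥0∞
  | _, _, [] => 1
  | hist, cur, s' :: rest =>
      (∑' a, σ (hist ++ [cur]) a * δ cur a s') * listProb δ σ (hist ++ [cur]) s' rest

/-- `Pr` is the family of Ionescu–Tulcea play measures of the POMDP `δ`. -/
def IsPlayMeasure {S A : Type} [MeasurableSpace S] (δ : S → A → S → ℝ≥0∞)
    (Pr : S → (List S → A → ℝ≥0∞) → Measure (ℕ → S)) : Prop :=
  ∀ s σ, IsStrat σ →
    IsProbabilityMeasure (Pr s σ) ∧
      ∀ l : List S, Pr s σ (Cyl (s :: l)) = listProb δ σ [] s l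

/-- The Büchi objective: states in `T` are visited infinitely often. -/
def BuchiSet (I : PInst) : Set (ℕ → Fin I.k) :=
  {ρ | ∀ N, ∃ n, N ≤ n ∧ (ρ n : ℕ) ∈ I.T}

/-- The coBüchi objective: eventually only states in `T` are visited. -/
def CoBuchiSet (I : PInst) : Set (ℕ → Fin I.k) :=
  {ρ | ∃ N, ∀ n, N ≤ n → (ρ n : ℕ) ∈ I.T}

/-- Yes-instances of problem (a): existence of a randomized observation-based
almost-sure winning strategy for the coBüchi objective. -/
def YesCoBuchiAS (I : PInst) : Prop :=
  ∃ hk : 0 < I.k, Valid I ∧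
    ∀ Pr : Fin I.k → (List (Fin I.k) → Fin I.m → ℝ≥0∞) → Measure (ℕ → Fin I.k),
      IsPlayMeasure (δof I) Pr →
        ∃ σ, IsStrat σ ∧ ObsBased (obsof I) σ ∧ Pr (init I hk) σ (CoBuchiSet I) = 1

/-- Yes-instances of problem (b): existence of a randomized observation-based
positive winning strategy for the Büchi objective. -/
def YesBuchiPos (I : PInst) : Prop :=
  ∃ hk : 0 < I.k, Valid I ∧
    ∀ Pr : Fin I.k → (List (Fin I.k) → Fin I.m → ℝ≥0∞) → Measure (ℕ → Fin I.k),
      IsPlayMeasure (δof I) Pr →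
        ∃ σ, IsStrat σ ∧ ObsBased (obsof I) σ ∧ 0 < Pr (init I hk) σ (BuchiSet I)

/-- Problem (a) restricted to pure observation-based strategies. -/
def YesCoBuchiASPure (I : PInst) : Prop :=
  ∃ hk : 0 < I.k, Valid I ∧
    ∀ Pr : Fin I.k → (List (Fin I.k) → Fin I.m → ℝ≥0∞) → Measure (ℕ → Fin I.k),
      IsPlayMeasure (δof I) Pr →
        ∃ σ, IsStrat σ ∧ IsPure σ ∧ ObsBased (obsof I) σ ∧
          Pr (init I hk) σ (CoBuchiSet I) = 1

/-- Problem (b) restricted to pure observation-based strategies. -/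
def YesBuchiPosPure (I : PInst) : Prop :=
  ∃ hk : 0 < I.k, Valid I ∧
    ∀ Pr : Fin I.k → (List (Fin I.k) → Fin I.m → ℝ≥0∞) → Measure (ℕ → Fin I.k),
      IsPlayMeasure (δof I) Pr →
        ∃ σ, IsStrat σ ∧ IsPure σ ∧ ObsBased (obsof I) σ ∧
          0 < Pr (init I hk) σ (BuchiSet I)

section Machines
open Turing


theorem trNat_two_pow (n : ℕ) : PartrecToTM2.trNat (2 ^ n) =
    List.replicate n PartrecToTM2.Γ'.bit0 ++ [PartrecToTM2.Γ'.bit1] := by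
  have h : ∀ n : ℕ, ∃ p : PosNum, ((2 ^ n : ℕ) : Num) = Num.pos p ∧
      PartrecToTM2.trPosNum p =
        List.replicate n PartrecToTM2.Γ'.bit0 ++ [PartrecToTM2.Γ'.bit1] := by
    intro n
    induction n with
    | zero => exact ⟨1, rfl, rfl⟩
    | succ n ih =>
      obtain ⟨p, h1, h2⟩ := ih
      refine ⟨p.bit0, ?_, ?_⟩
      · rw [pow_succ, mul_two, Nat.cast_add, h1]
        have := Num.bit0_of_bit0 (Num.pos p)
        rw [this]; rfl
      · simp only [PartrecToTM2.trPosNum, h2, List.replicate_succ, List.cons_append]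
  obtain ⟨p, h1, h2⟩ := h n
  rw [PartrecToTM2.trNat, h1]
  exact h2

/-- a partial recursive function whose domain is undecidable, even on powers of two. -/
theorem exists_partrec : ∃ h : ℕ →. ℕ, Partrec h ∧
    ¬ ComputablePred fun n : ℕ => (h (2 ^ n)).Dom := by
  have hpow : Primrec (fun n : ℕ => 2 ^ n) := by
    have : Primrec (fun n : ℕ => Nat.rec (motive := fun _ => ℕ) 1 (fun _ y => 2 * y) n) :=
      Primrec.nat_rec₁ _ ((Primrec.nat_mul.comp (Primrec.const 2) Primrec.snd).to₂)
    refine this.of_eq ?_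
    intro n
    induction n with
    | zero => rfl
    | succ n ih =>
      simp only at ih ⊢
      rw [ih, pow_succ, mul_comm]
  let g : ℕ →. ℕ := fun m => Nat.rfind (fun k => Part.some (decide (2 ^ k = m)))
  have hg : Partrec g := by
    apply Partrec.rfind
    have : Computable₂ (fun (m k : ℕ) => decide (2 ^ k = m)) := by
      have : PrimrecPred (fun p : ℕ × ℕ => 2 ^ p.2 = p.1) :=
        Primrec.eq.comp (hpow.comp Primrec.snd) Primrec.fst
      exact (this.decide.to_comp).to₂
    exact this.partrec₂
  have hg2 : ∀ n, g (2 ^ n) = Part.some n := by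
    intro n
    apply Part.eq_some_iff.2
    apply Nat.mem_rfind.2
    constructor
    · simp
    · intro m hm
      simp only [Part.mem_some_iff]
      have : ¬ (2 ^ m = 2 ^ n) := fun h => by
        have := Nat.pow_right_injective (le_refl 2) h
        omega
      simp [this]
  refine ⟨fun m => (g m).bind fun k => Nat.Partrec.Code.eval (Denumerable.ofNat _ k) 0, ?_, ?_⟩
  · refine hg.bind ?_
    have := Nat.Partrec.Code.eval_part
    exact this.comp ((Computable.ofNat Nat.Partrec.Code).comp Computable.snd) (Computable.const 0)
  · intro hc
    apply ComputablePred.halting_problem 0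
    simp only [hg2, Part.bind_some] at hc
    refine ComputablePred.computable_of_manyOneReducible ?_ hc
    exact ⟨fun c => Encodable.encode c, Computable.encode, fun c => by simp⟩

set_option maxHeartbeats 1000000 in
theorem exists_tm : ∃ (Γ Λ : Type) (_ : Inhabited Γ) (_ : Inhabited Λ) (_ : Fintype Γ)
    (M : TM0.Machine Γ Λ) (S : Finset Λ) (x y c : Γ), TM0.Supports M (S : Set Λ) ∧
    ¬ ComputablePred fun n : ℕ => (TM0.eval M (x :: y :: List.replicate n c)).Dom := by
  classical
  obtain ⟨h, hh, hu⟩ := exists_partrec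
  have h' : Nat.Partrec' (fun v : List.Vector ℕ 1 => h v.head) :=
    Nat.Partrec'.part_iff₁.2 hh
  obtain ⟨code, hcode⟩ := ToPartrec.Code.exists_code h'
  let _ : Inhabited PartrecToTM2.Λ' := ⟨PartrecToTM2.trNormal code PartrecToTM2.Cont'.halt⟩
  let M2 : PartrecToTM2.Λ' → TM2.Stmt (fun _ : PartrecToTM2.K' => PartrecToTM2.Γ')
    PartrecToTM2.Λ' (Option PartrecToTM2.Γ') := PartrecToTM2.tr
  have ss : TM2.Supports M2 _ := PartrecToTM2.tr_supports code PartrecToTM2.Cont'.halt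
  have s1 := TM2to1.tr_supports _ ss
  have s0 := TM1to0.tr_supports _ s1
  let al : PartrecToTM2.Γ' → TM2to1.Γ' PartrecToTM2.K' (fun _ => PartrecToTM2.Γ') :=
    fun a => (false, Function.update (fun _ => none) PartrecToTM2.K'.main (some a))
  let _ : Fintype PartrecToTM2.K' :=
    ⟨{PartrecToTM2.K'.main, PartrecToTM2.K'.rev, PartrecToTM2.K'.aux, PartrecToTM2.K'.stack},
      by intro x; cases x <;> simp⟩
  refine ⟨TM2to1.Γ' PartrecToTM2.K' (fun _ => PartrecToTM2.Γ'), _, inferInstance, inferInstance,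
    inferInstance, _, _,
    (true, (al PartrecToTM2.Γ'.cons).2), al PartrecToTM2.Γ'.bit1, al PartrecToTM2.Γ'.bit0, s0, ?_⟩
  intro hc
  apply hu
  refine hc.of_eq ?_
  intro n
  have e1 : ((true, (al PartrecToTM2.Γ'.cons).2) :: al PartrecToTM2.Γ'.bit1 ::
      List.replicate n (al PartrecToTM2.Γ'.bit0)) =
      TM2to1.trInit (Γ := fun _ => PartrecToTM2.Γ') PartrecToTM2.K'.main
        (PartrecToTM2.trList [2 ^ n]) := by
    have e0 : (PartrecToTM2.trList [2 ^ n]).reverse = PartrecToTM2.Γ'.cons ::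
        PartrecToTM2.Γ'.bit1 :: List.replicate n PartrecToTM2.Γ'.bit0 := by
      simp [PartrecToTM2.trList, trNat_two_pow]
    unfold TM2to1.trInit
    have e00 : (PartrecToTM2.trList [2 ^ n]).reverse.map al = al PartrecToTM2.Γ'.cons ::
        al PartrecToTM2.Γ'.bit1 :: List.replicate n (al PartrecToTM2.Γ'.bit0) := by
      rw [e0, List.map_cons, List.map_cons, List.map_replicate]
    exact (congrArg (fun L => (true, L.headI.2) :: L.tail) e00).symm
  have e2 : (TM2.init PartrecToTM2.K'.main (PartrecToTM2.trList [2 ^ n]) :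
      TM2.Cfg (fun _ : PartrecToTM2.K' => PartrecToTM2.Γ') PartrecToTM2.Λ'
        (Option PartrecToTM2.Γ')) = PartrecToTM2.init code [2 ^ n] := by
    simp only [TM2.init, PartrecToTM2.init]
    congr 1
    funext k
    cases k <;> rfl
  have e3 := hcode ⟨[2 ^ n], rfl⟩
  have e4 := PartrecToTM2.tr_eval code [2 ^ n]
  refine Iff.trans (iff_of_eq (congrArg (fun l => (TM0.eval _ l).Dom) e1)) ?_
  refine Iff.trans (iff_of_eq (congrArg Part.Dom (TM1to0.tr_eval _ _))) ?_
  refine Iff.trans (TM2to1.tr_eval_dom _ _ _) ?_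
  have e5 : (TM2.eval M2 PartrecToTM2.K'.main (PartrecToTM2.trList [2 ^ n])).Dom ↔
    (StateTransition.eval (TM2.step PartrecToTM2.tr) (PartrecToTM2.init code [2 ^ n])).Dom := by
    rw [← e2]; rfl
  refine e5.trans ?_
  rw [e4]
  simp only at e3
  rw [e3]
  rfl

theorem exists_tm_fin : ∃ (Γ Λ : Type) (_ : Inhabited Γ) (_ : Inhabited Λ) (_ : Fintype Γ)
    (_ : Fintype Λ) (M : TM0.Machine Γ Λ) (x y c : Γ),
    ¬ ComputablePred fun n : ℕ =>
      (StateTransition.eval (TM0.step M) (TM0.init (x :: y :: List.replicate n c))).Dom := by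
  classical
  obtain ⟨Γ, Λ, i1, i2, i3, M, S, x, y, c, hS, hM⟩ := exists_tm
  let d0 : {q // q ∈ S} := ⟨default, hS.1⟩
  let i4 : Inhabited {q // q ∈ S} := ⟨d0⟩
  let M' : TM0.Machine Γ {q // q ∈ S} := fun q a =>
    (M q.1 a).map fun p => (if h : p.1 ∈ S then ⟨p.1, h⟩ else d0, p.2)
  refine ⟨Γ, {q // q ∈ S}, i1, i4, i3, inferInstance, M', x, y, c, ?_⟩
  intro hc
  apply hM
  refine hc.of_eq ?_
  intro n
  have hr : StateTransition.Respects (TM0.step M') (TM0.step M)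
      (fun (a : TM0.Cfg Γ {q // q ∈ S}) (b : TM0.Cfg Γ Λ) => a.q.1 = b.q ∧ a.Tape = b.Tape) := by
    rintro ⟨q, t⟩ ⟨q', t'⟩ ⟨h1, h2⟩
    simp only at h1 h2
    subst h1; subst h2
    simp only [TM0.step, M']
    cases hm : M q.1 t.head with
    | none => simp
    | some p =>
      obtain ⟨q2, st⟩ := p
      have hq2 : q2 ∈ S := hS.2 (Option.mem_def.2 hm) q.2
      simp only [Option.map_some, hq2, dif_pos]
      refine ⟨⟨q2, _⟩, ⟨rfl, rfl⟩, ?_⟩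
      apply Relation.TransGen.single
      simp only [TM0.step, hm]
      rfl
  have := StateTransition.tr_eval_dom hr (a₁ := TM0.init (x :: y :: List.replicate n c))
    (a₂ := TM0.init (x :: y :: List.replicate n c)) ⟨rfl, rfl⟩
  rw [← this]
  rfl

/-- control states of the queue machine -/
inductive Ctl (Γ Λ : Type) : Type
  | scan (q : Λ) (p : Option Γ) : Ctl Γ Λ
  | right (q : Λ) : Ctl Γ Λ
  | pass (q : Λ) : Ctl Γ Λ
  | halt : Ctl Γ Λ

instance {Γ Λ : Type} [Finite Γ] [Finite Λ] : Finite (Ctl Γ Λ) := by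
  let f : (Λ × Option Γ) ⊕ (Λ ⊕ Λ ⊕ Unit) → Ctl Γ Λ := fun x => match x with
    | Sum.inl (q, p) => Ctl.scan q p
    | Sum.inr (Sum.inl q) => Ctl.right q
    | Sum.inr (Sum.inr (Sum.inl q)) => Ctl.pass q
    | Sum.inr (Sum.inr (Sum.inr _)) => Ctl.halt
  apply Finite.of_surjective f
  intro c
  cases c with
  | scan q p => exact ⟨Sum.inl (q, p), rfl⟩
  | right q => exact ⟨Sum.inr (Sum.inl q), rfl⟩
  | pass q => exact ⟨Sum.inr (Sum.inr (Sum.inl q)), rfl⟩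
  | halt => exact ⟨Sum.inr (Sum.inr (Sum.inr ())), rfl⟩

/-- one step of a queue machine: pop the first letter, push a word at the end. -/
def qstep {Q A : Type} (tr : Q → A → Q × List A) : Q × List A → Q × List A
  | (q, []) => (q, [])
  | (q, a :: w) => ((tr q a).1, w ++ (tr q a).2)

theorem qstep_iter_nil {Q A : Type} (tr : Q → A → Q × List A) (n : ℕ) (q : Q) :
    (qstep tr)^[n] (q, []) = (q, []) := by
  induction n with
  | zero => rfl
  | succ n ih => rw [Function.iterate_succ_apply]; exact ih

section TMQ
variable {Γ Λ : Type} [Inhabited Γ] [Inhabited Λ]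

/-- unmarked letter -/
def uu (g : Γ) : Option (Γ × Bool) := some (g, false)

/-- transitions of the queue machine simulating a Turing machine -/
def qtr (M : TM0.Machine Γ Λ) : Ctl Γ Λ → Option (Γ × Bool) → Ctl Γ Λ × List (Option (Γ × Bool))
  | .scan q p, some (g, false) => (.scan q (some g), p.toList.map uu)
  | .scan q p, some (g, true) =>
    match M q g with
    | none => (.halt, [])
    | some (q', TM0.Stmt.write b) => (.pass q', p.toList.map uu ++ [some (b, true)])
    | some (q', TM0.Stmt.move Dir.right) => (.right q', p.toList.map uu ++ [uu g])
    | some (q', TM0.Stmt.move Dir.left) => (.pass q', [some (p.getD default, true), uu g])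
  | .scan _ _, none => (.halt, [])
  | .right q, some (g, _) => (.pass q, [some (g, true)])
  | .right q, none => (.scan q none, [some (default, true), none])
  | .pass q, some (g, _) => (.pass q, [uu g])
  | .pass q, none => (.scan q none, [none])
  | .halt, _ => (.halt, [])

variable (M : TM0.Machine Γ Λ)

/-- reachability for the queue machine -/
def Rch (c d : Ctl Γ Λ × List (Option (Γ × Bool))) : Prop := ∃ n, (qstep (qtr M))^[n] c = d

variable {M}

theorem Rch.refl (c) : Rch M c c := ⟨0, rfl⟩
theorem Rch.trans {c d e} (h : Rch M c d) (h' : Rch M d e) : Rch M c e := by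
  obtain ⟨n, rfl⟩ := h
  obtain ⟨m, rfl⟩ := h'
  exact ⟨m + n, by rw [Function.iterate_add_apply]⟩
theorem Rch.head {c e} (h' : Rch M (qstep (qtr M) c) e) : Rch M c e := by
  obtain ⟨m, rfl⟩ := h'
  exact ⟨m + 1, by rw [Function.iterate_succ_apply]⟩

theorem rch_pass (q : Λ) (R : List Γ) (X : List (Option (Γ × Bool))) :
    Rch M (.pass q, R.map uu ++ none :: X) (.scan q none, X ++ R.map uu ++ [none]) := by
  induction R generalizing X with
  | nil => exact Rch.head (by simpa [qstep, qtr] using Rch.refl _)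
  | cons r R ih =>
    apply Rch.head
    have := ih (X ++ [uu r])
    simpa [qstep, qtr, uu] using this

theorem rch_scan1 (q : Λ) (r : Γ) (A : List Γ) (p : Γ) (X : List (Option (Γ × Bool))) :
    Rch M (.scan q (some r), A.map uu ++ uu p :: X) (.scan q (some p), X ++ uu r :: A.map uu) := by
  induction A generalizing r X with
  | nil => exact Rch.head (by simpa [qstep, qtr, uu] using Rch.refl _)
  | cons a A ih =>
    apply Rch.head
    have := ih a (X ++ [uu r])
    simpa [qstep, qtr, uu] using this

theorem rch_scan (q : Λ) (A : List Γ) (p : Γ) (X : List (Option (Γ × Bool))) :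
    Rch M (.scan q none, A.map uu ++ uu p :: X) (.scan q (some p), X ++ A.map uu) := by
  cases A with
  | nil => exact Rch.head (by simpa [qstep, qtr, uu] using Rch.refl _)
  | cons a A =>
    apply Rch.head
    have := rch_scan1 (M := M) q a A p X
    simpa [qstep, qtr, uu] using this

theorem rch_halt (w : List (Option (Γ × Bool))) : Rch M (.halt, w) (.halt, []) := by
  induction w with
  | nil => exact Rch.refl _
  | cons a w ih => exact Rch.head (by simpa [qstep, qtr] using ih)

/-- the queue configuration of a tape -/
def qcfg (q : Λ) (L : List Γ) (h : Γ) (R : List Γ) : Ctl Γ Λ × List (Option (Γ × Bool)) :=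
  (.scan q none, L.reverse.map uu ++ some (h, true) :: (R.map uu ++ [none]))

/-- simulation relation -/
def QTr (c : TM0.Cfg Γ Λ) (d : Ctl Γ Λ × List (Option (Γ × Bool))) : Prop :=
  ∃ q L h R, c = ⟨q, ⟨h, ListBlank.mk L, ListBlank.mk R⟩⟩ ∧ d = qcfg q L h R

theorem rch_head (q : Λ) (L : List Γ) (h : Γ) (R : List Γ) :
    Rch M (qcfg q L h R) (.scan q L.head?, some (h, true) :: (R.map uu ++ none ::
      L.tail.reverse.map uu)) := by
  cases L with
  | nil => simpa [qcfg] using Rch.refl _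
  | cons p L =>
    have := rch_scan (M := M) q L.reverse p (some (h, true) :: (R.map uu ++ [none]))
    simpa [qcfg] using this

theorem qtr_none {c d} (hcd : QTr c d) (h : TM0.step M c = none) : Rch M d (.halt, []) := by
  obtain ⟨q, L, a, R, rfl, rfl⟩ := hcd
  refine (rch_head q L a R).trans ?_
  simp only [TM0.step, Option.map_eq_none_iff] at h
  apply Rch.head
  simp only [qstep, qtr, h]
  exact rch_halt _

theorem qtr_some {c c' d} (hcd : QTr c d) (h : TM0.step M c = some c') :
    ∃ d' d1, QTr c' d' ∧ Rch M d d1 ∧ Rch M (qstep (qtr M) d1) d' := by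
  obtain ⟨q, L, a, R, rfl, rfl⟩ := hcd
  simp only [TM0.step, Option.map_eq_some_iff] at h
  obtain ⟨⟨q', st⟩, h1, rfl⟩ := h
  have hh := rch_head (M := M) q L a R
  cases st with
  | write b =>
    refine ⟨qcfg q' L b R, _, ⟨q', L, b, R, rfl, rfl⟩, hh, ?_⟩
    simp only [qstep, qtr, h1]
    have := rch_pass (M := M) q' R (L.tail.reverse.map uu ++ (L.head?.toList.map uu ++
      [some (b, true)]))
    cases L <;> simpa [qcfg] using this
  | move dir =>
    cases dir with
    | left =>
      refine ⟨qcfg q' L.tail L.headI (a :: R), _, ⟨q', L.tail, L.headI, a :: R, ?_, rfl⟩, hh, ?_⟩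
      · simp [Tape.move]
      · simp only [qstep, qtr, h1]
        have := rch_pass (M := M) q' R (L.tail.reverse.map uu ++ [some (L.headI, true), uu a])
        cases L <;> simpa [qcfg] using this
    | right =>
      refine ⟨qcfg q' (a :: L) R.headI R.tail, _, ⟨q', a :: L, R.headI, R.tail, ?_, rfl⟩, hh, ?_⟩
      · simp [Tape.move]
      · simp only [qstep, qtr, h1]
        cases R with
        | nil =>
          apply Rch.head
          have := Rch.refl (M := M) (qcfg q' (a :: L) default [])
          cases L <;> simpa [qstep, qtr, qcfg] using this
        | cons r R =>
          apply Rch.head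
          have := rch_pass (M := M) q' R (L.tail.reverse.map uu ++ (L.head?.toList.map uu ++
            [uu a, some (r, true)]))
          cases L <;> simpa [qstep, qtr, qcfg, uu] using this

theorem QTr.ne {c : TM0.Cfg Γ Λ} {d} (h : QTr c d) : d.2 ≠ [] := by
  obtain ⟨q, L, a, R, rfl, rfl⟩ := h
  simp [qcfg]

theorem halts_rch {c c'} (h : StateTransition.Reaches (TM0.step M) c c')
    (h' : TM0.step M c' = none) {d} (hd : QTr c d) : Rch M d (.halt, []) := by
  induction h using Relation.ReflTransGen.head_induction_on generalizing d with
  | refl => exact qtr_none hd h'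
  | head h1 _ ih =>
    obtain ⟨d', d1, h2, h3, h4⟩ := qtr_some hd (Option.mem_def.1 h1)
    exact (h3.trans (Rch.head h4)).trans (ih h2)

theorem rch_halts (n : ℕ) : ∀ {c d}, QTr c d → ((qstep (qtr M))^[n] d).2 = [] →
    (StateTransition.eval (TM0.step M) c).Dom := by
  induction n using Nat.strong_induction_on with
  | _ n ih =>
    intro c d hcd hn
    cases hs : TM0.step M c with
    | none => exact Part.dom_iff_mem.2 ⟨c, StateTransition.mem_eval.2 ⟨.refl, hs⟩⟩
    | some c' =>
      obtain ⟨d', d1, h2, ⟨k1, h3⟩, ⟨k2, h4⟩⟩ := qtr_some hcd hs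
      have h5 : (qstep (qtr M))^[k2 + (1 + k1)] d = d' := by
        rw [Function.iterate_add_apply, Function.iterate_add_apply, h3]; exact h4
      have h6 : k2 + (1 + k1) ≤ n := by
        by_contra hlt
        push Not at hlt
        obtain ⟨j, hj⟩ := Nat.exists_eq_add_of_lt hlt
        apply h2.ne
        rw [← h5, hj, show n + j + 1 = (j + 1) + n by omega, Function.iterate_add_apply]
        rcases hx : (qstep (qtr M))^[n] d with ⟨u, w⟩
        rw [hx] at hn
        simp only at hn
        subst hn
        rw [qstep_iter_nil]
      obtain ⟨j, hj⟩ := Nat.exists_eq_add_of_le h6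
      have h7 := ih j (by omega) h2 (by
        rw [← h5, ← Function.iterate_add_apply, Nat.add_comm, ← hj]; exact hn)
      obtain ⟨b, hb⟩ := Part.dom_iff_mem.1 h7
      rw [StateTransition.mem_eval] at hb
      exact Part.dom_iff_mem.2 ⟨b, StateTransition.mem_eval.2
        ⟨Relation.ReflTransGen.head (Option.mem_def.2 hs) hb.1, hb.2⟩⟩
end TMQ

theorem exists_queue : ∃ (Q A : Type) (_ : Fintype Q) (_ : Fintype A) (hlt : Q)
    (tr : Q → A → Q × List A) (q0 : Q) (x y c e : A) (H : ℕ → Prop),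
    ¬ ComputablePred H ∧
    (∀ n, H n → ∃ k, (qstep tr)^[k] (q0, x :: y :: List.replicate n c ++ [e]) = (hlt, [])) ∧
    (∀ n k, ((qstep tr)^[k] (q0, x :: y :: List.replicate n c ++ [e])).2 = [] → H n) := by
  obtain ⟨Γ, Λ, i1, i2, i3, i4, M, x, y, c, h⟩ := exists_tm_fin
  refine ⟨Ctl Γ Λ, Option (Γ × Bool), Fintype.ofFinite _, inferInstance, .halt, qtr M,
    .scan default none, some (x, true), uu y, uu c, none, _, h, ?_, ?_⟩
  all_goals
    intro n
    have hq : QTr (TM0.init (x :: y :: List.replicate n c) : TM0.Cfg Γ Λ)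
        (.scan default none, some (x, true) :: uu y :: List.replicate n (uu c) ++ [none]) :=
      ⟨default, [], x, y :: List.replicate n c, by
        simp [TM0.init, Tape.mk₁, Tape.mk₂, Tape.mk'], by simp [qcfg]⟩
  · intro hd
    obtain ⟨b, hb⟩ := Part.dom_iff_mem.1 hd
    rw [StateTransition.mem_eval] at hb
    exact halts_rch hb.1 hb.2 hq
  · intro k hk
    exact rch_halts k hq hk

/-- action of a letter on a vector -/
def vstep {R : Type} (a : R → Fin 5 → Fin 5 → ℕ) (v : Fin 5 → ℕ) (r : R) : Fin 5 → ℕ :=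
  fun j => ∑ i, v i * a r i j

/-- the starting vector -/
def eP : Fin 5 → ℕ := ![0, 0, 0, 1, 0]

/-- first quadratic form -/
def GG (v : Fin 5 → ℕ) : ℕ := v 0 * v 0 + 4 * (v 1 * v 2)

/-- second quadratic form -/
def BB (v : Fin 5 → ℕ) : ℕ := 2 * (v 1 * v 1) + 2 * (v 2 * v 2)

section Num
variable {Q A : Type} (tr : Q → A → Q × List A) (cq : Q → ℕ) (ca : A → ℕ) (Qn B : ℕ)

/-- value of a word in base `B`, least significant first -/
def nm : List A → ℕ
  | [] => 0
  | a :: w => ca a + B * nm w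

theorem nm_append (w v : List A) : nm ca B (w ++ v) = nm ca B w + B ^ w.length * nm ca B v := by
  induction w with
  | nil => simp [nm]
  | cons a w ih => simp only [List.cons_append, nm, ih, List.length_cons, pow_succ]; ring

/-- the matrices -/
def mt (U0 W0 : ℕ) : Option (Q × A) → Fin 5 → Fin 5 → ℕ
  | none => ![![0, 0, 0, 0, 0], ![0, 0, 0, 0, 0], ![0, 0, 0, 0, 0], ![1, U0, 0, 1, W0],
      ![0, 0, 0, 0, 0]]
  | some (q, a) => ![![1, 0, 0, 0, 0], ![0, 1, 0, 0, 0], ![0, 0, 1, 0, 0],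
      ![0, cq (tr q a).1 * B, cq q + Qn * ca a, B, 0],
      ![0, Qn * nm ca B (tr q a).2, 0, 0, B ^ (tr q a).2.length]]

/-- the vector represents a configuration -/
def IsConf (c : Q × List A) (m : ℕ) (v : Fin 5 → ℕ) : Prop :=
  v 0 = 1 ∧ v 1 = v 2 + B ^ m * (cq c.1 + Qn * nm ca B c.2) ∧ v 3 = B ^ m ∧
    v 4 = B ^ (m + c.2.length)

/-- the vector is the result of an incorrect simulation -/
def Broken (v : Fin 5 → ℕ) : Prop :=
  v 0 = 1 ∧ ∃ m, B ^ m ∣ v 3 ∧ B ^ m ∣ v 4 ∧ ¬ ((B ^ m : ℕ) : ℤ) ∣ (v 1 : ℤ) - v 2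

variable {tr cq ca Qn B}

theorem mt_comp {U0 W0 : ℕ → ℕ} (hU : Computable U0) (hW : Computable W0) (r : Option (Q × A))
    (i j : Fin 5) : Computable fun n => mt tr cq ca Qn B (U0 n) (W0 n) r i j := by
  rcases r with _ | ⟨q, a⟩
  · fin_cases i <;> fin_cases j <;> first | exact hU | exact hW | exact Computable.const _
  · exact Computable.const _

theorem vstep_rule {U0 W0 : ℕ} (v : Fin 5 → ℕ) (q : Q) (a : A) :
    vstep (mt tr cq ca Qn B U0 W0) v (some (q, a)) =
      ![v 0, v 1 + v 3 * (cq (tr q a).1 * B) + v 4 * (Qn * nm ca B (tr q a).2),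
        v 2 + v 3 * (cq q + Qn * ca a), v 3 * B, v 4 * B ^ (tr q a).2.length] := by
  funext j
  fin_cases j <;> simp [vstep, mt, Fin.sum_univ_five]

theorem vstep_load {U0 W0 : ℕ} (v : Fin 5 → ℕ) :
    vstep (mt tr cq ca Qn B U0 W0) v none =
      ![v 3, v 3 * U0, 0, v 3, v 3 * W0] := by
  funext j
  fin_cases j <;> simp [vstep, mt, Fin.sum_univ_five]

theorem conf_step {U0 W0 m : ℕ} {v : Fin 5 → ℕ} {q : Q} {a : A} {w : List A}
    (h : IsConf cq ca Qn B (q, a :: w) m v) :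
    IsConf cq ca Qn B (qstep tr (q, a :: w)) (m + 1)
      (vstep (mt tr cq ca Qn B U0 W0) v (some (q, a))) := by
  obtain ⟨h0, h1, h3, h4⟩ := h
  rw [vstep_rule]
  refine ⟨h0, ?_, ?_, ?_⟩
  · simp [h1, h3, h4, qstep, nm, nm_append, pow_succ, pow_add]; ring
  · simp [h3, pow_succ]
  · simp [h4, qstep, pow_succ, pow_add]; ring

theorem broken_step {U0 W0 : ℕ} {v : Fin 5 → ℕ} (q : Q) (a : A) (h : Broken B v) :
    Broken B (vstep (mt tr cq ca Qn B U0 W0) v (some (q, a))) := by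
  obtain ⟨h0, m, h3, h4, h5⟩ := h
  rw [vstep_rule]
  refine ⟨h0, m, ?_, ?_, ?_⟩
  · exact Dvd.dvd.mul_right h3 _
  · exact Dvd.dvd.mul_right h4 _
  · intro h6
    apply h5
    have h3' : ((B ^ m : ℕ) : ℤ) ∣ (v 3 : ℤ) := Int.natCast_dvd_natCast.2 h3
    have h4' : ((B ^ m : ℕ) : ℤ) ∣ (v 4 : ℤ) := Int.natCast_dvd_natCast.2 h4
    have h7 := (h6.sub (h3'.mul_right ((cq (tr q a).1 * B : ℤ) - (cq q + Qn * ca a)))).sub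
      (h4'.mul_right (Qn * nm ca B (tr q a).2 : ℤ))
    have h8 : (v 1 : ℤ) - v 2 = ((v 1 + v 3 * (cq (tr q a).1 * B) + v 4 * (Qn * nm ca B (tr q a).2)
        : ℕ) : ℤ) - ((v 2 + v 3 * (cq q + Qn * ca a) : ℕ) : ℤ)
        - v 3 * ((cq (tr q a).1 * B : ℤ) - (cq q + Qn * ca a))
        - v 4 * (Qn * nm ca B (tr q a).2 : ℤ) := by
      push_cast
      ring
    rw [h8]
    exact h7

theorem conf_wrong {U0 W0 m : ℕ} {v : Fin 5 → ℕ} {q : Q} {a : A} {w : List A} (hB : 0 < B)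
    (h : IsConf cq ca Qn B (q, a :: w) m v) (q1 : Q) (a1 : A)
    (hne : cq q + Qn * ca a ≠ cq q1 + Qn * ca a1)
    (hl : cq q + Qn * ca a < B) (hl1 : cq q1 + Qn * ca a1 < B) :
    Broken B (vstep (mt tr cq ca Qn B U0 W0) v (some (q1, a1))) := by
  obtain ⟨h0, h1, h3, h4⟩ := h
  rw [vstep_rule]
  refine ⟨h0, m + 1, ?_, ?_, ?_⟩
  · simp [h3, pow_succ]
  · simp only [Matrix.cons_val, h4, List.length_cons]
    exact ⟨B ^ w.length * B ^ (tr q1 a1).2.length, by ring⟩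
  · intro h6
    simp only [Matrix.cons_val, h1, h3, h4, List.length_cons, nm] at h6
    have h7 : ((B ^ m : ℕ) : ℤ) * (B : ℤ) ∣ ((B ^ m : ℕ) : ℤ) *
        (((cq q + Qn * ca a : ℕ) : ℤ) - ((cq q1 + Qn * ca a1 : ℕ) : ℤ) + B * (Qn * nm ca B w
          + cq (tr q1 a1).1 + B ^ w.length * (Qn * nm ca B (tr q1 a1).2))) := by
      convert h6 using 1
      · push_cast; ring
      · push_cast; ring
    have h8 := Int.dvd_of_mul_dvd_mul_left (by positivity) h7
    have h9 := (Int.dvd_add_left (Dvd.intro _ rfl)).1 h8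
    apply hne
    have h10 := Int.eq_zero_of_abs_lt_dvd h9 (by rw [abs_lt]; constructor <;> omega)
    omega

variable (tr cq ca Qn B) in
/-- invariant of words when the machine never stops -/
def Inv (c0 : Q × List A) (v : Fin 5 → ℕ) : Prop :=
  v 0 = 0 ∨ ∃ (c : ℕ) (u : Fin 5 → ℕ), (∀ j, v j = c * u j) ∧
    (Broken B u ∨ ∃ k m, IsConf cq ca Qn B ((qstep tr)^[k] c0) m u)

theorem inv_step {c0 : Q × List A} {v : Fin 5 → ℕ} (hB : 0 < B)
    (hinj : ∀ q a q1 a1, cq q + Qn * ca a = cq q1 + Qn * ca a1 → q = q1 ∧ a = a1)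
    (hlt : ∀ q a, cq q + Qn * ca a < B)
    (hnon : ∀ k, ((qstep tr)^[k] c0).2 ≠ []) (h : Inv tr cq ca Qn B c0 v)
    (r : Option (Q × A)) :
    Inv tr cq ca Qn B c0 (vstep (mt tr cq ca Qn B (cq c0.1 + Qn * nm ca B c0.2)
      (B ^ c0.2.length)) v r) := by
  rcases r with _ | ⟨q, a⟩
  · right
    refine ⟨v 3, ![1, cq c0.1 + Qn * nm ca B c0.2, 0, 1, B ^ c0.2.length], ?_, Or.inr ⟨0, 0, ?_⟩⟩
    · rw [vstep_load]
      intro j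
      fin_cases j <;> simp
    · simp [IsConf]
  · rcases h with h | ⟨c, u, h1, h2⟩
    · left; rw [vstep_rule]; exact h
    · right
      refine ⟨c, vstep (mt tr cq ca Qn B (cq c0.1 + Qn * nm ca B c0.2)
        (B ^ c0.2.length)) u (some (q, a)), ?_, ?_⟩
      · intro j
        simp only [vstep, h1, Finset.mul_sum]
        refine Finset.sum_congr rfl fun i _ => by ring
      · rcases h2 with h2 | ⟨k, m, h2⟩
        · left; exact broken_step q a h2
        · have hk := hnon k
          rcases hx : (qstep tr)^[k] c0 with ⟨q1, _ | ⟨a1, w⟩⟩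
          · rw [hx] at hk; exact absurd rfl hk
          · rw [hx] at h2
            by_cases he : cq q1 + Qn * ca a1 = cq q + Qn * ca a
            · obtain ⟨rfl, rfl⟩ := hinj _ _ _ _ he
              right
              refine ⟨k + 1, m + 1, ?_⟩
              rw [Function.iterate_succ_apply', hx]
              exact conf_step h2
            · left
              exact conf_wrong hB h2 q a he (hlt _ _) (hlt _ _)

theorem inv_le {c0 : Q × List A} {v : Fin 5 → ℕ} (hB : 0 < B) (hQ : 0 < Qn)
    (hca : ∀ a, 0 < ca a)
    (hnon : ∀ k, ((qstep tr)^[k] c0).2 ≠ []) (h : Inv tr cq ca Qn B c0 v) : GG v ≤ BB v := by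
  have key : ∀ x y : ℕ, 4 * (x * y) ≤ 2 * (x * x) + 2 * (y * y) := fun x y => by
    zify; nlinarith [sq_nonneg ((x : ℤ) - y)]
  rcases h with h | ⟨c, u, h1, h2⟩
  · simp only [GG, BB, h]; have := key (v 1) (v 2); omega
  · have hu : u 0 = 1 ∧ u 1 ≠ u 2 := by
      rcases h2 with ⟨h0, m, h3, h4, h5⟩ | ⟨k, m, h0, h3, h4⟩
      · refine ⟨h0, fun h => h5 ?_⟩
        rw [h]; simp
      · refine ⟨h0, fun h => ?_⟩
        have hk := hnon k
        have h6 : 0 < nm ca B ((qstep tr)^[k] c0).2 := by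
          rcases hx : ((qstep tr)^[k] c0).2 with _ | ⟨a, w⟩
          · exact absurd hx hk
          · simp only [nm]; have := hca a; omega
        have h7 : 0 < B ^ m * (cq ((qstep tr)^[k] c0).1 + Qn * nm ca B ((qstep tr)^[k] c0).2) := by
          positivity
        omega
    have h3 : 1 + 4 * (u 1 * u 2) ≤ 2 * (u 1 * u 1) + 2 * (u 2 * u 2) := by
      have h4 : (u 1 : ℤ) - u 2 ≠ 0 := by have := hu.2; omega
      have h5 : 0 < ((u 1 : ℤ) - u 2) ^ 2 := by positivity
      zify; nlinarith
    have h6 := Nat.mul_le_mul_left (c * c) h3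
    simp only [GG, BB, h1, hu.1]
    calc _ = c * c * (1 + 4 * (u 1 * u 2)) := by ring
      _ ≤ _ := h6
      _ = _ := by ring

theorem conf_reach (c0 : Q × List A) (k : ℕ) :
    ∃ (w : List (Option (Q × A))) (m : ℕ), IsConf cq ca Qn B ((qstep tr)^[k] c0) m
      (w.foldl (vstep (mt tr cq ca Qn B (cq c0.1 + Qn * nm ca B c0.2)
      (B ^ c0.2.length))) eP) := by
  induction k with
  | zero =>
    refine ⟨[none], 0, ?_⟩
    simp only [List.foldl_cons, List.foldl_nil]
    rw [vstep_load]
    simp [IsConf, eP]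
  | succ k ih =>
    obtain ⟨w, m, h⟩ := ih
    rw [Function.iterate_succ_apply']
    rcases hx : (qstep tr)^[k] c0 with ⟨q1, _ | ⟨a1, w1⟩⟩
    · rw [hx] at h
      exact ⟨w, m, h⟩
    · rw [hx] at h
      refine ⟨w ++ [some (q1, a1)], m + 1, ?_⟩
      rw [List.foldl_append]
      exact conf_step h
end Num

theorem exists_mat : ∃ (R : Type) (_ : Fintype R) (a : ℕ → R → Fin 5 → Fin 5 → ℕ) (H : ℕ → Prop),
    ¬ ComputablePred H ∧ (∀ r i j, Computable fun n => a n r i j) ∧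
    (∀ n, H n → ∃ w : List R, BB (w.foldl (vstep (a n)) eP) < GG (w.foldl (vstep (a n)) eP)) ∧
    (∀ n, ¬ H n → ∀ w : List R,
      GG (w.foldl (vstep (a n)) eP) ≤ BB (w.foldl (vstep (a n)) eP)) := by
  classical
  obtain ⟨Q, A, i1, i2, hlt, tr, q0, x, y, c, e, H, hH, h1, h2⟩ := exists_queue
  let eq := Fintype.equivFin Q
  let ea := Fintype.equivFin A
  let cq : Q → ℕ := fun q => if q = hlt then 0 else 1 + (eq q : ℕ)
  let ca : A → ℕ := fun a => 1 + (ea a : ℕ)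
  let Qn := Fintype.card Q + 1
  let B := Qn * (Fintype.card A + 1)
  have hcq : ∀ q, cq q < Qn := fun q => by
    simp only [cq, Qn]; split_ifs
    · omega
    · have := (eq q).2; omega
  have hcqi : ∀ q q', cq q = cq q' → q = q' := fun q q' h => by
    simp only [cq] at h
    split_ifs at h with h3 h4 h4
    · rw [h3, h4]
    · omega
    · omega
    · exact eq.injective (Fin.ext (by omega))
  have hcai : ∀ q q', ca q = ca q' → q = q' := fun q q' h =>
    ea.injective (Fin.ext (by simp only [ca] at h; omega))
  have hinj : ∀ q a q1 a1, cq q + Qn * ca a = cq q1 + Qn * ca a1 → q = q1 ∧ a = a1 := by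
    intro q a q1 a1 h
    have hm := congrArg (· % Qn) h
    have hd := congrArg (· / Qn) h
    simp only [Nat.add_mul_mod_self_left, Nat.mod_eq_of_lt (hcq _)] at hm
    simp only [Nat.add_mul_div_left _ _ (show 0 < Qn by simp [Qn]),
      Nat.div_eq_of_lt (hcq _), zero_add] at hd
    exact ⟨hcqi _ _ hm, hcai _ _ hd⟩
  have hltB : ∀ q a, cq q + Qn * ca a < B := by
    intro q a
    have h3 := hcq q
    have h4 : ca a ≤ Fintype.card A := by simp only [ca]; have := (ea a).2; omega
    calc cq q + Qn * ca a < Qn + Qn * Fintype.card A := by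
          have := Nat.mul_le_mul_left Qn h4; omega
      _ = B := by simp only [B]; ring
  have hQ : 0 < Qn := by simp [Qn]
  have hB : 0 < B := by simp only [B]; positivity
  let w0 : ℕ → List A := fun n => x :: y :: List.replicate n c ++ [e]
  have hW0 : Computable fun n => B ^ (w0 n).length := by
    have : Primrec (fun n : ℕ => Nat.rec (motive := fun _ => ℕ) (B ^ 3) (fun _ y => B * y) n) :=
      Primrec.nat_rec₁ _ ((Primrec.nat_mul.comp (Primrec.const B) Primrec.snd).to₂)
    refine (this.of_eq ?_).to_comp
    intro n
    induction n with
    | zero => rfl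
    | succ n ih => simp only [ih, w0]; simp [pow_succ]; ring
  have hU0 : Computable fun n => cq q0 + Qn * nm ca B (w0 n) := by
    have : Primrec (fun n : ℕ => Nat.rec (motive := fun _ => ℕ) (ca e) (fun _ y => ca c + B * y) n) :=
      Primrec.nat_rec₁ _ ((Primrec.nat_add.comp (Primrec.const (ca c))
        (Primrec.nat_mul.comp (Primrec.const B) Primrec.snd)).to₂)
    have h3 : Primrec (fun n : ℕ => nm ca B (List.replicate n c ++ [e])) := by
      refine (this.of_eq ?_)
      intro n
      induction n with
      | zero => simp [nm]
      | succ n ih => simp only [ih, List.replicate_succ, List.cons_append, nm]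
    have h4 : Primrec fun n => cq q0 + Qn * (ca x + B * (ca y + B *
        nm ca B (List.replicate n c ++ [e]))) :=
      Primrec.nat_add.comp (Primrec.const _) (Primrec.nat_mul.comp (Primrec.const _)
        (Primrec.nat_add.comp (Primrec.const _) (Primrec.nat_mul.comp (Primrec.const _)
        (Primrec.nat_add.comp (Primrec.const _) (Primrec.nat_mul.comp (Primrec.const _) h3)))))
    exact h4.to_comp
  refine ⟨Option (Q × A), inferInstance, fun n => mt tr cq ca Qn B
    (cq q0 + Qn * nm ca B (w0 n)) (B ^ (w0 n).length), H, hH, ?_, ?_, ?_⟩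
  · intro r i j
    exact mt_comp hU0 hW0 r i j
  · intro n hn
    obtain ⟨k, hk⟩ := h1 n hn
    obtain ⟨w, m, h0, h3, h4⟩ := conf_reach (tr := tr) (cq := cq) (ca := ca) (Qn := Qn) (B := B)
      (q0, w0 n) k
    refine ⟨w, ?_⟩
    have hk' : (qstep tr)^[k] (q0, w0 n) = (hlt, []) := hk
    rw [hk'] at h3
    have h5 : cq hlt = 0 := by simp [cq]
    simp only [nm, h5, mul_zero, add_zero] at h3
    simp only [GG, BB, h0, h3]
    ring_nf
    omega
  · intro n hn w
    have hnon : ∀ k, ((qstep tr)^[k] (q0, w0 n)).2 ≠ [] := fun k hk => hn (h2 n k hk)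
    apply inv_le (tr := tr) (cq := cq) (ca := ca) (c0 := (q0, w0 n)) hB hQ
      (fun a => Nat.add_pos_left one_pos _) hnon
    have h0 : Inv tr cq ca Qn B (q0, w0 n) eP := Or.inl rfl
    generalize eP = v at h0 ⊢
    induction w generalizing v with
    | nil => exact h0
    | cons r w ih =>
      rw [List.foldl_cons]
      exact ih _ (inv_step hB hinj hltB hnon h0 r)

end Machines

section Play
open MeasureTheory ProbabilityTheory

variable {S A : Type}

theorem cyl_snoc (l : List S) (t : S) : Cyl (l ++ [t]) = Cyl l ∩ {ρ | ρ l.length = t} := by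
  ext ρ
  simp only [Cyl, Set.mem_ofPred_eq, Set.mem_inter_iff]
  constructor
  · intro h
    constructor
    · intro i
      have := h ⟨i.1, by simp⟩
      simpa [List.getElem_append_left i.2] using this
    · have := h ⟨l.length, by simp⟩
      simpa using this
  · rintro ⟨h1, h2⟩ ⟨i, hi⟩
    simp only [List.length_append, List.length_singleton] at hi
    by_cases hil : i < l.length
    · have := h1 ⟨i, hil⟩
      simpa [List.getElem_append_left hil] using this
    · have hi' : i = l.length := by omega
      subst hi'
      simpa using h2

theorem listProb_snoc (δ : S → A → S → ℝ≥0∞) (σ : List S → A → ℝ≥0∞) (t : S) (rest : List S) :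
    ∀ (hist : List S) (cur : S), listProb δ σ hist cur (rest ++ [t]) = listProb δ σ hist cur rest *
      ∑' a, σ (hist ++ cur :: rest) a * δ ((cur :: rest).getLast (by simp)) a t := by
  induction rest with
  | nil => intro hist cur; simp [listProb]
  | cons b rest ih =>
    intro hist cur
    rw [List.cons_append, listProb, listProb, ih, mul_assoc]
    simp

theorem cyl_meas [MeasurableSpace S] [MeasurableSingletonClass S] (l : List S) :
    MeasurableSet (Cyl l) := by
  have : Cyl l = ⋂ i : Fin l.length, (fun ρ : ℕ → S => ρ i.1) ⁻¹' {l.get i} := by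
    ext ρ; simp [Cyl]
  rw [this]
  exact MeasurableSet.iInter fun i => measurable_pi_apply _ (measurableSet_singleton _)

/-- existence of the play measures -/
theorem exists_play [Finite S] [Nonempty S] [MeasurableSpace S] [MeasurableSingletonClass S] (δ : S → A → S → ℝ≥0∞)
    (hδ : ∀ s a, ∑' t, δ s a t = 1) :
    ∃ Pr : S → (List S → A → ℝ≥0∞) → Measure (ℕ → S), IsPlayMeasure δ Pr := by
  classical
  suffices h : ∀ s σ, IsStrat σ → ∃ P : Measure (ℕ → S), IsProbabilityMeasure P ∧
      ∀ l : List S, P (Cyl (s :: l)) = listProb δ σ [] s l by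
    choose! Pr hPr using h
    exact ⟨Pr, hPr⟩
  intro s σ hσ
  have hw : ∀ (l : List S) (u : S), ∑' t, ∑' a, σ l a * δ u a t = 1 := by
    intro l u
    rw [ENNReal.tsum_comm]
    simp only [ENNReal.tsum_mul_left, hδ, mul_one]
    exact hσ l
  let pm : List S → S → PMF S := fun l u => ⟨fun t => ∑' a, σ l a * δ u a t,
    by rw [← hw l u]; exact ENNReal.summable.hasSum⟩
  let hist : (n : ℕ) → ((i : Finset.Iic n) → S) → List S := fun n x =>
    List.ofFn (fun i : Fin (n + 1) => x ⟨i, Finset.mem_Iic.2 (Nat.le_of_lt_succ i.2)⟩)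
  let κ : (n : ℕ) → Kernel ((i : Finset.Iic n) → S) S := fun n =>
    Kernel.ofFunOfCountable fun x => (pm (hist n x) (x ⟨n, Finset.mem_Iic.2 le_rfl⟩)).toMeasure
  have hκ : ∀ n, IsMarkovKernel (κ n) := fun n => ⟨fun x => by
    show IsProbabilityMeasure (PMF.toMeasure _)
    infer_instance⟩
  let x0 : (i : Finset.Iic 0) → S := fun _ => s
  let P : Measure (ℕ → S) := Kernel.traj (X := fun _ => S) κ 0 x0
  have hP : IsProbabilityMeasure P := by
    show IsProbabilityMeasure (Kernel.traj (X := fun _ => S) κ 0 x0)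
    infer_instance
  refine ⟨P, hP, ?_⟩
  intro l
  induction l using List.reverseRecOn with
  | nil =>
    simp only [listProb]
    have h1 := Kernel.traj_map_frestrictLe_apply (X := fun _ => S) (κ := κ) 0 0 x0
    rw [Kernel.partialTraj_self] at h1
    have h2 : Cyl [s] = (Preorder.frestrictLe 0 : (ℕ → S) → _) ⁻¹' {x0} := by
      ext ρ
      simp only [Cyl, Set.mem_ofPred_eq, Set.mem_preimage, Set.mem_singleton_iff]
      constructor
      · intro h
        funext i
        have hi : i.1 = 0 := by have := Finset.mem_Iic.1 i.2; omega
        have := h ⟨0, by simp⟩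
        rw [Preorder.frestrictLe_apply, hi]
        simpa [x0] using this
      · intro h i
        have hi : i.1 = 0 := Nat.lt_one_iff.1 i.2
        have := congrFun h ⟨0, by simp⟩
        simpa [Preorder.frestrictLe_apply, x0, hi] using this
    rw [h2, ← Measure.map_apply (Preorder.measurable_frestrictLe 0) (measurableSet_singleton _)]
    show (Measure.map (Preorder.frestrictLe 0) (Kernel.traj (X := fun _ => S) κ 0 x0)) {x0} = 1
    rw [h1]
    simp [Kernel.id_apply]
  | append_singleton l t ih =>
    rw [listProb_snoc, ← ih, ← List.cons_append, cyl_snoc]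
    have hlen : (s :: l).length = l.length + 1 := rfl
    set n := l.length with hn
    let xl : (i : Finset.Iic n) → S := fun i => (s :: l).get ⟨i.1, by
      have := Finset.mem_Iic.1 i.2; rw [hlen]; omega⟩
    have h1 := Kernel.partialTraj_compProd_eq_map_traj (X := fun _ => S) (κ := κ) (a := 0) (b := n)
      (x₀ := x0) (Nat.zero_le _)
    have h2 : Cyl (s :: l) = (Preorder.frestrictLe n : (ℕ → S) → _) ⁻¹' {xl} := by
      ext ρ
      simp only [Cyl, Set.mem_ofPred_eq, Set.mem_preimage, Set.mem_singleton_iff]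
      constructor
      · intro h
        funext i
        exact h ⟨i.1, _⟩
      · intro h i
        exact congrFun h ⟨i.1, Finset.mem_Iic.2 (Nat.le_of_lt_succ i.2)⟩
    rw [← Kernel.traj_map_frestrictLe_apply] at h1
    have h3 := congrArg (fun m => m ({xl} ×ˢ {t})) h1
    beta_reduce at h3
    rw [Measure.compProd_apply_prod (measurableSet_singleton _) (measurableSet_singleton _),
      lintegral_singleton,
      Measure.map_apply (Preorder.measurable_frestrictLe n) (measurableSet_singleton _),
      Measure.map_apply (by fun_prop) (by measurability), ← h2] at h3
    have h4 : (fun x : ℕ → S => (Preorder.frestrictLe n x, x (n + 1))) ⁻¹' ({xl} ×ˢ {t}) =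
        Cyl (s :: l) ∩ {ρ | ρ (s :: l).length = t} := by
      rw [h2]; rfl
    rw [h4] at h3
    refine h3.symm.trans ?_
    rw [mul_comm]
    congr 1
    show (pm (hist n xl) (xl ⟨n, _⟩)).toMeasure {t} = _
    rw [PMF.toMeasure_apply_singleton _ _ (measurableSet_singleton _)]
    show ∑' a, σ (hist n xl) a * δ (xl ⟨n, _⟩) a t = _
    have h5 : hist n xl = s :: l := by
      simp only [hist, xl]
      exact List.ofFn_get (s :: l)
    have h6 : xl ⟨n, Finset.mem_Iic.2 le_rfl⟩ = (s :: l).getLast (by simp) := by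
      simp only [xl, List.getLast_eq_getElem]
      simp [hn]
    rw [h5, h6]
    rfl

theorem coord_meas [MeasurableSpace S] [MeasurableSingletonClass S] (m : ℕ) (u : S) :
    MeasurableSet {ρ : ℕ → S | ρ m = u} := by
  have : {ρ : ℕ → S | ρ m = u} = (fun ρ : ℕ → S => ρ m) ⁻¹' {u} := by
    ext ρ; simp
  rw [this]
  exact measurable_pi_apply m (measurableSet_singleton u)

/-- blind strategies: law of two successive states -/
theorem play_joint [Fintype S] [MeasurableSpace S] [MeasurableSingletonClass S]
    (δ : S → A → S → ℝ≥0∞) (σ : List S → A → ℝ≥0∞) (s0 : S)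
    (hσ : ∀ h h' : List S, h.length = h'.length → σ h = σ h')
    (P : Measure (ℕ → S)) [IsProbabilityMeasure P]
    (hP : ∀ l : List S, P (Cyl (s0 :: l)) = listProb δ σ [] s0 l) (n : ℕ) (s t : S) :
    P {ρ | ρ n = s ∧ ρ (n + 1) = t} = P {ρ | ρ n = s} *
      ∑' a, σ (List.replicate (n + 1) s0) a * δ s a t := by
  classical
  have h0 : P (Cyl [s0]) = 1 := by rw [hP]; rfl
  have key : ∀ l : List S, l.length = n → P (Cyl (l ++ [s] ++ [t])) = P (Cyl (l ++ [s])) *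
      ∑' a, σ (List.replicate (n + 1) s0) a * δ s a t := by
    intro l hl
    rcases hx : l ++ [s] with _ | ⟨b, m⟩
    · simp at hx
    · by_cases hb : b = s0
      · subst hb
        rw [List.cons_append, hP, hP, listProb_snoc]
        congr 1
        have h1 : (b :: m).getLast (by simp) = s := by
          simp only [← hx, List.getLast_append_singleton]
        have h2 : σ ([] ++ b :: m) = σ (List.replicate (n + 1) b) := by
          apply hσ
          rw [List.nil_append, ← hx]; simp [hl]
        rw [h1, h2]
      · have hz : ∀ m', P (Cyl (b :: m')) = 0 := by
          intro m'
          have h1 : Cyl (b :: m') ⊆ (Cyl [s0])ᶜ := by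
            intro ρ h1 h2
            have h3 : ρ 0 = b := h1 ⟨0, by simp⟩
            have h4 : ρ 0 = s0 := h2 ⟨0, by simp⟩
            exact hb (h3.symm.trans h4)
          refine measure_mono_null h1 ?_
          rw [prob_compl_eq_zero_iff (cyl_meas _)]
          exact h0
        rw [List.cons_append, hz, hz, zero_mul]
  let f : (ℕ → S) → (Fin n → S) := fun ρ i => ρ i
  have hf : Measurable f := by fun_prop
  have hcyl : ∀ v : Fin n → S, f ⁻¹' {v} = Cyl (List.ofFn v) := by
    intro v
    ext ρ
    simp only [Cyl, Set.mem_preimage, Set.mem_singleton_iff, Set.mem_ofPred_eq, f]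
    constructor
    · intro h i
      have := congrFun h ⟨i.1, by have := i.2; simpa using this⟩
      simpa using this
    · intro h
      funext i
      have := h ⟨i.1, by simp⟩
      simpa using this
  have hdec : ∀ E : Set (ℕ → S), MeasurableSet E → P E = ∑ v : Fin n → S, P (Cyl (List.ofFn v) ∩ E) := by
    intro E hE
    have h1 := sum_measure_preimage_singleton (μ := P.restrict E) (Finset.univ : Finset (Fin n → S))
      (f := f) (fun y _ => hf (measurableSet_singleton y))
    simp only [Finset.coe_univ, Set.preimage_univ, Measure.restrict_apply_univ] at h1
    rw [← h1]
    refine Finset.sum_congr rfl fun v _ => ?_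
    rw [Measure.restrict_apply (hf (measurableSet_singleton v)), hcyl]
  have hm : ∀ m u, MeasurableSet {ρ : ℕ → S | ρ m = u} := fun m u =>
    coord_meas m u
  have hE1 : MeasurableSet {ρ : ℕ → S | ρ n = s ∧ ρ (n + 1) = t} := (hm n s).inter (hm (n + 1) t)
  rw [hdec _ hE1, hdec _ (hm n s), Finset.sum_mul]
  refine Finset.sum_congr rfl fun v _ => ?_
  have h2 := key (List.ofFn v) (by simp)
  rw [cyl_snoc, cyl_snoc] at h2
  simp only [List.length_ofFn, List.length_append, List.length_singleton] at h2
  rw [← h2, Set.inter_assoc]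
  rfl

theorem play_zero [MeasurableSpace S] [MeasurableSingletonClass S]
    (δ : S → A → S → ℝ≥0∞) (σ : List S → A → ℝ≥0∞) (s0 : S)
    (P : Measure (ℕ → S)) 
    (hP : ∀ l : List S, P (Cyl (s0 :: l)) = listProb δ σ [] s0 l) :
    P {ρ | ρ 0 = s0} = 1 := by
  have h0 : P (Cyl [s0]) = 1 := by rw [hP]; rfl
  rw [← h0]
  congr 1
  ext ρ
  simp only [Cyl, Set.mem_ofPred_eq]
  constructor
  · intro h i
    have hi : i.1 = 0 := Nat.lt_one_iff.1 i.2
    simpa [hi] using h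
  · intro h
    exact h ⟨0, by simp⟩
end Play

section Model

/-- states of the POMDP -/
inductive St : Type
  | dd | win | lose | tgt | zz
  | cp (m : Bool) (i j : Fin 5)
  deriving DecidableEq

/-- states as a sum type -/
def stEquiv : St ≃ Fin 5 ⊕ (Bool × Fin 5 × Fin 5) where
  toFun s := match s with
    | .dd => Sum.inl 0
    | .win => Sum.inl 1
    | .lose => Sum.inl 2
    | .tgt => Sum.inl 3
    | .zz => Sum.inl 4
    | .cp m i j => Sum.inr (m, i, j)
  invFun x := match x with
    | Sum.inl i => (![.dd, .win, .lose, .tgt, .zz] : Fin 5 → St) i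
    | Sum.inr (m, i, j) => .cp m i j
  left_inv s := by cases s <;> rfl
  right_inv x := by
    rcases x with i | ⟨m, i, j⟩
    · fin_cases i <;> rfl
    · rfl

instance : Fintype St := Fintype.ofEquiv _ stEquiv.symm

theorem St.sum_eq {M : Type} [AddCommMonoid M] (f : St → M) :
    ∑ s, f s = f .dd + f .win + f .lose + f .tgt + f .zz +
      ((∑ i, ∑ j, f (.cp true i j)) + ∑ i, ∑ j, f (.cp false i j)) := by
  rw [← Equiv.sum_comp stEquiv.symm f, Fintype.sum_sum_type, Fin.sum_univ_five,
    Fintype.sum_prod_type, Fintype.sum_bool, Fintype.sum_prod_type, Fintype.sum_prod_type]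
  rfl

/-- actions of the POMDP -/
inductive Ac (R : Type) : Type
  | begin | hash | dollar | bang
  | lt (r : R)

instance {R : Type} [Finite R] : Finite (Ac R) := by
  let f : Option (Option (Option (Option R))) → Ac R := fun x => match x with
    | none => .begin
    | some none => .hash
    | some (some none) => .dollar
    | some (some (some none)) => .bang
    | some (some (some (some r))) => .lt r
  apply Finite.of_surjective f
  intro c
  cases c with
  | begin => exact ⟨none, rfl⟩
  | hash => exact ⟨some none, rfl⟩
  | dollar => exact ⟨some (some none), rfl⟩
  | bang => exact ⟨some (some (some none)), rfl⟩
  | lt r => exact ⟨some (some (some (some r))), rfl⟩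

/-- coefficients of the two quadratic forms -/
def ff : Bool → Fin 5 → Fin 5 → ℕ
  | true => ![![1, 0, 0, 0, 0], ![0, 0, 4, 0, 0], ![0, 0, 0, 0, 0], ![0, 0, 0, 0, 0],
      ![0, 0, 0, 0, 0]]
  | false => ![![0, 0, 0, 0, 0], ![0, 2, 0, 0, 0], ![0, 0, 2, 0, 0], ![0, 0, 0, 0, 0],
      ![0, 0, 0, 0, 0]]

variable {R : Type} (a : R → Fin 5 → Fin 5 → ℕ) (K : ℕ) (e : Bool)

/-- common part of the non-bang actions -/
def mstay : St → St → ℕ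
  | .win, .win => 2 * K
  | .lose, .lose => 2 * K
  | .zz, .zz => 2 * K
  | _, _ => 0

/-- specific part of the transitions, as numerators with denominator `2 * K` -/
def mspec : Ac R → St → St → ℕ
  | .begin, .dd, .cp _ i j => eP i * eP j
  | .hash, .cp m i j, .cp m' i' j' => if m = m' then ff m i j * (eP i' * eP j') else 0
  | .dollar, .cp true i j, .win => ff true i j
  | .dollar, .cp false i j, .lose => ff false i j
  | .lt r, .cp m i j, .cp m' i' j' => if m = m' then a r i i' * a r j j' else 0
  | .bang, .win, .tgt => 2 * K
  | .bang, .dd, .zz => 2 * K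
  | .bang, .lose, .zz => 2 * K
  | .bang, .tgt, .zz => 2 * K
  | .bang, .cp _ _ _, .zz => 2 * K
  | .bang, .zz, .zz => if e then K else 2 * K
  | _, _, _ => 0

/-- is the action non-bang -/
def nb : Ac R → ℕ
  | .bang => 0
  | _ => 1

/-- transition numerators, apart from those towards `dd` -/
def mmain (s : St) (x : Ac R) (t : St) : ℕ := mspec a K e x s t + nb x * mstay K s t

/-- transition numerators -/
def mnum (s : St) (x : Ac R) (t : St) : ℕ :=
  mmain a K e s x t + if t = .dd then 2 * K - ∑ u, mmain a K e s x u else 0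

/-- transition probabilities -/
noncomputable def DD (s : St) (x : Ac R) (t : St) : ℝ := (mnum a K e s x t : ℝ) / (2 * K : ℕ)

/-- the base denominator -/
def KK [Fintype R] : ℕ := 4 + ∑ r, ∑ i, ∑ j, ∑ i', ∑ j', a r i i' * a r j j'

theorem ff_le (m : Bool) (i j : Fin 5) : ff m i j ≤ 4 := by
  revert m i j; decide

theorem mmain_sum_le [Fintype R] (s : St) (x : Ac R) :
    ∑ u, mmain a (KK a) e s x u ≤ 2 * KK a := by
  have hk : 4 ≤ KK a := Nat.le_add_right _ _
  have hlt : ∀ r i j, ∑ i', ∑ j', a r i i' * a r j j' ≤ KK a := by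
    intro r i j
    refine le_trans ?_ (Nat.le_add_left _ _)
    refine le_trans ?_ (Finset.single_le_sum (f := fun r => ∑ i, ∑ j, ∑ i', ∑ j', a r i i' * a r j j')
      (fun _ _ => Nat.zero_le _) (Finset.mem_univ r))
    refine le_trans ?_ (Finset.single_le_sum (f := fun i => ∑ j, ∑ i', ∑ j', a r i i' * a r j j')
      (fun _ _ => Nat.zero_le _) (Finset.mem_univ i))
    exact (Finset.single_le_sum (f := fun j => ∑ i', ∑ j', a r i i' * a r j j')
      (fun _ _ => Nat.zero_le _) (Finset.mem_univ j))
  have he : ∑ j, eP j = 1 := by decide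
  simp only [← Finset.mul_sum] at hlt
  rw [St.sum_eq]
  rcases s with _ | _ | _ | _ | _ | ⟨m, i, j⟩ <;> rcases x with _ | _ | _ | _ | r <;>
    try cases m
  all_goals simp [mmain, mspec, mstay, nb, ← Finset.mul_sum, he]
  all_goals try split_ifs
  all_goals try omega
  all_goals first
    | (have := ff_le true i j; omega)
    | (have := ff_le false i j; omega)
    | (have := hlt ‹R› i j; omega)

variable [Fintype R]

theorem KK_pos : (0 : ℝ) < (2 * KK a : ℕ) := by
  have hk : 4 ≤ KK a := Nat.le_add_right _ _
  exact_mod_cast (by omega : 0 < 2 * KK a)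

theorem KK_ne : (KK a : ℝ) ≠ 0 := by
  have hk : 4 ≤ KK a := Nat.le_add_right _ _
  exact_mod_cast (by omega : KK a ≠ 0)

theorem DD_nonneg (s : St) (x : Ac R) (t : St) : 0 ≤ DD a (KK a) e s x t := by
  unfold DD; positivity

theorem mnum_sum (s : St) (x : Ac R) : ∑ t, mnum a (KK a) e s x t = 2 * KK a := by
  unfold mnum
  rw [Finset.sum_add_distrib, Finset.sum_ite_eq' Finset.univ St.dd]
  have := mmain_sum_le a e s x
  simp only [Finset.mem_univ, if_true]
  omega

theorem DD_sum (s : St) (x : Ac R) : ∑ t, DD a (KK a) e s x t = 1 := by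
  unfold DD
  rw [← Finset.sum_div, ← Nat.cast_sum, mnum_sum, div_self (KK_pos a).ne']

theorem DD_ne (s : St) (x : Ac R) (t : St) (ht : t ≠ .dd) :
    DD a (KK a) e s x t = (mmain a (KK a) e s x t : ℝ) / (2 * KK a : ℕ) := by
  simp [DD, mnum, ht]

/-- one step of the distribution -/
noncomputable def push (x : Ac R) (μ : St → ℝ) : St → ℝ :=
  fun t => ∑ s, μ s * DD a (KK a) e s x t

theorem push_sum (x : Ac R) (μ : St → ℝ) : ∑ t, push a e x μ t = ∑ s, μ s := by
  unfold push
  rw [Finset.sum_comm]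
  simp only [← Finset.mul_sum, DD_sum, mul_one]

theorem push_nonneg (x : Ac R) (μ : St → ℝ) (h : ∀ s, 0 ≤ μ s) (t : St) : 0 ≤ push a e x μ t :=
  Finset.sum_nonneg fun s _ => mul_nonneg (h s) (DD_nonneg a e s x t)

theorem push_ne (x : Ac R) (μ : St → ℝ) (t : St) (ht : t ≠ .dd) :
    push a e x μ t = (∑ s, μ s * mmain a (KK a) e s x t) / (2 * KK a : ℕ) := by
  unfold push
  rw [Finset.sum_div]
  refine Finset.sum_congr rfl fun s _ => ?_
  rw [DD_ne _ _ _ _ _ ht, mul_div_assoc]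

theorem push_stay (x : Ac R) (hx : nb x = 1) (μ : St → ℝ) :
    push a e x μ .zz = μ .zz ∧ push a e x μ .tgt = 0 := by
  have hk := KK_ne a
  rw [push_ne _ _ _ _ _ (by simp), push_ne _ _ _ _ _ (by simp), St.sum_eq, St.sum_eq]
  cases x <;> simp [nb] at hx <;> simp [mmain, mspec, mstay, nb] <;> field_simp


theorem push_wl (x : Ac R) (hx : nb x = 1) (hd : ∀ m i j, mspec a (KK a) e x (.cp m i j) .win = 0 ∧
    mspec a (KK a) e x (.cp m i j) .lose = 0) (μ : St → ℝ) :
    push a e x μ .win = μ .win ∧ push a e x μ .lose = μ .lose := by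
  have hk := KK_ne a
  rw [push_ne _ _ _ _ _ (by simp), push_ne _ _ _ _ _ (by simp), St.sum_eq, St.sum_eq]
  cases x <;> simp [nb] at hx <;> simp [mmain, mspec, mstay, nb] at hd ⊢
  all_goals try field_simp
  all_goals simp [hd]

theorem push_begin (μ : St → ℝ) (m : Bool) (i j : Fin 5) :
    push a e .begin μ (.cp m i j) = μ .dd / (2 * KK a : ℕ) * (eP i * eP j) := by
  rw [push_ne _ _ _ _ _ (by simp), St.sum_eq]
  simp [mmain, mspec, mstay, nb]
  ring

theorem push_hash (μ : St → ℝ) (m : Bool) (i j : Fin 5) :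
    push a e .hash μ (.cp m i j) =
      (∑ i', ∑ j', μ (.cp m i' j') * ff m i' j') / (2 * KK a : ℕ) * (eP i * eP j) := by
  rw [push_ne _ _ _ _ _ (by simp), St.sum_eq]
  cases m <;> simp [mmain, mspec, mstay, nb, Finset.sum_div, Finset.sum_mul] <;>
  refine Finset.sum_congr rfl fun i' _ => Finset.sum_congr rfl fun j' _ => ?_ <;> ring

theorem push_lt (r : R) (μ : St → ℝ) (m : Bool) (i j : Fin 5) :
    push a e (.lt r) μ (.cp m i j) =
      (∑ i', ∑ j', μ (.cp m i' j') * (a r i' i * a r j' j)) / (2 * KK a : ℕ) := by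
  rw [push_ne _ _ _ _ _ (by simp), St.sum_eq]
  cases m <;> simp [mmain, mspec, mstay, nb]

theorem push_dollar (μ : St → ℝ) :
    (∀ m i j, push a e .dollar μ (.cp m i j) = 0) ∧
    push a e .dollar μ .win = μ .win + (∑ i', ∑ j', μ (.cp true i' j') * ff true i' j') /
      (2 * KK a : ℕ) ∧
    push a e .dollar μ .lose = μ .lose + (∑ i', ∑ j', μ (.cp false i' j') * ff false i' j') /
      (2 * KK a : ℕ) := by
  have hk := KK_ne a
  refine ⟨fun m i j => ?_, ?_, ?_⟩
  all_goals
    rw [push_ne _ _ _ _ _ (by simp), St.sum_eq]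
    simp [mmain, mspec, mstay, nb]
  all_goals
    rw [add_div]
    congr 1
    field_simp

theorem push_bang (μ : St → ℝ) (hμ : ∑ s, μ s = 1) :
    (∀ m i j, push a e .bang μ (.cp m i j) = 0) ∧ push a e .bang μ .win = 0 ∧
    push a e .bang μ .lose = 0 ∧ push a e .bang μ .tgt = μ .win ∧
    push a e .bang μ .zz = (if e then 1 / 2 else 1) * μ .zz + (1 - μ .zz - μ .win) := by
  have hk := KK_ne a
  refine ⟨fun m i j => ?_, ?_, ?_, ?_, ?_⟩
  all_goals
    rw [push_ne _ _ _ _ _ (by simp), St.sum_eq]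
    simp [mmain, mspec, mstay, nb]
  · field_simp
  · have h1 : 1 - μ .zz - μ .win = μ .dd + μ .lose + μ .tgt +
      ((∑ i, ∑ j, μ (.cp true i j)) + ∑ i, ∑ j, μ (.cp false i j)) := by
      rw [St.sum_eq] at hμ
      linarith
    rw [h1]
    simp only [← Finset.sum_mul]
    cases e <;> simp <;> field_simp <;> ring
end Model

section NoCase
variable {R : Type} [Fintype R] (a : R → Fin 5 → Fin 5 → ℕ) (e : Bool)

/-- distributions that can occur after a fixed sequence of actions -/
def Good (μ : St → ℝ) : Prop :=
  (∀ s, 0 ≤ μ s) ∧ ∑ s, μ s = 1 ∧ μ .win ≤ μ .lose ∧ (e = true → 1 / 2 ≤ μ .zz) ∧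
  ∃ (cg cb : ℝ) (v : Fin 5 → ℕ), 0 ≤ cg ∧ cg ≤ cb ∧ GG v ≤ BB v ∧
    (∃ w : List R, v = w.foldl (vstep a) eP) ∧
    (∀ i j, μ (.cp true i j) = cg * (v i * v j)) ∧ (∀ i j, μ (.cp false i j) = cb * (v i * v j))

theorem sum_GG (c : ℝ) (v : Fin 5 → ℕ) :
    ∑ i, ∑ j, c * ((v i : ℝ) * v j) * (ff true i j : ℝ) = c * (GG v : ℝ) := by
  simp [Fin.sum_univ_five, ff, GG]; ring

theorem sum_BB (c : ℝ) (v : Fin 5 → ℕ) :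
    ∑ i, ∑ j, c * ((v i : ℝ) * v j) * (ff false i j : ℝ) = c * (BB v : ℝ) := by
  simp [Fin.sum_univ_five, ff, BB]; ring

theorem sum_vstep (c k : ℝ) (v : Fin 5 → ℕ) (r : R) (i j : Fin 5) :
    (∑ i', ∑ j', c * ((v i' : ℝ) * v j') * ((a r i' i : ℝ) * a r j' j)) / k =
      c / k * ((vstep a v r i : ℝ) * vstep a v r j) := by
  have h : ((vstep a v r i : ℝ) * vstep a v r j) =
      ∑ i', ∑ j', ((v i' : ℝ) * v j') * ((a r i' i : ℝ) * a r j' j) := by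
    simp only [vstep, Nat.cast_sum, Nat.cast_mul]
    rw [Finset.sum_mul_sum]
    refine Finset.sum_congr rfl fun i' _ => Finset.sum_congr rfl fun j' _ => ?_
    ring
  rw [h, Finset.sum_div, Finset.mul_sum]
  refine Finset.sum_congr rfl fun i' _ => ?_
  rw [Finset.sum_div, Finset.mul_sum]
  refine Finset.sum_congr rfl fun j' _ => ?_
  ring

theorem good_parts {μ : St → ℝ} (h : ∀ s, 0 ≤ μ s) (h1 : ∑ s, μ s = 1) :
    μ .win + μ .lose + μ .zz ≤ 1 := by
  rw [St.sum_eq] at h1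
  have h2 : 0 ≤ ∑ i, ∑ j, μ (.cp true i j) :=
    Finset.sum_nonneg fun i _ => Finset.sum_nonneg fun j _ => h _
  have h3 : 0 ≤ ∑ i, ∑ j, μ (.cp false i j) :=
    Finset.sum_nonneg fun i _ => Finset.sum_nonneg fun j _ => h _
  have := h .dd
  have := h .tgt
  linarith

theorem eP_le : GG eP ≤ BB eP := by decide

theorem good_push (hno : ∀ w : List R, GG (w.foldl (vstep a) eP) ≤ BB (w.foldl (vstep a) eP))
    {μ : St → ℝ} (h : Good a e μ) (x : Ac R) : Good a e (push a e x μ) := by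
  obtain ⟨h0, h1, h2, h3, cg, cb, v, hg, hgb, hv, ⟨w, hw⟩, hct, hcf⟩ := h
  have hkp := KK_pos a
  refine ⟨push_nonneg a e x μ h0, by rw [push_sum, h1], ?_⟩
  cases x with
  | begin =>
    have hs := push_stay a e (.begin : Ac R) rfl μ
    have hwl := push_wl a e (.begin : Ac R) rfl (by simp [mspec]) μ
    rw [hwl.1, hwl.2, hs.1]
    refine ⟨h2, h3, μ .dd / (2 * KK a : ℕ), μ .dd / (2 * KK a : ℕ), eP,
      div_nonneg (h0 _) hkp.le, le_rfl, eP_le, ⟨[], rfl⟩,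
      fun i j => push_begin a e μ true i j, fun i j => push_begin a e μ false i j⟩
  | hash =>
    have hs := push_stay a e (.hash : Ac R) rfl μ
    have hwl := push_wl a e (.hash : Ac R) rfl (by simp [mspec]) μ
    rw [hwl.1, hwl.2, hs.1]
    refine ⟨h2, h3, cg * GG v / (2 * KK a : ℕ), cb * BB v / (2 * KK a : ℕ), eP,
      by positivity, ?_, eP_le, ⟨[], rfl⟩, ?_, ?_⟩
    · have : (GG v : ℝ) ≤ BB v := by exact_mod_cast hv
      gcongr
      linarith
    · intro i j
      rw [push_hash]
      simp only [hct, sum_GG]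
    · intro i j
      rw [push_hash]
      simp only [hcf, sum_BB]
  | dollar =>
    have hs := push_stay a e (.dollar : Ac R) rfl μ
    obtain ⟨hc, hwn, hls⟩ := push_dollar a e μ
    rw [hwn, hls, hs.1]
    simp only [hct, hcf, sum_GG, sum_BB]
    refine ⟨?_, h3, 0, 0, eP, le_rfl, le_rfl, eP_le, ⟨[], rfl⟩, ?_, ?_⟩
    · have : (GG v : ℝ) ≤ BB v := by exact_mod_cast hv
      gcongr
      linarith
    · intro i j; rw [hc]; simp
    · intro i j; rw [hc]; simp
  | bang =>
    obtain ⟨hc, hwn, hls, htg, hz⟩ := push_bang a e μ h1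
    rw [hwn, hls, hz]
    refine ⟨le_rfl, ?_, 0, 0, eP, le_rfl, le_rfl, eP_le, ⟨[], rfl⟩, ?_, ?_⟩
    · intro he
      rw [if_pos he]
      have := good_parts h0 h1
      linarith
    · intro i j; rw [hc]; simp
    · intro i j; rw [hc]; simp
  | lt r =>
    have hs := push_stay a e (.lt r : Ac R) rfl μ
    have hwl := push_wl a e (.lt r : Ac R) rfl (by simp [mspec]) μ
    rw [hwl.1, hwl.2, hs.1]
    have hw' : vstep a v r = (w ++ [r]).foldl (vstep a) eP := by
      rw [List.foldl_append, ← hw]; rfl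
    refine ⟨h2, h3, cg / (2 * KK a : ℕ), cb / (2 * KK a : ℕ), vstep a v r,
      by positivity, by gcongr, by rw [hw']; exact hno _, ⟨w ++ [r], hw'⟩, ?_, ?_⟩
    · intro i j
      rw [push_lt]
      simp only [hct, sum_vstep]
    · intro i j
      rw [push_lt]
      simp only [hcf, sum_vstep]

theorem push_lin (x : Ac R) (μ ν : St → ℝ) (p q : ℝ) :
    push a e x (p • μ + q • ν) = p • push a e x μ + q • push a e x ν := by
  funext t
  simp only [push, Pi.add_apply, Pi.smul_apply, smul_eq_mul, Finset.mul_sum]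
  rw [← Finset.sum_add_distrib]
  refine Finset.sum_congr rfl fun s _ => ?_
  ring

theorem hull_push (hno : ∀ w : List R, GG (w.foldl (vstep a) eP) ≤ BB (w.foldl (vstep a) eP))
    {μ : St → ℝ} (h : μ ∈ convexHull ℝ {μ | Good a e μ}) (x : Ac R) :
    push a e x μ ∈ convexHull ℝ {μ | Good a e μ} := by
  have h1 : convexHull ℝ {μ | Good a e μ} ⊆
      {μ | push a e x μ ∈ convexHull ℝ {μ | Good a e μ}} := by
    apply convexHull_min
    · intro ν hν
      exact subset_convexHull _ _ (good_push a e hno hν x)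
    · intro ν hν η hη p q hp hq hpq
      simp only [Set.mem_ofPred_eq, push_lin] at hν hη ⊢
      exact convex_convexHull _ _ hν hη hp hq hpq
  exact h1 h

theorem hull_step (hno : ∀ w : List R, GG (w.foldl (vstep a) eP) ≤ BB (w.foldl (vstep a) eP))
    [Fintype (Ac R)] {μ : St → ℝ} (h : μ ∈ convexHull ℝ {μ | Good a e μ}) (α : Ac R → ℝ)
    (hα : ∀ x, 0 ≤ α x) (hα1 : ∑ x, α x = 1) :
    (fun t => ∑ x, α x * push a e x μ t) ∈ convexHull ℝ {μ | Good a e μ} := by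
  have h1 := (convex_convexHull ℝ {μ | Good a e μ}).sum_mem (t := Finset.univ) (w := α)
    (z := fun x => push a e x μ) (fun x _ => hα x) hα1 (fun x _ => hull_push a e hno h x)
  convert h1 using 1
  funext t
  simp [Finset.sum_apply]

theorem hull_buchi {μ : St → ℝ} (h : μ ∈ convexHull ℝ {μ | Good a false μ}) (x : Ac R) :
    push a false x μ .tgt + μ .zz ≤ push a false x μ .zz := by
  have h1 : convexHull ℝ {μ | Good a false μ} ⊆
      {μ | push a false x μ .tgt + μ .zz ≤ push a false x μ .zz} := by
    apply convexHull_min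
    · intro μ hν
      obtain ⟨h0, h1, h2, -⟩ := hν
      by_cases hx : nb x = 1
      · have hs := push_stay a false x hx μ
        simp only [Set.mem_ofPred_eq]
        linarith
      · have hx' : x = .bang := by cases x <;> simp [nb] at hx ⊢
        subst hx'
        obtain ⟨hc, hwn, hls, htg, hz⟩ := push_bang a false μ h1
        simp only [Set.mem_ofPred_eq]
        have := good_parts h0 h1
        simp at hz
        linarith
    · intro ν hν η hη p q hp hq hpq
      simp only [Set.mem_ofPred_eq, push_lin, Pi.add_apply, Pi.smul_apply, smul_eq_mul] at hν hη ⊢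
      nlinarith
  exact h1 h

theorem hull_zz {μ : St → ℝ} (h : μ ∈ convexHull ℝ {μ | Good a true μ}) : 1 / 2 ≤ μ .zz := by
  have h1 : convexHull ℝ {μ | Good a true μ} ⊆ {μ | 1 / 2 ≤ μ .zz} := by
    apply convexHull_min
    · intro μ hν
      exact hν.2.2.2.1 rfl
    · intro ν hν η hη p q hp hq hpq
      simp only [Set.mem_ofPred_eq, Pi.add_apply, Pi.smul_apply, smul_eq_mul] at hν hη ⊢
      nlinarith
  exact h1 h

theorem hull_le {μ : St → ℝ} (h : μ ∈ convexHull ℝ {μ | Good a e μ}) : μ .zz ≤ 1 := by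
  have h1 : convexHull ℝ {μ | Good a e μ} ⊆ {μ | μ .zz ≤ 1} := by
    apply convexHull_min
    · intro μ hν
      have := good_parts hν.1 hν.2.1
      have h2 := hν.1 .win
      have h3 := hν.1 .lose
      simp only [Set.mem_ofPred_eq]
      linarith
    · intro ν hν η hη p q hp hq hpq
      simp only [Set.mem_ofPred_eq, Pi.add_apply, Pi.smul_apply, smul_eq_mul] at hν hη ⊢
      nlinarith
  exact h1 h

/-- Dirac distribution -/
def dir (s0 : St) : St → ℝ := fun s => if s = s0 then 1 else 0

theorem good_tgt : Good a false (dir .tgt) := by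
  refine ⟨fun s => ?_, ?_, ?_, ?_, 0, 0, eP, le_rfl, le_rfl, eP_le, ⟨[], rfl⟩, ?_, ?_⟩
  · unfold dir; split_ifs <;> norm_num
  · simp [dir]
  all_goals simp [dir]

theorem good_zz : Good a true (dir .zz) := by
  refine ⟨fun s => ?_, ?_, ?_, ?_, 0, 0, eP, le_rfl, le_rfl, eP_le, ⟨[], rfl⟩, ?_, ?_⟩
  · unfold dir; split_ifs <;> norm_num
  · simp [dir]
  all_goals simp [dir]
  all_goals norm_num

theorem no_buchi (hno : ∀ w : List R, GG (w.foldl (vstep a) eP) ≤ BB (w.foldl (vstep a) eP))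
    [Fintype (Ac R)] (μ : ℕ → St → ℝ) (α : ℕ → Ac R → ℝ)
    (hα : ∀ n x, 0 ≤ α n x) (hα1 : ∀ n, ∑ x, α n x = 1) (h0 : μ 0 = dir .tgt)
    (hs : ∀ n, μ (n + 1) = fun t => ∑ x, α n x * push a false x (μ n) t) (N : ℕ) :
    ∑ n ∈ Finset.range N, μ (n + 1) .tgt ≤ 1 := by
  have hm : ∀ n, μ n ∈ convexHull ℝ {μ | Good a false μ} := by
    intro n
    induction n with
    | zero => rw [h0]; exact subset_convexHull _ _ (good_tgt a)
    | succ n ih => rw [hs]; exact hull_step a false hno ih _ (hα n) (hα1 n)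
  have hst : ∀ n, μ (n + 1) .tgt + μ n .zz ≤ μ (n + 1) .zz := by
    intro n
    have h1 : ∑ x, α n x * (push a false x (μ n) .tgt + μ n .zz) ≤
        ∑ x, α n x * push a false x (μ n) .zz :=
      Finset.sum_le_sum fun x _ => mul_le_mul_of_nonneg_left (hull_buchi a (hm n) x) (hα n x)
    simp only [mul_add, Finset.sum_add_distrib, ← Finset.sum_mul, hα1 n, one_mul] at h1
    rw [hs]
    exact h1
  have h2 : ∀ N, ∑ n ∈ Finset.range N, μ (n + 1) .tgt ≤ μ N .zz - μ 0 .zz := by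
    intro N
    induction N with
    | zero => simp
    | succ N ih => rw [Finset.sum_range_succ]; have := hst N; linarith
  have h3 := h2 N
  have h4 := hull_le a false (hm N)
  have h5 : μ 0 .zz = 0 := by rw [h0]; simp [dir]
  linarith

theorem no_cobuchi (hno : ∀ w : List R, GG (w.foldl (vstep a) eP) ≤ BB (w.foldl (vstep a) eP))
    [Fintype (Ac R)] (μ : ℕ → St → ℝ) (α : ℕ → Ac R → ℝ)
    (hα : ∀ n x, 0 ≤ α n x) (hα1 : ∀ n, ∑ x, α n x = 1) (h0 : μ 0 = dir .zz)
    (hs : ∀ n, μ (n + 1) = fun t => ∑ x, α n x * push a true x (μ n) t) (n : ℕ) :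
    1 / 2 ≤ μ n .zz := by
  have hm : ∀ n, μ n ∈ convexHull ℝ {μ | Good a true μ} := by
    intro n
    induction n with
    | zero => rw [h0]; exact subset_convexHull _ _ (good_zz a)
    | succ n ih => rw [hs]; exact hull_step a true hno ih _ (hα n) (hα1 n)
  exact hull_zz a (hm n)
end NoCase

section YesCase
variable {R : Type} [Fintype R] (a : R → Fin 5 → Fin 5 → ℕ) (e : Bool)

/-- run a word of actions on a distribution -/
noncomputable def run (W : List (Ac R)) (μ : St → ℝ) : St → ℝ :=
  W.foldl (fun ν x => push a e x ν) μ

theorem run_append (W W' : List (Ac R)) (μ : St → ℝ) :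
    run a e (W ++ W') μ = run a e W' (run a e W μ) := by
  simp [run, List.foldl_append]

theorem run_cons (x : Ac R) (W : List (Ac R)) (μ : St → ℝ) :
    run a e (x :: W) μ = run a e W (push a e x μ) := rfl

theorem run_nil (μ : St → ℝ) : run a e [] μ = μ := rfl

/-- a distribution with product form on the computation states -/
structure Tr (cg cb : ℝ) (v : Fin 5 → ℕ) (wn ls z tg : ℝ) (μ : St → ℝ) : Prop where
  nn : ∀ s, 0 ≤ μ s
  tot : ∑ s, μ s = 1
  ct : ∀ i j, μ (.cp true i j) = cg * (v i * v j)
  cf : ∀ i j, μ (.cp false i j) = cb * (v i * v j)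
  hw : μ .win = wn
  hl : μ .lose = ls
  hz : μ .zz = z
  ht : μ .tgt = tg

variable {a e}

theorem Tr.begin {v : Fin 5 → ℕ} {wn ls z tg : ℝ} {μ : St → ℝ} (h : Tr 0 0 v wn ls z tg μ) :
    Tr ((1 - wn - ls - z - tg) / (2 * KK a : ℕ)) ((1 - wn - ls - z - tg) / (2 * KK a : ℕ)) eP
      wn ls z 0 (push a e .begin μ) := by
  have hs := push_stay a e (.begin : Ac R) rfl μ
  have hwl := push_wl a e (.begin : Ac R) rfl (by simp [mspec]) μ
  have hd : μ .dd = 1 - wn - ls - z - tg := by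
    have := h.tot
    rw [St.sum_eq] at this
    simp only [h.ct, h.cf, h.hw, h.hl, h.hz, h.ht] at this
    simp at this
    linarith
  refine ⟨push_nonneg a e _ μ h.nn, by rw [push_sum, h.tot], ?_, ?_, by rw [hwl.1, h.hw],
    by rw [hwl.2, h.hl], by rw [hs.1, h.hz], hs.2⟩
  · intro i j; rw [push_begin, hd]
  · intro i j; rw [push_begin, hd]

theorem Tr.lt {cg cb : ℝ} {v : Fin 5 → ℕ} {wn ls z tg : ℝ} {μ : St → ℝ}
    (h : Tr cg cb v wn ls z tg μ) (r : R) :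
    Tr (cg / (2 * KK a : ℕ)) (cb / (2 * KK a : ℕ)) (vstep a v r)
      wn ls z 0 (push a e (.lt r) μ) := by
  have hs := push_stay a e (.lt r : Ac R) rfl μ
  have hwl := push_wl a e (.lt r : Ac R) rfl (by simp [mspec]) μ
  refine ⟨push_nonneg a e _ μ h.nn, by rw [push_sum, h.tot], ?_, ?_, by rw [hwl.1, h.hw],
    by rw [hwl.2, h.hl], by rw [hs.1, h.hz], hs.2⟩
  · intro i j; rw [push_lt]; simp only [h.ct, sum_vstep]
  · intro i j; rw [push_lt]; simp only [h.cf, sum_vstep]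

theorem Tr.hash {cg cb : ℝ} {v : Fin 5 → ℕ} {wn ls z tg : ℝ} {μ : St → ℝ}
    (h : Tr cg cb v wn ls z tg μ) :
    Tr (cg * GG v / (2 * KK a : ℕ)) (cb * BB v / (2 * KK a : ℕ)) eP
      wn ls z 0 (push a e .hash μ) := by
  have hs := push_stay a e (.hash : Ac R) rfl μ
  have hwl := push_wl a e (.hash : Ac R) rfl (by simp [mspec]) μ
  refine ⟨push_nonneg a e _ μ h.nn, by rw [push_sum, h.tot], ?_, ?_, by rw [hwl.1, h.hw],
    by rw [hwl.2, h.hl], by rw [hs.1, h.hz], hs.2⟩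
  · intro i j; rw [push_hash]; simp only [h.ct, sum_GG]
  · intro i j; rw [push_hash]; simp only [h.cf, sum_BB]

theorem Tr.dollar {cg cb : ℝ} {v : Fin 5 → ℕ} {wn ls z tg : ℝ} {μ : St → ℝ}
    (h : Tr cg cb v wn ls z tg μ) :
    Tr 0 0 eP (wn + cg * GG v / (2 * KK a : ℕ)) (ls + cb * BB v / (2 * KK a : ℕ)) z 0
      (push a e .dollar μ) := by
  have hs := push_stay a e (.dollar : Ac R) rfl μ
  obtain ⟨hc, hwn, hls⟩ := push_dollar a e μ
  refine ⟨push_nonneg a e _ μ h.nn, by rw [push_sum, h.tot], ?_, ?_, ?_, ?_,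
    by rw [hs.1, h.hz], hs.2⟩
  · intro i j; rw [hc]; simp
  · intro i j; rw [hc]; simp
  · rw [hwn, h.hw]; simp only [h.ct, sum_GG]
  · rw [hls, h.hl]; simp only [h.cf, sum_BB]

theorem Tr.lts (w : List R) : ∀ {cg cb : ℝ} {v : Fin 5 → ℕ} {wn ls z : ℝ} {μ : St → ℝ},
    Tr cg cb v wn ls z 0 μ →
    Tr (cg / (2 * KK a : ℕ) ^ w.length) (cb / (2 * KK a : ℕ) ^ w.length) (w.foldl (vstep a) v)
      wn ls z 0 (run a e (w.map .lt) μ) := by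
  induction w with
  | nil => intro cg cb v wn ls z μ h; simpa [run] using h
  | cons r w ih =>
    intro cg cb v wn ls z μ h
    have h1 := ih (Tr.lt (a := a) (e := e) h r)
    rw [List.map_cons, run_cons]
    simp only [List.length_cons, List.foldl_cons, pow_succ']
    rwa [div_div, div_div] at h1

/-- repeated hash words -/
def hs (w : List R) : ℕ → List (Ac R)
  | 0 => []
  | n + 1 => hs w n ++ (w.map .lt ++ [.hash])

theorem Tr.hs (w : List R) (n : ℕ) {cg cb : ℝ} {wn ls z : ℝ} {μ : St → ℝ}
    (h : Tr cg cb eP wn ls z 0 μ) :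
    Tr (cg * ((GG (w.foldl (vstep a) eP) : ℝ) / (2 * KK a : ℕ) ^ (w.length + 1)) ^ n)
      (cb * ((BB (w.foldl (vstep a) eP) : ℝ) / (2 * KK a : ℕ) ^ (w.length + 1)) ^ n) eP
      wn ls z 0 (run a e (hs w n) μ) := by
  induction n with
  | zero => simpa [Stmt18.hs, run] using h
  | succ n ih =>
    have h1 := Tr.hash (a := a) (e := e) (Tr.lts (a := a) (e := e) w ih)
    rw [Stmt18.hs, run_append, run_append, run_cons, run_nil]
    have hk := (KK_pos a).ne'
    convert h1 using 1 <;> ring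

/-- the block word -/
def blk (w : List R) (n : ℕ) : List (Ac R) :=
  [.begin] ++ (hs w n ++ (w.map .lt ++ [.dollar]))

theorem Tr.blk (w : List R) (n : ℕ) {wn ls z : ℝ} {μ : St → ℝ}
    (h : Tr 0 0 eP wn ls z 0 μ) :
    Tr 0 0 eP (wn + (1 - wn - ls - z) *
        (((GG (w.foldl (vstep a) eP) : ℝ) / (2 * KK a : ℕ) ^ (w.length + 1)) ^ (n + 1) /
          (2 * KK a : ℕ)))
      (ls + (1 - wn - ls - z) *
        (((BB (w.foldl (vstep a) eP) : ℝ) / (2 * KK a : ℕ) ^ (w.length + 1)) ^ (n + 1) /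
          (2 * KK a : ℕ))) z 0 (run a e (blk w n) μ) := by
  have h1 := Tr.dollar (a := a) (e := e) (Tr.lts (a := a) (e := e) w
    (Tr.hs (a := a) (e := e) w n (Tr.begin (a := a) (e := e) h)))
  rw [Stmt18.blk, run_append, run_append, run_append, run_cons, run_nil, run_cons, run_nil]
  have hk := (KK_pos a).ne'
  convert h1 using 1 <;> ring

/-- many blocks -/
def blks (w : List R) (n : ℕ) : ℕ → List (Ac R)
  | 0 => []
  | m + 1 => blks w n m ++ blk w n

theorem Tr.blks (w : List R) (n m : ℕ) {z pw pl : ℝ} {μ : St → ℝ}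
    (hpw : pw = ((GG (w.foldl (vstep a) eP) : ℝ) / (2 * KK a : ℕ) ^ (w.length + 1)) ^ (n + 1) /
          (2 * KK a : ℕ))
    (hpl : pl = ((BB (w.foldl (vstep a) eP) : ℝ) / (2 * KK a : ℕ) ^ (w.length + 1)) ^ (n + 1) /
          (2 * KK a : ℕ)) (hp : pw + pl ≠ 0)
    (h : Tr 0 0 eP 0 0 z 0 μ) :
    Tr 0 0 eP ((1 - z) * (pw / (pw + pl)) * (1 - (1 - (pw + pl)) ^ m))
      ((1 - z) * (pl / (pw + pl)) * (1 - (1 - (pw + pl)) ^ m)) z 0 (run a e (blks w n m) μ) := by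
  induction m with
  | zero => simpa [Stmt18.blks, run] using h
  | succ m ih =>
    have h1 := Tr.blk (a := a) (e := e) w n ih
    rw [← hpw, ← hpl] at h1
    rw [Stmt18.blks, run_append]
    have h2 : 1 - (1 - z) * (pw / (pw + pl)) * (1 - (1 - (pw + pl)) ^ m) -
        (1 - z) * (pl / (pw + pl)) * (1 - (1 - (pw + pl)) ^ m) - z =
        (1 - z) * (1 - (pw + pl)) ^ m := by
      field_simp
      ring
    rw [h2] at h1
    convert h1 using 1 <;> field_simp <;> ring

theorem tr_dd : Tr 0 0 eP 0 0 0 0 (dir .dd) := by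
  refine ⟨fun s => ?_, ?_, ?_, ?_, ?_, ?_, ?_, ?_⟩
  · unfold dir; split_ifs <;> norm_num
  all_goals simp [dir]

theorem nb_hs (w : List R) (n : ℕ) : ∀ x ∈ hs w n, nb x = 1 := by
  induction n with
  | zero => simp [hs]
  | succ n ih =>
    intro x hx
    simp only [hs, List.mem_append, List.mem_map, List.mem_singleton] at hx
    rcases hx with hx | ⟨r, -, rfl⟩ | rfl
    · exact ih x hx
    · rfl
    · rfl

theorem nb_blks (w : List R) (n m : ℕ) : ∀ x ∈ blks w n m, nb x = 1 := by
  induction m with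
  | zero => simp [blks]
  | succ m ih =>
    intro x hx
    simp only [blks, blk, List.mem_append, List.mem_map, List.mem_singleton] at hx
    rcases hx with hx | rfl | hx | ⟨r, -, rfl⟩ | rfl
    · exact ih x hx
    · rfl
    · exact nb_hs w n x hx
    · rfl
    · rfl

/-- shape of a distribution just after a bang -/
structure PB (μ : St → ℝ) : Prop where
  nn : ∀ s, 0 ≤ μ s
  tot : ∑ s, μ s = 1
  cp : ∀ m i j, μ (.cp m i j) = 0
  hw : μ .win = 0
  hl : μ .lose = 0

variable (a e)

theorem epoch {w : List R} (hw : BB (w.foldl (vstep a) eP) < GG (w.foldl (vstep a) eP))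
    {ε : ℝ} (hε : 0 < ε) : ∃ W : List (Ac R), (∀ x ∈ W, nb x = 1) ∧ ∀ μ : St → ℝ, PB μ →
      (∀ s, 0 ≤ run a e W μ s) ∧ ∑ s, run a e W μ s = 1 ∧ run a e W μ .zz = μ .zz ∧
      (1 - μ .zz) * (1 - ε) ≤ run a e W μ .win := by
  set G : ℝ := (GG (w.foldl (vstep a) eP) : ℝ) with hG
  set B : ℝ := (BB (w.foldl (vstep a) eP) : ℝ) with hB
  have hGB : B < G := by rw [hB, hG]; exact_mod_cast hw
  have hB0 : 0 ≤ B := by positivity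
  have hG0 : 0 < G := lt_of_le_of_lt hB0 hGB
  have hK := KK_pos a
  set K : ℝ := ((2 * KK a : ℕ) : ℝ) with hKdef
  obtain ⟨n, hn⟩ := exists_pow_lt_of_lt_one (half_pos hε) ((div_lt_one hG0).2 hGB)
  have hn' : (B / G) ^ (n + 1) ≤ ε / 2 := by
    refine le_trans ?_ hn.le
    exact pow_le_pow_of_le_one (by positivity) ((div_lt_one hG0).2 hGB).le (Nat.le_succ n)
  set pw : ℝ := (G / K ^ (w.length + 1)) ^ (n + 1) / K with hpw
  set pl : ℝ := (B / K ^ (w.length + 1)) ^ (n + 1) / K with hpl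
  have hpw0 : 0 < pw := by positivity
  have hpl0 : 0 ≤ pl := by positivity
  have hpp : pl ≤ ε / 2 * pw := by
    have : pl = (B / G) ^ (n + 1) * pw := by
      rw [hpl, hpw]
      simp only [div_pow]
      field_simp
    rw [this]
    gcongr
  have hp1 : pw + pl ≤ 1 := by
    have h1 := Tr.blks (a := a) (e := e) w n 1 hpw hpl (by positivity) tr_dd
    have h2 := good_parts h1.nn h1.tot
    rw [h1.hw, h1.hl, h1.hz] at h2
    have h3 : (1 - 0) * (pw / (pw + pl)) * (1 - (1 - (pw + pl)) ^ 1) +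
      (1 - 0) * (pl / (pw + pl)) * (1 - (1 - (pw + pl)) ^ 1) + 0 = pw + pl := by
      field_simp
      ring
    linarith
  obtain ⟨m, hm⟩ := exists_pow_lt_of_lt_one (half_pos hε) (by linarith : 1 - (pw + pl) < 1)
  have hm0 : 0 ≤ (1 - (pw + pl)) ^ m := pow_nonneg (by linarith) _
  have hm1 : (1 - (pw + pl)) ^ m ≤ 1 := pow_le_one₀ (by linarith) (by linarith)
  refine ⟨[.dollar] ++ blks w n m, ?_, ?_⟩
  · intro x hx
    rcases List.mem_append.1 hx with h | h
    · rw [List.mem_singleton.1 h]; rfl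
    · exact nb_blks w n m x h
  · intro μ hμ
    have h0 : Tr 0 0 eP 0 0 (μ .zz) (μ .tgt) μ :=
      ⟨hμ.nn, hμ.tot, by simp [hμ.cp], by simp [hμ.cp], hμ.hw, hμ.hl, rfl, rfl⟩
    have h1 := Tr.dollar (a := a) (e := e) h0
    simp only [zero_mul, zero_div, add_zero] at h1
    have h2 := Tr.blks (a := a) (e := e) w n m hpw hpl (by positivity) h1
    rw [run_append, run_cons, run_nil]
    refine ⟨h2.nn, h2.tot, h2.hz, ?_⟩
    rw [h2.hw]
    have hz : μ .zz ≤ 1 := by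
      have := good_parts hμ.nn hμ.tot
      rw [hμ.hw, hμ.hl] at this
      linarith
    have h3 : 1 - ε / 2 ≤ pw / (pw + pl) := by
      rw [le_div_iff₀ (by positivity)]
      nlinarith
    have h5 : pw / (pw + pl) ≤ 1 := by
      rw [div_le_one (by positivity)]
      linarith
    have h4 : 1 - ε ≤ pw / (pw + pl) * (1 - (1 - (pw + pl)) ^ m) := by
      nlinarith
    rw [mul_assoc]
    exact mul_le_mul_of_nonneg_left h4 (by linarith)

theorem epoch_bang {w : List R} (hw : BB (w.foldl (vstep a) eP) < GG (w.foldl (vstep a) eP))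
    {ε : ℝ} (hε : 0 < ε) : ∃ W : List (Ac R), (∀ x ∈ W, nb x = 1) ∧ ∀ μ : St → ℝ, PB μ →
      PB (run a e (W ++ [.bang]) μ) ∧
      (1 - μ .zz) * (1 - ε) ≤ run a e (W ++ [.bang]) μ .tgt ∧
      run a e (W ++ [.bang]) μ .zz ≤ (if e then 1 / 2 else 1) * μ .zz + (1 - μ .zz) * ε := by
  obtain ⟨W, hW, h⟩ := epoch a e hw hε
  refine ⟨W, hW, fun μ hμ => ?_⟩
  obtain ⟨h0, h1, h2, h3⟩ := h μ hμ
  rw [run_append, run_cons, run_nil]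
  obtain ⟨hc, hwn, hls, htg, hz⟩ := push_bang a e (run a e W μ) h1
  refine ⟨⟨push_nonneg a e _ _ h0, by rw [push_sum, h1], hc, hwn, hls⟩, by rw [htg]; exact h3, ?_⟩
  rw [hz, h2]
  linarith
end YesCase

section Seq
variable {R : Type}

/-- concatenation of the first words -/
def cc {A : Type} (W : ℕ → List A) : ℕ → List A
  | 0 => []
  | n + 1 => cc W n ++ W n

theorem cc_mono {A : Type} (W : ℕ → List A) {i j : ℕ} (h : i ≤ j) : cc W i <+: cc W j := by
  induction h with
  | refl => exact List.prefix_refl _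
  | step _ ih => exact ih.trans (List.prefix_append _ _)

theorem cc_length {A : Type} (W : ℕ → List A) (hW : ∀ i, W i ≠ []) (i : ℕ) :
    i ≤ (cc W i).length := by
  induction i with
  | zero => simp
  | succ i ih =>
    have := List.length_pos_iff.2 (hW i)
    simp only [cc, List.length_append]
    omega

theorem exists_seq (V : ℕ → List (Ac R)) (hV : ∀ i, ∀ x ∈ V i, nb x = 1) :
    ∃ (act : ℕ → Ac R) (t : ℕ → ℕ), t 0 = 0 ∧ StrictMono t ∧
      (∀ n, nb (act n) ≠ 1 → ∃ j, n + 1 = t j) ∧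
      (∀ (M : Type) (f : Ac R → M → M) (μ : ℕ → M), (∀ n, μ (n + 1) = f (act n) (μ n)) →
        ∀ i, μ (t (i + 1)) = (V i ++ [Ac.bang]).foldl (fun ν x => f x ν) (μ (t i))) := by
  obtain ⟨W, hWdef⟩ : ∃ W : ℕ → List (Ac R), ∀ i, W i = V i ++ [.bang] := ⟨_, fun _ => rfl⟩
  have hW : ∀ i, W i ≠ [] := by intro i; simp [hWdef]
  have hl : ∀ n, n < (cc W (n + 1)).length := fun n => cc_length W hW (n + 1)
  let act : ℕ → Ac R := fun n => (cc W (n + 1)).get ⟨n, hl n⟩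
  have hact : ∀ i n (h : n < (cc W i).length), act n = (cc W i)[n] := by
    intro i n h
    show (cc W (n + 1)).get ⟨n, hl n⟩ = (cc W i)[n]
    rcases le_total (n + 1) i with h1 | h1
    · exact (cc_mono W h1).getElem (hl n)
    · exact ((cc_mono W h1).getElem h).symm
  refine ⟨act, fun i => (cc W i).length, rfl, ?_, ?_, ?_⟩
  · apply strictMono_nat_of_lt_succ
    intro i
    have := List.length_pos_iff.2 (hW i)
    simp only [cc, List.length_append]
    omega
  · have key : ∀ i n, n < (cc W i).length → nb (act n) ≠ 1 → ∃ j, n + 1 = (cc W j).length := by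
      intro i
      induction i with
      | zero => intro n h; simp [cc] at h
      | succ i ih =>
        intro n h hn
        by_cases h1 : n < (cc W i).length
        · exact ih n h1 hn
        · refine ⟨i + 1, ?_⟩
          rw [hact (i + 1) n h] at hn
          simp only [cc] at hn h ⊢
          rw [List.getElem_append_right (by omega)] at hn
          simp only [hWdef, List.length_append, List.length_singleton] at hn h ⊢
          by_cases h2 : n - (cc W i).length < (V i).length
          · rw [List.getElem_append_left h2] at hn
            exact absurd (hV i _ (List.getElem_mem _)) hn
          · omega
    intro n hn
    exact key (n + 1) n (hl n) hn
  · intro M f μ hμ i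
    have h1 : ∀ k (hk : k ≤ (W i).length), μ ((cc W i).length + k) =
        ((W i).take k).foldl (fun ν x => f x ν) (μ (cc W i).length) := by
      intro k
      induction k with
      | zero => simp
      | succ k ih =>
        intro hk
        have hk' : k < (W i).length := hk
        have h2 : act ((cc W i).length + k) = (W i)[k] := by
          rw [hact (i + 1) _ (by simp only [cc, List.length_append]; omega)]
          simp only [cc]
          rw [List.getElem_append_right (by omega)]
          simp
        rw [← add_assoc, hμ, ih (by omega), h2, List.take_succ_eq_append_getElem hk, List.foldl_append]
        rfl
    have h3 := h1 _ le_rfl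
    rw [List.take_length] at h3
    simp only [cc, List.length_append]
    rw [← hWdef i]
    exact h3
end Seq

section YesSeq
variable {R : Type} [Fintype R] (a : R → Fin 5 → Fin 5 → ℕ)

theorem yes_seq (e : Bool) {w : List R}
    (hw : BB (w.foldl (vstep a) eP) < GG (w.foldl (vstep a) eP)) :
    ∃ (act : ℕ → Ac R) (t : ℕ → ℕ), t 0 = 0 ∧ StrictMono t ∧
      (∀ n, nb (act n) ≠ 1 → ∃ j, n + 1 = t j) ∧
      (∀ (μ : ℕ → St → ℝ), PB (μ 0) → (∀ n, μ (n + 1) = push a e (act n) (μ n)) →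
        ∀ i, PB (μ (t i)) ∧
        (1 - μ (t i) .zz) * (1 - (1 / 2) ^ (i + 2)) ≤ μ (t (i + 1)) .tgt ∧
        μ (t (i + 1)) .zz ≤ (if e then 1 / 2 else 1) * μ (t i) .zz +
          (1 - μ (t i) .zz) * (1 / 2) ^ (i + 2)) := by
  choose V hV hV2 using fun i : ℕ => epoch_bang a e hw (ε := (1 / 2) ^ (i + 2)) (by positivity)
  obtain ⟨act, t, h0, hmono, hb, hrun⟩ := exists_seq V hV
  refine ⟨act, t, h0, hmono, hb, fun μ hμ0 hμ => ?_⟩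
  have h1 := hrun _ (push a e) μ hμ
  have h2 : ∀ i, PB (μ (t i)) := by
    intro i
    induction i with
    | zero => rw [h0]; exact hμ0
    | succ i ih => rw [h1]; exact (hV2 i _ ih).1
  intro i
  refine ⟨h2 i, ?_⟩
  rw [h1 i]
  exact (hV2 i _ (h2 i)).2

theorem PB.zz_le {μ : St → ℝ} (h : PB μ) : μ .zz ≤ 1 := by
  have := good_parts h.nn h.tot
  rw [h.hw, h.hl] at this
  linarith

theorem pb_dir_tgt : PB (dir .tgt) := by
  refine ⟨fun s => ?_, ?_, ?_, ?_, ?_⟩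
  · unfold dir; split_ifs <;> norm_num
  all_goals simp [dir]

theorem pb_dir_zz : PB (dir .zz) := by
  refine ⟨fun s => ?_, ?_, ?_, ?_, ?_⟩
  · unfold dir; split_ifs <;> norm_num
  all_goals simp [dir]

theorem yes_buchi {w : List R}
    (hw : BB (w.foldl (vstep a) eP) < GG (w.foldl (vstep a) eP)) :
    ∃ (act : ℕ → Ac R), ∀ (μ : ℕ → St → ℝ), μ 0 = dir .tgt →
      (∀ n, μ (n + 1) = push a false (act n) (μ n)) →
      ∀ N, ∃ n, N ≤ n ∧ 1 / 4 ≤ μ n .tgt := by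
  obtain ⟨act, t, h0, hmono, hb, h⟩ := yes_seq a false hw
  refine ⟨act, fun μ hμ0 hμ N => ?_⟩
  have h1 := h μ (by rw [hμ0]; exact pb_dir_tgt) hμ
  have hz : ∀ i, μ (t i) .zz ≤ 1 / 2 - (1 / 2) ^ (i + 1) := by
    intro i
    induction i with
    | zero => rw [h0, hμ0]; simp [dir]
    | succ i ih =>
      have h2 := (h1 i).2.2
      have h3 := (h1 i).1.nn .zz
      simp only [Bool.false_eq_true, if_false, one_mul] at h2
      have h4 : (0 : ℝ) < (1 / 2) ^ i := by positivity
      simp only [pow_succ] at h2 ih ⊢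
      nlinarith
  refine ⟨t (N + 1), (Nat.le_succ N).trans (hmono.le_apply), ?_⟩
  refine le_trans ?_ (h1 N).2.1
  have h4 : (0 : ℝ) < (1 / 2) ^ N := by positivity
  have h5 : (1 / 2 : ℝ) ^ N ≤ 1 := pow_le_one₀ (by norm_num) (by norm_num)
  have := hz N
  simp only [pow_succ] at this ⊢
  nlinarith

theorem yes_cobuchi {w : List R}
    (hw : BB (w.foldl (vstep a) eP) < GG (w.foldl (vstep a) eP)) :
    ∃ (act : ℕ → Ac R) (t : ℕ → ℕ), (∀ n, nb (act n) ≠ 1 → ∃ j, n + 1 = t j) ∧ StrictMono t ∧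
      ∀ (μ : ℕ → St → ℝ), μ 0 = dir .zz →
      (∀ n, μ (n + 1) = push a true (act n) (μ n)) →
      ∀ i, μ (t i) .zz ≤ 2 * (3 / 4) ^ i := by
  obtain ⟨act, t, h0, hmono, hb, h⟩ := yes_seq a true hw
  refine ⟨act, t, hb, hmono, fun μ hμ0 hμ i => ?_⟩
  have h1 := h μ (by rw [hμ0]; exact pb_dir_zz) hμ
  induction i with
  | zero => rw [h0, hμ0]; norm_num [dir]
  | succ i ih =>
    have h2 := (h1 i).2.2
    have h3 := (h1 i).1.nn .zz
    simp only [if_true] at h2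
    have h4 : (0 : ℝ) < (1 / 2) ^ i := by positivity
    have h5 : (1 / 2 : ℝ) ^ i ≤ (3 / 4) ^ i := by apply pow_le_pow_left₀ <;> norm_num
    simp only [pow_succ] at h2 ⊢
    nlinarith
end YesSeq

section Law
open MeasureTheory
variable {R : Type} [Fintype R] [Fintype (Ac R)] {S A : Type} [Fintype S] [MeasurableSpace S]
  [MeasurableSingletonClass S]

/-- the data of a play of the model under a blind strategy -/
structure Play (a : R → Fin 5 → Fin 5 → ℕ) (e : Bool) (es : St ≃ S) (ea : Ac R ≃ A)
    (δ : S → A → S → ℝ≥0∞) (σ : List S → A → ℝ≥0∞) (s0 : St) (P : Measure (ℕ → S)) : Prop where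
  hδ : ∀ s x t, δ (es s) (ea x) (es t) = ENNReal.ofReal (DD a (KK a) e s x t)
  hσ1 : IsStrat σ
  hσ : ∀ h h' : List S, h.length = h'.length → σ h = σ h'
  prob : IsProbabilityMeasure P
  hP : ∀ l : List S, P (Cyl (es s0 :: l)) = listProb δ σ [] (es s0) l

variable {a : R → Fin 5 → Fin 5 → ℕ} {e : Bool} {es : St ≃ S} {ea : Ac R ≃ A}
    {δ : S → A → S → ℝ≥0∞} {σ : List S → A → ℝ≥0∞} {s0 : St} {P : Measure (ℕ → S)}

theorem Play.σ_ne (h : Play a e es ea δ σ s0 P) (l : List S) (x : A) : σ l x ≠ ⊤ := by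
  have h1 : σ l x ≤ 1 := by rw [← h.hσ1 l]; exact ENNReal.le_tsum x
  exact ne_top_of_le_ne_top ENNReal.one_ne_top h1

theorem Play.α_sum (h : Play a e es ea δ σ s0 P) (l : List S) :
    ∑ x, (σ l (ea x)).toReal = 1 := by
  rw [← ENNReal.toReal_sum fun x _ => h.σ_ne l (ea x)]
  have h1 := h.hσ1 l
  rw [← Equiv.tsum_eq ea, tsum_fintype] at h1
  rw [h1]; rfl

theorem Play.kern (h : Play a e es ea δ σ s0 P) (l : List S) (s t : St) :
    (∑' x, σ l x * δ (es s) x (es t)).toReal =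
      ∑ x, (σ l (ea x)).toReal * DD a (KK a) e s x t := by
  rw [← Equiv.tsum_eq ea, tsum_fintype, ENNReal.toReal_sum]
  · refine Finset.sum_congr rfl fun x _ => ?_
    rw [ENNReal.toReal_mul, h.hδ, ENNReal.toReal_ofReal (DD_nonneg a e s x t)]
  · intro x _
    rw [h.hδ]
    exact ENNReal.mul_ne_top (h.σ_ne l _) ENNReal.ofReal_ne_top

theorem Play.joint (h : Play a e es ea δ σ s0 P) (n : ℕ) (s t : St) :
    P.real {ρ | ρ n = es s ∧ ρ (n + 1) = es t} = P.real {ρ | ρ n = es s} *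
      ∑ x, (σ (List.replicate (n + 1) (es s0)) (ea x)).toReal * DD a (KK a) e s x t := by
  have := h.prob
  rw [measureReal_def, play_joint δ σ (es s0) h.hσ P h.hP n, ENNReal.toReal_mul, h.kern,
    measureReal_def]

theorem Play.zero (h : Play a e es ea δ σ s0 P) :
    (fun s => P.real {ρ | ρ 0 = es s}) = dir s0 := by
  have := h.prob
  have h0 := play_zero δ σ (es s0) P h.hP
  funext s
  by_cases hs : s = s0
  · subst hs
    simp [dir, measureReal_def, h0]
  · simp only [dir, hs, if_false]
    have h1 : P {ρ | ρ 0 = es s0}ᶜ = 0 := (prob_compl_eq_zero_iff (coord_meas _ _)).2 h0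
    rw [measureReal_def, measure_mono_null ?_ h1]
    · rfl
    · intro ρ hρ hρ'
      simp only [Set.mem_ofPred_eq] at hρ hρ'
      exact hs (es.injective (hρ.symm.trans hρ'))

theorem Play.succ (h : Play a e es ea δ σ s0 P) (n : ℕ) :
    (fun s => P.real {ρ | ρ (n + 1) = es s}) = fun t =>
      ∑ x, (σ (List.replicate (n + 1) (es s0)) (ea x)).toReal *
        push a e x (fun s => P.real {ρ | ρ n = es s}) t := by
  have := h.prob
  funext t
  have h1 : {ρ : ℕ → S | ρ (n + 1) = es t} = ⋃ s : St, {ρ | ρ n = es s ∧ ρ (n + 1) = es t} := by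
    ext ρ
    simp only [Set.mem_ofPred_eq, Set.mem_iUnion]
    exact ⟨fun hh => ⟨es.symm (ρ n), by simp, hh⟩, fun ⟨_, _, hh⟩ => hh⟩
  have h2 : P.real {ρ : ℕ → S | ρ (n + 1) = es t} =
      ∑ s : St, P.real {ρ | ρ n = es s ∧ ρ (n + 1) = es t} := by
    rw [h1, measureReal_iUnion_fintype]
    · intro s s' hs
      rw [Function.onFun, Set.disjoint_left]
      rintro ρ ⟨h3, _⟩ ⟨h4, _⟩
      exact hs (es.injective (h3.symm.trans h4))
    · intro s
      exact (coord_meas n (es s)).inter (coord_meas (n + 1) (es t))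
  rw [h2]
  simp only [h.joint, push, Finset.mul_sum]
  rw [Finset.sum_comm]
  refine Finset.sum_congr rfl fun x _ => Finset.sum_congr rfl fun s _ => ?_
  ring

theorem Play.buchi_no (h : Play a false es ea δ σ .tgt P)
    (hno : ∀ w : List R, GG (w.foldl (vstep a) eP) ≤ BB (w.foldl (vstep a) eP)) :
    P {ρ | ∀ N, ∃ n, N ≤ n ∧ ρ n = es .tgt} = 0 := by
  have := h.prob
  have h1 := no_buchi a hno (fun n s => P.real {ρ | ρ n = es s}) _
    (fun n x => ENNReal.toReal_nonneg) (fun n => h.α_sum _) h.zero h.succ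
  have h2 : Summable fun n => P.real {ρ | ρ (n + 1) = es .tgt} :=
    summable_of_sum_range_le (fun n => measureReal_nonneg) h1
  have h3 : ∑' n, P {ρ | ρ (n + 1) = es .tgt} ≠ ⊤ := by
    have h4 := h2.tsum_ofReal_ne_top
    simpa [measureReal_def] using h4
  have h4 := measure_setOfPred_frequently_eq_zero h3
  refine measure_mono_null ?_ h4
  intro ρ hρ
  simp only [Set.mem_ofPred_eq, Filter.frequently_atTop] at hρ ⊢
  intro N
  obtain ⟨n, hn, hn'⟩ := hρ (N + 1)
  refine ⟨n - 1, by omega, ?_⟩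
  rw [Nat.sub_add_cancel (by omega)]
  exact hn'

theorem io_ge [IsProbabilityMeasure P] (u : S) (c : ℝ)
    (hc : ∀ N, ∃ n, N ≤ n ∧ c ≤ P.real {ρ | ρ n = u}) :
    ENNReal.ofReal c ≤ P {ρ | ∀ N, ∃ n, N ≤ n ∧ ρ n = u} := by
  have h1 : {ρ : ℕ → S | ∀ N, ∃ n, N ≤ n ∧ ρ n = u} =
      ⋂ N, {ρ | ∃ n, N ≤ n ∧ ρ n = u} := by
    ext ρ; simp
  have hm : ∀ N, MeasurableSet {ρ : ℕ → S | ∃ n, N ≤ n ∧ ρ n = u} := by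
    intro N
    have : {ρ : ℕ → S | ∃ n, N ≤ n ∧ ρ n = u} = ⋃ n, ⋃ (_ : N ≤ n), {ρ | ρ n = u} := by
      ext ρ; simp
    rw [this]
    exact MeasurableSet.iUnion fun n => MeasurableSet.iUnion fun _ => coord_meas n u
  have ha : Antitone fun N => {ρ : ℕ → S | ∃ n, N ≤ n ∧ ρ n = u} := by
    intro N M hNM ρ hρ
    obtain ⟨n, hn, hn'⟩ := hρ
    exact ⟨n, hNM.trans hn, hn'⟩
  have h2 := tendsto_measure_iInter_atTop (μ := P) (fun N => (hm N).nullMeasurableSet) ha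
    ⟨0, measure_ne_top _ _⟩
  rw [h1]
  refine ge_of_tendsto' h2 fun N => ?_
  obtain ⟨n, hn, hn'⟩ := hc N
  refine le_trans (ENNReal.ofReal_le_ofReal hn') ?_
  rw [ofReal_measureReal]
  refine measure_mono fun ρ hρ => ?_
  exact ⟨n, hn, hρ⟩

theorem Play.cobuchi_no (h : Play a true es ea δ σ .zz P)
    (hno : ∀ w : List R, GG (w.foldl (vstep a) eP) ≤ BB (w.foldl (vstep a) eP)) :
    P {ρ | ∃ N, ∀ n, N ≤ n → ρ n ≠ es .zz} ≠ 1 := by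
  have := h.prob
  have h1 := no_cobuchi a hno (fun n s => P.real {ρ | ρ n = es s}) _
    (fun n x => ENNReal.toReal_nonneg) (fun n => h.α_sum _) h.zero h.succ
  have h2 := io_ge (P := P) (es .zz) (1 / 2) (fun N => ⟨N, le_rfl, h1 N⟩)
  intro h3
  have h4 : {ρ : ℕ → S | ∃ N, ∀ n, N ≤ n → ρ n ≠ es .zz} =
      {ρ | ∀ N, ∃ n, N ≤ n ∧ ρ n = es .zz}ᶜ := by
    ext ρ
    simp
  have hm : MeasurableSet {ρ : ℕ → S | ∀ N, ∃ n, N ≤ n ∧ ρ n = es .zz} := by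
    have : {ρ : ℕ → S | ∀ N, ∃ n, N ≤ n ∧ ρ n = es .zz} =
        ⋂ N, ⋃ n, ⋃ (_ : N ≤ n), {ρ | ρ n = es .zz} := by
      ext ρ; simp
    rw [this]
    exact MeasurableSet.iInter fun N => MeasurableSet.iUnion fun n =>
      MeasurableSet.iUnion fun _ => coord_meas n _
  rw [h4, prob_compl_eq_one_iff hm] at h3
  rw [h3] at h2
  simp at h2

/-- the strategy playing a fixed sequence of actions -/
noncomputable def fixS (ea : Ac R ≃ A) (act : ℕ → Ac R) : List S → A → ℝ≥0∞ :=
  open Classical in fun h x => if x = ea (act (h.length - 1)) then 1 else 0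

theorem Play.fix_succ {act : ℕ → Ac R} (h : Play a e es ea δ (fixS ea act) s0 P) (n : ℕ) :
    (fun s => P.real {ρ | ρ (n + 1) = es s}) =
        push a e (act n) (fun s => P.real {ρ | ρ n = es s}) := by
  classical
  rw [h.succ n]
  funext t
  rw [Finset.sum_eq_single (act n)]
  · simp [fixS]
  · intro x _ hx
    simp [fixS, hx]
  · simp

theorem buchi_yes {w : List R} (hw : BB (w.foldl (vstep a) eP) < GG (w.foldl (vstep a) eP)) :
    ∃ act : ℕ → Ac R, ∀ P : Measure (ℕ → S), Play a false es ea δ (fixS ea act) .tgt P →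
      0 < P {ρ | ∀ N, ∃ n, N ≤ n ∧ ρ n = es .tgt} := by
  obtain ⟨act, h1⟩ := yes_buchi a hw
  refine ⟨act, fun P h => ?_⟩
  have := h.prob
  refine lt_of_lt_of_le ?_ (io_ge (P := P) (es .tgt) (1 / 4)
    (h1 (fun n s => P.real {ρ | ρ n = es s}) h.zero h.fix_succ))
  simp

theorem DD_zz (x : Ac R) (hx : nb x = 1) (s : St) (hs : s ≠ .zz) :
    DD a (KK a) e s x .zz = 0 := by
  rw [DD_ne _ _ _ _ _ (by simp)]
  cases x <;> cases s <;> simp [nb] at hx hs <;> simp [mmain, mspec, mstay, nb]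

theorem cobuchi_yes {w : List R} (hw : BB (w.foldl (vstep a) eP) < GG (w.foldl (vstep a) eP)) :
    ∃ act : ℕ → Ac R, ∀ P : Measure (ℕ → S), Play a true es ea δ (fixS ea act) .zz P →
      P {ρ | ∃ N, ∀ n, N ≤ n → ρ n ≠ es .zz} = 1 := by
  classical
  obtain ⟨act, t, hb, hmono, h1⟩ := yes_cobuchi a hw
  refine ⟨act, fun P h => ?_⟩
  have := h.prob
  have h2 := h1 (fun n s => P.real {ρ | ρ n = es s}) h.zero h.fix_succ
  have h3 : Summable fun i => P.real {ρ | ρ (t i) = es .zz} := by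
    refine Summable.of_nonneg_of_le (fun _ => measureReal_nonneg) h2 ?_
    exact (summable_geometric_of_lt_one (by norm_num) (by norm_num)).mul_left 2
  have h4 : ∑' i, P {ρ | ρ (t i) = es .zz} ≠ ⊤ := by
    have h4 := h3.tsum_ofReal_ne_top
    simpa [measureReal_def] using h4
  have h5 := measure_setOfPred_frequently_eq_zero h4
  have h6 : ∀ᵐ ρ ∂P, ∀ n, nb (act n) = 1 → ρ n ≠ es .zz → ρ (n + 1) ≠ es .zz := by
    rw [ae_all_iff]
    intro n
    by_cases hn : nb (act n) = 1
    · have h7 : ∀ s : St, ∀ᵐ ρ ∂P, s ≠ .zz → ¬ (ρ n = es s ∧ ρ (n + 1) = es .zz) := by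
        intro s
        by_cases hs : s = .zz
        · simp [hs]
        · have h8 : P {ρ | ρ n = es s ∧ ρ (n + 1) = es .zz} = 0 := by
            have h9 := h.joint n s .zz
            rw [Finset.sum_eq_zero, mul_zero] at h9
            · exact (measureReal_eq_zero_iff).1 h9
            · intro x _
              by_cases hx : x = act n
              · rw [hx, DD_zz _ hn s hs, mul_zero]
              · simp [fixS, hx]
          rw [ae_iff]
          refine measure_mono_null ?_ h8
          intro ρ hρ
          simp only [Set.mem_ofPred_eq] at hρ ⊢
          tauto
      filter_upwards [ae_all_iff.2 h7] with ρ hρ _ hz hz'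
      refine hρ (es.symm (ρ n)) ?_ ⟨by simp, hz'⟩
      intro h10
      apply hz
      rw [← h10]; simp
    · simp [hn]
  rw [← prob_compl_eq_zero_iff₀]
  · have h7 : ∀ᵐ ρ ∂P, ∃ N, ∀ n, N ≤ n → ρ n ≠ es .zz := by
      filter_upwards [h6, measure_eq_zero_iff_ae_notMem.1 h5] with ρ hρ hρ'
      simp only [Set.mem_ofPred_eq, Filter.not_frequently, Filter.eventually_atTop] at hρ'
      obtain ⟨i, hi⟩ := hρ'
      refine ⟨t i, fun n hn => ?_⟩
      induction n, hn using Nat.le_induction with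
      | base => exact hi i le_rfl
      | succ n hn ih =>
        by_cases hb1 : nb (act n) = 1
        · exact hρ n hb1 ih
        · obtain ⟨j, hj⟩ := hb n hb1
          rw [hj]
          apply hi
          rw [← hmono.le_iff_le]
          omega
    exact h7
  · have : {ρ : ℕ → S | ∃ N, ∀ n, N ≤ n → ρ n ≠ es .zz} =
        ⋃ N, ⋂ n, ⋂ (_ : N ≤ n), {ρ | ρ n = es .zz}ᶜ := by
      ext ρ; simp
    rw [this]
    exact (MeasurableSet.iUnion fun N => MeasurableSet.iInter fun n =>
      MeasurableSet.iInter fun _ => (coord_meas n _).compl).nullMeasurableSet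
end Law

section Inst
open MeasureTheory
variable {R : Type} [Fintype R]

theorem comp_add {f g : ℕ → ℕ} (hf : Computable f) (hg : Computable g) :
    Computable fun n => f n + g n :=
  Primrec.nat_add.to_comp.comp hf hg

theorem comp_mul {f g : ℕ → ℕ} (hf : Computable f) (hg : Computable g) :
    Computable fun n => f n * g n :=
  Primrec.nat_mul.to_comp.comp hf hg

theorem comp_sub {f g : ℕ → ℕ} (hf : Computable f) (hg : Computable g) :
    Computable fun n => f n - g n :=
  Primrec.nat_sub.to_comp.comp hf hg

theorem comp_sum {ι : Type} [Fintype ι] {f : ι → ℕ → ℕ} (hf : ∀ i, Computable (f i)) :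
    Computable fun n => ∑ i, f i n := by
  classical
  suffices h : ∀ s : Finset ι, Computable fun n => ∑ i ∈ s, f i n from h _
  intro s
  induction s using Finset.induction_on with
  | empty => simpa using Computable.const 0
  | insert i s hi ih =>
    simp only [Finset.sum_insert hi]
    exact comp_add (hf i) ih

variable {a : ℕ → R → Fin 5 → Fin 5 → ℕ}


theorem comp_KK (ha : ∀ r i j, Computable fun n => a n r i j) : Computable fun n => KK (a n) := by
  unfold KK
  exact comp_add (Computable.const 4) (comp_sum fun r => comp_sum fun i => comp_sum fun j =>
    comp_sum fun i' => comp_sum fun j' => comp_mul (ha r i i') (ha r j j'))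

theorem comp_mmain (ha : ∀ r i j, Computable fun n => a n r i j)
    (e : Bool) (s : St) (x : Ac R) (t : St) :
    Computable fun n => mmain (a n) (KK (a n)) e s x t := by
  have hK := comp_KK ha
  have h2K := comp_mul (Computable.const 2) hK
  unfold mmain
  refine comp_add ?_ (comp_mul (Computable.const _) ?_)
  · have h0 : Computable fun _ : ℕ => 0 := Computable.const 0
    cases x <;> rcases s with _ | _ | _ | _ | _ | ⟨m, i, j⟩ <;>
      rcases t with _ | _ | _ | _ | _ | ⟨m', i', j'⟩ <;> (try cases m) <;> (try cases m') <;>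
      (try cases e) <;>
      first
        | exact h0
        | exact Computable.const _
        | exact h2K
        | exact hK
        | exact comp_mul (ha _ _ _) (ha _ _ _)
  · cases s <;> cases t <;> first | exact h2K | exact Computable.const _

theorem comp_mnum (ha : ∀ r i j, Computable fun n => a n r i j)
    (e : Bool) (s : St) (x : Ac R) (t : St) :
    Computable fun n => mnum (a n) (KK (a n)) e s x t := by
  unfold mnum
  refine comp_add (comp_mmain ha e s x t) ?_
  by_cases ht : t = .dd
  · simp only [ht, if_true]
    exact comp_sub (comp_mul (Computable.const 2) (comp_KK ha)) (comp_sum fun u => comp_mmain ha e s x u)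
  · simp only [ht, if_false]
    exact Computable.const 0

end Inst

section Final
open MeasureTheory
variable {R : Type} [Fintype R] {k m : ℕ}

/-- initial state -/
def ini (e : Bool) : St := if e then .zz else .tgt

/-- the target list -/
def tl (e : Bool) (es : St ≃ Fin k) : List ℕ :=
  if e then ((List.finRange k).filter (fun u => u ≠ es .zz)).map (fun u => u.1) else [(es .tgt).1]

/-- the instance built from the matrices -/
def mkI (e : Bool) (es : St ≃ Fin k) (ea : Ac R ≃ Fin m) (a : R → Fin 5 → Fin 5 → ℕ) : PInst :=
  ⟨k, m, 1, List.ofFn fun s => List.ofFn fun x => List.ofFn fun t =>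
      (mnum a (KK a) e (es.symm s) (ea.symm x) (es.symm t), 2 * KK a),
    [], (es (ini e)).1, tl e es⟩

theorem prim_inst : Primrec (fun x => instEquiv.symm x) := Primrec.of_equiv_symm (e := instEquiv)

theorem comp_tup {f : ℕ → List (List (List (ℕ × ℕ)))} (hf : Computable f) (k m l s : ℕ)
    (o T : List ℕ) : Computable fun n => (k, m, l, f n, o, s, T) :=
  (Computable.const k).pair ((Computable.const m).pair ((Computable.const l).pair
    (hf.pair ((Computable.const o).pair ((Computable.const s).pair (Computable.const T))))))

theorem comp_symm {f : ℕ → List (List (List (ℕ × ℕ)))} (hf : Computable f) (k m l s : ℕ)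
    (o T : List ℕ) : Computable fun n => instEquiv.symm (k, m, l, f n, o, s, T) :=
  prim_inst.to_comp.comp (comp_tup hf k m l s o T)

theorem comp_inst {f : ℕ → List (List (List (ℕ × ℕ)))} (hf : Computable f) (k m l s : ℕ)
    (o T : List ℕ) : Computable fun n => (⟨k, m, l, f n, o, s, T⟩ : PInst) :=
  comp_symm hf k m l s o T

theorem comp_mkI {a : ℕ → R → Fin 5 → Fin 5 → ℕ} (ha : ∀ r i j, Computable fun n => a n r i j)
    (e : Bool) (es : St ≃ Fin k) (ea : Ac R ≃ Fin m) :
    Computable fun n => mkI e es ea (a n) := by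
  have h0 : ∀ s x t, Computable fun n =>
      (mnum (a n) (KK (a n)) e s x t, 2 * KK (a n)) := fun s x t =>
    (comp_mnum ha e s x t).pair (comp_mul (Computable.const 2) (comp_KK ha))
  have h1 : Computable fun n => List.ofFn fun s : Fin k => List.ofFn fun x : Fin m =>
      List.ofFn fun t : Fin k =>
      (mnum (a n) (KK (a n)) e (es.symm s) (ea.symm x) (es.symm t), 2 * KK (a n)) := by
    refine Computable.list_ofFn fun s => ?_
    refine Computable.list_ofFn fun x => ?_
    refine Computable.list_ofFn fun t => ?_
    exact h0 _ _ _
  exact comp_inst h1 _ _ _ _ _ _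

variable (e : Bool) (es : St ≃ Fin k) (ea : Ac R ≃ Fin m) (a : R → Fin 5 → Fin 5 → ℕ)

theorem δ_mkI (s : St) (x : Ac R) (t : St) :
    δof (mkI e es ea a) (es s) (ea x) (es t) = ENNReal.ofReal (DD a (KK a) e s x t) := by
  have hk := KK_pos a
  rw [DD, ENNReal.ofReal_div_of_pos hk, ENNReal.ofReal_natCast, ENNReal.ofReal_natCast]
  simp [δof, dprob, mkI, List.getD_eq_getElem?_getD]

theorem valid_mkI : Valid (mkI e es ea a) := by
  refine ⟨Fin.pos (es .zz), Fin.pos (ea .bang), (es (ini e)).2, by simp [mkI], fun s x => ?_⟩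
  obtain ⟨s, rfl⟩ := es.surjective s
  obtain ⟨x, rfl⟩ := ea.surjective x
  rw [tsum_fintype]
  have h1 : ∑ t : Fin k, δof (mkI e es ea a) (es s) (ea x) t =
      ∑ t : St, δof (mkI e es ea a) (es s) (ea x) (es t) := (Equiv.sum_comp es _).symm
  refine h1.trans ?_
  simp only [δ_mkI]
  rw [← ENNReal.ofReal_sum_of_nonneg fun t _ => DD_nonneg a e s x t, DD_sum, ENNReal.ofReal_one]

theorem init_mkI (hk : 0 < (mkI e es ea a).k) : init (mkI e es ea a) hk = es (ini e) := by
  apply Fin.ext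
  exact Nat.mod_eq_of_lt (es (ini e)).2

theorem obs_mkI {σ : List (Fin k) → Fin m → ℝ≥0∞} :
    ObsBased (obsof (mkI e es ea a)) σ ↔ ∀ h h' : List (Fin k), h.length = h'.length → σ h = σ h' := by
  have h1 : ∀ h : List (Fin k), h.map (obsof (mkI e es ea a)) = List.replicate h.length 0 := by
    intro h
    rw [List.eq_replicate_iff]
    refine ⟨List.length_map _, ?_⟩
    intro b hb
    obtain ⟨u, -, rfl⟩ := List.mem_map.1 hb
    rfl
  constructor
  · intro h l l' hl
    apply h l l'
    rw [h1, h1, hl]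
  · intro h l l' hl
    apply h
    have := congrArg List.length hl
    rwa [List.length_map, List.length_map] at this

theorem play_mkI [Fintype (Ac R)] {σ : List (Fin k) → Fin m → ℝ≥0∞} (hk : 0 < (mkI e es ea a).k)
    {Pr : Fin k → (List (Fin k) → Fin m → ℝ≥0∞) → Measure (ℕ → Fin k)}
    (hPr : IsPlayMeasure (δof (mkI e es ea a)) Pr) (h1 : IsStrat σ)
    (h2 : ObsBased (obsof (mkI e es ea a)) σ) :
    Play a e es ea (δof (mkI e es ea a)) σ (ini e) (Pr (init (mkI e es ea a) hk) σ) := by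
  obtain ⟨h3, h4⟩ := hPr (init (mkI e es ea a) hk) σ h1
  refine ⟨δ_mkI e es ea a, h1, (obs_mkI e es ea a).1 h2, h3, ?_⟩
  rw [init_mkI] at h4 ⊢
  exact h4

theorem buchi_mkI : BuchiSet (mkI false es ea a) =
    {ρ : ℕ → Fin k | ∀ N, ∃ n, N ≤ n ∧ ρ n = es .tgt} := by
  refine Set.ext fun (ρ : ℕ → Fin k) => ?_
  have : ∀ n, ((ρ n).1 ∈ tl false es ↔ ρ n = es .tgt) := by
    intro n
    simp only [tl, Bool.false_eq_true, if_false, List.mem_singleton]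
    exact Fin.val_inj
  show (∀ N, ∃ n, N ≤ n ∧ (ρ n).1 ∈ tl false es) ↔ ∀ N, ∃ n, N ≤ n ∧ ρ n = es .tgt
  simp only [this]

theorem cobuchi_mkI : CoBuchiSet (mkI true es ea a) =
    {ρ : ℕ → Fin k | ∃ N, ∀ n, N ≤ n → ρ n ≠ es .zz} := by
  refine Set.ext fun (ρ : ℕ → Fin k) => ?_
  have : ∀ n, ((ρ n).1 ∈ tl true es ↔ ρ n ≠ es .zz) := by
    intro n
    simp only [tl, if_true, List.mem_map, List.mem_filter, List.mem_finRange, true_and,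
      decide_eq_true_eq]
    constructor
    · rintro ⟨u, hu, hu'⟩
      rwa [Fin.val_inj.1 hu'] at hu
    · intro h
      exact ⟨_, h, rfl⟩
  show (∃ N, ∀ n, N ≤ n → (ρ n).1 ∈ tl true es) ↔ ∃ N, ∀ n, N ≤ n → ρ n ≠ es .zz
  simp only [this]

theorem fixS_strat {S : Type} (act : ℕ → Ac R) : IsStrat (fixS (S := S) ea act) := by
  intro h
  rw [tsum_eq_single (ea (act (h.length - 1)))]
  · simp [fixS]
  · intro b hb
    simp [fixS, hb]

theorem fixS_pure {S : Type} (act : ℕ → Ac R) : IsPure (fixS (S := S) ea act) := by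
  intro h
  refine ⟨ea (act (h.length - 1)), fun b => ?_⟩
  by_cases hb : b = ea (act (h.length - 1)) <;> simp [fixS, hb]

theorem fixS_len {S : Type} (act : ℕ → Ac R) (h h' : List S) (hh : h.length = h'.length) :
    fixS ea act h = fixS ea act h' := by
  unfold fixS
  rw [hh]

theorem fixS_obs (act : ℕ → Ac R) : ObsBased (obsof (mkI e es ea a)) (fixS ea act) := by
  refine (obs_mkI e es ea a).2 fun h h' hh => ?_
  exact fixS_len ea act h h' hh

theorem exists_pm : ∃ Pr : Fin k → (List (Fin k) → Fin m → ℝ≥0∞) → Measure (ℕ → Fin k),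
    IsPlayMeasure (δof (mkI e es ea a)) Pr := by
  have : Nonempty (Fin k) := ⟨es .zz⟩
  exact exists_play (S := Fin k) (A := Fin m) _ (valid_mkI e es ea a).2.2.2.2

variable {es ea a}

theorem no_B (hno : ∀ w : List R, GG (w.foldl (vstep a) eP) ≤ BB (w.foldl (vstep a) eP)) :
    ¬ YesBuchiPos (mkI false es ea a) := by
  rintro ⟨hk, -, h⟩
  have : Fintype (Ac R) := Fintype.ofFinite _
  obtain ⟨Pr, hPr⟩ := exists_pm false es ea a
  obtain ⟨σ, h1, h2, h3⟩ := h Pr hPr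
  rw [buchi_mkI] at h3
  exact h3.ne' ((play_mkI false es ea a hk hPr h1 h2).buchi_no hno)

theorem no_C (hno : ∀ w : List R, GG (w.foldl (vstep a) eP) ≤ BB (w.foldl (vstep a) eP)) :
    ¬ YesCoBuchiAS (mkI true es ea a) := by
  rintro ⟨hk, -, h⟩
  have : Fintype (Ac R) := Fintype.ofFinite _
  obtain ⟨Pr, hPr⟩ := exists_pm true es ea a
  obtain ⟨σ, h1, h2, h3⟩ := h Pr hPr
  rw [cobuchi_mkI] at h3
  exact (play_mkI true es ea a hk hPr h1 h2).cobuchi_no hno h3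

theorem yes_B {w : List R} (hw : BB (w.foldl (vstep a) eP) < GG (w.foldl (vstep a) eP)) :
    YesBuchiPosPure (mkI false es ea a) := by
  have : Fintype (Ac R) := Fintype.ofFinite _
  refine ⟨(valid_mkI false es ea a).1, valid_mkI _ _ _ _, fun Pr hPr => ?_⟩
  obtain ⟨act, h⟩ := buchi_yes (es := es) (ea := ea) (δ := δof (mkI false es ea a)) hw
  refine ⟨fixS ea act, fixS_strat ea act, fixS_pure ea act, fixS_obs false es ea a act, ?_⟩
  rw [buchi_mkI]
  exact h _ (play_mkI false es ea a _ hPr (fixS_strat ea act) (fixS_obs false es ea a act))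

theorem yes_C {w : List R} (hw : BB (w.foldl (vstep a) eP) < GG (w.foldl (vstep a) eP)) :
    YesCoBuchiASPure (mkI true es ea a) := by
  have : Fintype (Ac R) := Fintype.ofFinite _
  refine ⟨(valid_mkI true es ea a).1, valid_mkI _ _ _ _, fun Pr hPr => ?_⟩
  obtain ⟨act, h⟩ := cobuchi_yes (es := es) (ea := ea) (δ := δof (mkI true es ea a)) hw
  refine ⟨fixS ea act, fixS_strat ea act, fixS_pure ea act, fixS_obs true es ea a act, ?_⟩
  rw [cobuchi_mkI]
  exact h _ (play_mkI true es ea a _ hPr (fixS_strat ea act) (fixS_obs true es ea a act))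

theorem pure_B {I : PInst} (h : YesBuchiPosPure I) : YesBuchiPos I := by
  obtain ⟨hk, hv, h⟩ := h
  refine ⟨hk, hv, fun Pr hPr => ?_⟩
  obtain ⟨σ, h1, -, h2⟩ := h Pr hPr
  exact ⟨σ, h1, h2⟩

theorem pure_C {I : PInst} (h : YesCoBuchiASPure I) : YesCoBuchiAS I := by
  obtain ⟨hk, hv, h⟩ := h
  refine ⟨hk, hv, fun Pr hPr => ?_⟩
  obtain ⟨σ, h1, -, h2⟩ := h Pr hPr
  exact ⟨σ, h1, h2⟩

theorem undec {p : PInst → Prop} {H : ℕ → Prop} (hH : ¬ ComputablePred H) {f : ℕ → PInst}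
    (hf : Computable f) (h : ∀ n, H n ↔ p (f n)) : ¬ ComputablePred p :=
  fun hc => hH (ComputablePred.computable_of_manyOneReducible ⟨f, hf, h⟩ hc)
end Final

theorem stmt_18 :
    ¬ ComputablePred YesCoBuchiAS ∧ ¬ ComputablePred YesBuchiPos ∧
      ¬ ComputablePred YesCoBuchiASPure ∧ ¬ ComputablePred YesBuchiPosPure := by
  obtain ⟨R, hR, a, H, hH, ha, hyes, hno⟩ := exists_mat
  have : Fintype (Ac R) := Fintype.ofFinite _
  have hC := comp_mkI ha true (Fintype.equivFin St) (Fintype.equivFin (Ac R))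
  have hB := comp_mkI ha false (Fintype.equivFin St) (Fintype.equivFin (Ac R))
  have yB := fun n (h : H n) => (hyes n h).elim fun w hw =>
    yes_B (es := Fintype.equivFin St) (ea := Fintype.equivFin (Ac R)) hw
  have yC := fun n (h : H n) => (hyes n h).elim fun w hw =>
    yes_C (es := Fintype.equivFin St) (ea := Fintype.equivFin (Ac R)) hw
  have nB := fun n (h : ¬ H n) =>
    no_B (es := Fintype.equivFin St) (ea := Fintype.equivFin (Ac R)) (hno n h)
  have nC := fun n (h : ¬ H n) =>
    no_C (es := Fintype.equivFin St) (ea := Fintype.equivFin (Ac R)) (hno n h)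
  refine ⟨undec hH hC fun n => ⟨fun h => pure_C (yC n h), fun h => ?_⟩,
    undec hH hB fun n => ⟨fun h => pure_B (yB n h), fun h => ?_⟩,
    undec hH hC fun n => ⟨fun h => yC n h, fun h => ?_⟩,
    undec hH hB fun n => ⟨fun h => yB n h, fun h => ?_⟩⟩
  · by_contra h'; exact nC n h' h
  · by_contra h'; exact nB n h' h
  · by_contra h'; exact nC n h' (pure_C h)
  · by_contra h'; exact nB n h' (pure_B h)

end Stmt18
end
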